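/- arXiv:1110.5597 — 2 statements merged into one kernel-verified Lean document; each statement's English description precedes it below -/
import Mathlib

section
/- Let (X, 𝒜, μ) be a finite measure space and let Q be a finite measurable partition of X. Then there exists a sequence (P_n)_{n≥1} of finite measurable partitions of X such that each P_n refines Q, each P_{n+1} refines P_n, and every set S ∈ P_n either has μ(S) < 2^{−n} or is an atom of μ. -/
open MeasureTheory

/-- A finite measurable partition of the space: a finite collection of pairwise disjoint
measurable sets whose union is all of `X`. -/
def IsFinMeasPartition {X : Type*} [MeasurableSpace X] (P : Finset (Set X)) : Prop :=
  (∀ S ∈ P, MeasurableSet S) ∧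
  (∀ S ∈ P, ∀ T ∈ P, S ≠ T → Disjoint S T) ∧
  ⋃₀ (P : Set (Set X)) = Set.univ

/-- A partition `P` refines a partition `Q` if every element of `P` is contained in some
element of `Q`. -/
def PartitionRefines {X : Type*} (P Q : Finset (Set X)) : Prop :=
  ∀ S ∈ P, ∃ T ∈ Q, S ⊆ T

/-- `S` is an atom of `μ`: `μ(S) > 0` and every measurable subset `T ⊆ S` satisfies
`μ(T) = 0` or `μ(T) = μ(S)`. -/
def IsMeasAtom {X : Type*} [MeasurableSpace X] (μ : Measure X) (S : Set X) : Prop :=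
  0 < μ S ∧ ∀ T ⊆ S, MeasurableSet T → μ T = 0 ∨ μ T = μ S

open Filter Topology
open scoped ENNReal

/-- `S` is a finite disjoint union of measurable sets, each of which is an atom or has
measure less than `ε`. -/
def IsFinelyDivisible {X : Type*} [MeasurableSpace X] (μ : Measure X) (ε : ℝ≥0∞)
    (S : Set X) : Prop :=
  ∃ P : Finset (Set X), (∀ T ∈ P, MeasurableSet T) ∧
    (∀ T ∈ P, ∀ U ∈ P, T ≠ U → Disjoint T U) ∧
    ⋃₀ (P : Set (Set X)) = S ∧ ∀ T ∈ P, μ T < ε ∨ IsMeasAtom μ T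

namespace IsFinelyDivisible

variable {X : Type*} [MeasurableSpace X] {μ : Measure X} {ε : ℝ≥0∞} {S T : Set X}

theorem of_lt_or_isMeasAtom (hS : MeasurableSet S) (h : μ S < ε ∨ IsMeasAtom μ S) :
    IsFinelyDivisible μ ε S :=
  ⟨{S}, by simpa using hS, by simp, by simp, by simpa using h⟩

theorem union (hS : IsFinelyDivisible μ ε S) (hT : IsFinelyDivisible μ ε T)
    (hST : Disjoint S T) : IsFinelyDivisible μ ε (S ∪ T) := by
  classical
  obtain ⟨P, hPm, hPd, rfl, hPa⟩ := hS
  obtain ⟨R, hRm, hRd, rfl, hRa⟩ := hT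
  have hPR : ∀ A ∈ P, ∀ B ∈ R, Disjoint A B := fun A hA B hB =>
    hST.mono (Set.subset_sUnion_of_mem hA) (Set.subset_sUnion_of_mem hB)
  refine ⟨P ∪ R, ?_, ?_, ?_, ?_⟩
  · intro A hA
    exact (Finset.mem_union.1 hA).elim (hPm A) (hRm A)
  · intro A hA B hB hAB
    rcases Finset.mem_union.1 hA with hA | hA <;> rcases Finset.mem_union.1 hB with hB | hB
    · exact hPd A hA B hB hAB
    · exact hPR A hA B hB
    · exact (hPR B hB A hA).symm
    · exact hRd A hA B hB hAB
  · rw [Finset.coe_union, Set.sUnion_union]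
  · intro A hA
    exact (Finset.mem_union.1 hA).elim (hPa A) (hRa A)

theorem of_diff (hT : IsFinelyDivisible μ ε T) (hST : IsFinelyDivisible μ ε (S \ T))
    (h : T ⊆ S) : IsFinelyDivisible μ ε S := by
  simpa [Set.union_sdiff_cancel h] using hT.union hST Set.disjoint_sdiff_right

/-- A set that is not finely divisible has a subset that is not finely divisible and whose
measure is minimal up to `δ` among its own subsets that are not finely divisible. -/
theorem exists_almost_minimal_not [IsFiniteMeasure μ] {δ : ℝ≥0∞} (hδ : δ ≠ 0)
    (hS : MeasurableSet S) (hbad : ¬ IsFinelyDivisible μ ε S) :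
    ∃ T ⊆ S, MeasurableSet T ∧ ¬ IsFinelyDivisible μ ε T ∧
      ∀ U ⊆ T, MeasurableSet U → ¬ IsFinelyDivisible μ ε U → μ T ≤ μ U + δ := by
  let C : Set (Set X) := {T | T ⊆ S ∧ MeasurableSet T ∧ ¬ IsFinelyDivisible μ ε T}
  have hle : sInf (μ '' C) ≤ μ S := sInf_le ⟨S, ⟨subset_rfl, hS, hbad⟩, rfl⟩
  have hlt : sInf (μ '' C) < sInf (μ '' C) + δ :=
    ENNReal.lt_add_right (hle.trans_lt (measure_lt_top μ S)).ne hδ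
  obtain ⟨_, ⟨T, ⟨hTS, hTm, hTb⟩, rfl⟩, hT⟩ := sInf_lt_iff.1 hlt
  refine ⟨T, hTS, hTm, hTb, fun U hUT hUm hUb => hT.le.trans ?_⟩
  gcongr
  exact sInf_le ⟨U, ⟨hUT.trans hTS, hUm, hUb⟩, rfl⟩

/-- A set that is not finely divisible has a subset that is not finely divisible and has
minimal measure among its own subsets that are not finely divisible. -/
theorem exists_minimal_not [IsFiniteMeasure μ] (hε : 0 < ε)
    (hS : MeasurableSet S) (hbad : ¬ IsFinelyDivisible μ ε S) :
    ∃ T, MeasurableSet T ∧ ¬ IsFinelyDivisible μ ε T ∧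
      ∀ U ⊆ T, MeasurableSet U → ¬ IsFinelyDivisible μ ε U → μ T ≤ μ U := by
  let B := {T : Set X // MeasurableSet T ∧ ¬ IsFinelyDivisible μ ε T}
  have step : ∀ (n : ℕ) (A : B), ∃ T : B, T.1 ⊆ A.1 ∧ ∀ U ⊆ T.1, MeasurableSet U →
      ¬ IsFinelyDivisible μ ε U → μ T.1 ≤ μ U + (n : ℝ≥0∞)⁻¹ := fun n A => by
    obtain ⟨T, hTA, hTm, hTb, hT⟩ := exists_almost_minimal_not
      (ENNReal.inv_ne_zero.2 (ENNReal.natCast_ne_top n)) A.2.1 A.2.2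
    exact ⟨⟨T, hTm, hTb⟩, hTA, hT⟩
  choose next hsub hmin using step
  let A : ℕ → B := fun n => Nat.rec ⟨S, hS, hbad⟩ next n
  have hanti : Antitone fun n => (A n).1 := antitone_nat_of_succ_le fun n => hsub n (A n)
  have hIm : MeasurableSet (⋂ n, (A n).1) := MeasurableSet.iInter fun n => (A n).2.1
  have hlim : Tendsto (fun n => μ (A n).1) atTop (𝓝 (μ (⋂ n, (A n).1))) :=
    tendsto_measure_iInter_atTop (fun n => (A n).2.1.nullMeasurableSet) hanti
      ⟨0, measure_ne_top μ _⟩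
  refine ⟨⋂ n, (A n).1, hIm, fun hI => ?_, fun U hU hUm hUb => ?_⟩
  · have hlt : μ (⋂ n, (A n).1) < μ (⋂ n, (A n).1) + ε :=
      ENNReal.lt_add_right (measure_ne_top μ _) hε.ne'
    obtain ⟨n, hn⟩ := (hlim.eventually (gt_mem_nhds hlt)).exists
    have hIn : ⋂ n, (A n).1 ⊆ (A n).1 := Set.iInter_subset _ n
    refine (A n).2.2 (hI.of_diff (of_lt_or_isMeasAtom ((A n).2.1.diff hIm) (Or.inl ?_)) hIn)
    exact measure_sdiff_lt_of_lt_add hIm.nullMeasurableSet hIn (measure_ne_top μ _) hn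
  · have hbound : ∀ n : ℕ, μ (⋂ n, (A n).1) ≤ μ U + (n : ℝ≥0∞)⁻¹ := fun n =>
      (measure_mono (Set.iInter_subset _ (n + 1))).trans
        (hmin n (A n) U (hU.trans (Set.iInter_subset _ (n + 1))) hUm hUb)
    have hlimU : Tendsto (fun n : ℕ => μ U + (n : ℝ≥0∞)⁻¹) atTop (𝓝 (μ U)) := by
      simpa using ENNReal.tendsto_inv_nat_nhds_zero.const_add (μ U)
    exact ge_of_tendsto' hlimU hbound

theorem of_measurableSet [IsFiniteMeasure μ] (hε : 0 < ε) (hS : MeasurableSet S) :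
    IsFinelyDivisible μ ε S := by
  by_contra hbad
  obtain ⟨T, hTm, hTb, hT⟩ := exists_minimal_not hε hS hbad
  refine hTb (of_lt_or_isMeasAtom hTm (or_iff_not_imp_left.2 fun hlt => ?_))
  refine ⟨hε.trans_le (not_lt.1 hlt), fun U hUT hUm => ?_⟩
  by_cases hU : IsFinelyDivisible μ ε U
  · have hdiff : μ T ≤ μ (T \ U) :=
      hT _ Set.sdiff_subset (hTm.diff hUm) fun h => hTb (hU.of_diff h hUT)
    left
    have hadd := measure_sdiff_add_inter (μ := μ) T hUm
    rw [Set.inter_eq_right.2 hUT] at hadd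
    have hle : μ (T \ U) + μ U ≤ μ (T \ U) + 0 := by simpa [hadd] using hdiff
    exact nonpos_iff_eq_zero.1 ((ENNReal.add_le_add_iff_left (measure_ne_top μ _)).1 hle)
  · exact Or.inr (le_antisymm (measure_mono hUT) (hT U hUT hUm hU))

end IsFinelyDivisible

theorem PartitionRefines.trans {X : Type*} {P Q R : Finset (Set X)}
    (hPQ : PartitionRefines P Q) (hQR : PartitionRefines Q R) : PartitionRefines P R := by
  intro S hS
  obtain ⟨T, hT, hST⟩ := hPQ S hS
  obtain ⟨U, hU, hTU⟩ := hQR T hT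
  exact ⟨U, hU, hST.trans hTU⟩

theorem IsFinMeasPartition.exists_refinement {X : Type*} [MeasurableSpace X] (μ : Measure X)
    [IsFiniteMeasure μ] {ε : ℝ≥0∞} (hε : 0 < ε) {Q : Finset (Set X)}
    (hQ : IsFinMeasPartition Q) :
    ∃ P, IsFinMeasPartition P ∧ PartitionRefines P Q ∧ ∀ S ∈ P, μ S < ε ∨ IsMeasAtom μ S := by
  classical
  obtain ⟨hQm, hQd, hQu⟩ := hQ
  choose f hfm hfd hfu hfa using fun S : {S // S ∈ Q} =>
    IsFinelyDivisible.of_measurableSet (μ := μ) hε (hQm S.1 S.2)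
  have hsub : ∀ S, ∀ A ∈ f S, A ⊆ S.1 := fun S A hA =>
    (Set.subset_sUnion_of_mem (Finset.mem_coe.2 hA)).trans (hfu S).subset
  have hmem : ∀ A, A ∈ Q.attach.biUnion f ↔ ∃ S, A ∈ f S := fun A => by
    simp only [Finset.mem_biUnion, Finset.mem_attach, true_and]
  refine ⟨Q.attach.biUnion f, ⟨fun A hA => ?_, fun A hA B hB hAB => ?_, ?_⟩,
    fun A hA => ?_, fun A hA => ?_⟩
  · obtain ⟨S, hS⟩ := (hmem A).1 hA
    exact hfm S A hS
  · obtain ⟨S, hS⟩ := (hmem A).1 hA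
    obtain ⟨T, hT⟩ := (hmem B).1 hB
    by_cases hST : S = T
    · subst hST
      exact hfd S A hS B hT hAB
    · exact (hQd S.1 S.2 T.1 T.2 fun h => hST (Subtype.ext h)).mono (hsub S A hS) (hsub T B hT)
  · refine Set.eq_univ_of_forall fun x => ?_
    obtain ⟨S, hS, hxS⟩ := Set.mem_sUnion.1 (hQu.symm ▸ Set.mem_univ x)
    obtain ⟨A, hA, hxA⟩ := Set.mem_sUnion.1 ((hfu ⟨S, hS⟩).superset hxS)
    exact ⟨A, (hmem A).2 ⟨⟨S, hS⟩, hA⟩, hxA⟩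
  · obtain ⟨S, hS⟩ := (hmem A).1 hA
    exact ⟨S.1, S.2, hsub S A hS⟩
  · obtain ⟨S, hS⟩ := (hmem A).1 hA
    exact hfa S A hS

/-- Given a finite measure space `(X, 𝒜, μ)` and a finite measurable
partition `Q` of `X`, there is a sequence `(P_n)_{n ≥ 1}` of finite measurable partitions
of `X`, each refining `Q`, with `P_{n+1}` refining `P_n`, such that every `S ∈ P_n` either
has `μ(S) < 2^{−n}` or is an atom of `μ`. -/
theorem stmt3 {X : Type*} [MeasurableSpace X] (μ : Measure X) [IsFiniteMeasure μ]
    (Q : Finset (Set X)) (hQ : IsFinMeasPartition Q) :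
    ∃ P : ℕ → Finset (Set X),
      (∀ n, 1 ≤ n → IsFinMeasPartition (P n)) ∧
      (∀ n, 1 ≤ n → PartitionRefines (P n) Q) ∧
      (∀ n, 1 ≤ n → PartitionRefines (P (n + 1)) (P n)) ∧
      (∀ n, 1 ≤ n → ∀ S ∈ P n, μ S < (2 : ENNReal)⁻¹ ^ n ∨ IsMeasAtom μ S) := by
  have hpos : ∀ n : ℕ, (0 : ℝ≥0∞) < (2 : ℝ≥0∞)⁻¹ ^ n := fun n =>
    ENNReal.pow_pos (ENNReal.inv_pos.2 ENNReal.ofNat_ne_top) n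
  choose next hpart href hsmall using
    fun (n : ℕ) (R : {R : Finset (Set X) // IsFinMeasPartition R}) =>
      R.2.exists_refinement μ (hpos (n + 1))
  let P : ℕ → {R : Finset (Set X) // IsFinMeasPartition R} := fun n =>
    Nat.rec ⟨Q, hQ⟩ (fun n R => ⟨next n R, hpart n R⟩) n
  have hstep : ∀ n, PartitionRefines (P (n + 1)).1 (P n).1 := fun n => href n (P n)
  have hrefQ : ∀ n, PartitionRefines (P n).1 Q := fun n => by
    induction n with
    | zero => exact fun S hS => ⟨S, hS, subset_rfl⟩
    | succ n ih => exact (hstep n).trans ih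
  refine ⟨fun n => (P n).1, fun n _ => (P n).2, fun n _ => hrefQ n, fun n _ => hstep n, ?_⟩
  intro n hn S hS
  obtain ⟨m, rfl⟩ := Nat.exists_eq_succ_of_ne_zero (Nat.one_le_iff_ne_zero.1 hn)
  exact hsmall m (P m) S hS
end

section
/- Let M be a von Neumann algebra acting on a separable complex Hilbert space, equipped with a faithful normal tracial state τ, suppose M is hyperfinite (there exists an increasing sequence of finite-dimensional unital *-subalgebras whose union is strongly dense in M), and suppose M is diffuse, i.e., M contains no minimal projections. Let D be a finite-dimensional abelian unital *-subalgebra of M and let ε > 0. Then there exists an increasing sequence A_0 ⊆ A_1 ⊆ A_2 ⊆ … of finite-dimensional unital *-subalgebras of M, each containing D, whose union is strongly dense in M, and such that every minimal projection of every A_n has trace less than ε. -/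
open Filter Topology
open scoped InnerProductSpace

section TracialState

variable {A : Type*} [CStarAlgebra A]

/-- A faithful tracial state on a unital C⋆-algebra. -/
structure IsFaithfulTracialState (τ : A →ₗ[ℂ] ℂ) : Prop where
  map_one : τ 1 = 1
  map_mul_comm : ∀ x y, τ (x * y) = τ (y * x)
  nonneg : ∀ x, 0 ≤ (τ (star x * x)).re
  im_eq_zero : ∀ x, (τ (star x * x)).im = 0
  eq_zero : ∀ x, τ (star x * x) = 0 → x = 0

/-- The `L²`-norm `‖x‖₂ = τ(x⋆x)^{1/2}`. -/
noncomputable def twoNorm (τ : A →ₗ[ℂ] ℂ) (x : A) : ℝ := √(τ (star x * x)).re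

namespace IsFaithfulTracialState

variable {τ : A →ₗ[ℂ] ℂ} (hτ : IsFaithfulTracialState τ)
include hτ

theorem map_star (x : A) : τ (star x) = star (τ x) := by
  have h1 := hτ.im_eq_zero (1 + x)
  have h2 := hτ.im_eq_zero (1 + Complex.I • x)
  have h3 := hτ.im_eq_zero x
  have h4 := hτ.im_eq_zero (1 : A)
  simp only [star_add, star_one, add_mul, mul_add, one_mul, mul_one, map_add, star_smul,
    smul_mul_assoc, mul_smul_comm, map_smul, Complex.add_im, smul_eq_mul] at h1 h2 h3 h4
  apply Complex.ext <;> simp at * <;> linarith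

/-- The `L²` inner product of a faithful tracial state. -/
@[reducible] noncomputable def core : PreInnerProductSpace.Core ℂ A where
  inner x y := τ (star x * y)
  conj_inner_symm x y := by
    have := hτ.map_star (star y * x)
    simp only [star_mul, star_star] at this
    simp [this]
  re_inner_nonneg x := hτ.nonneg x
  add_left x y z := by simp [add_mul]
  smul_left x y r := by simp

theorem norm_map_star_mul_le (x y : A) : ‖τ (star x * y)‖ ≤ twoNorm τ x * twoNorm τ y :=
  letI := hτ.core
  InnerProductSpace.Core.norm_inner_le_norm (𝕜 := ℂ) x y

theorem twoNorm_add_le (x y : A) : twoNorm τ (x + y) ≤ twoNorm τ x + twoNorm τ y :=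
  letI := hτ.core
  letI := InnerProductSpace.Core.toSeminormedAddCommGroup (𝕜 := ℂ) (F := A)
  norm_add_le x y

omit hτ in
theorem _root_.twoNorm_neg (x : A) : twoNorm τ (-x) = twoNorm τ x := by simp [twoNorm]

omit hτ in
theorem _root_.twoNorm_sub_comm (x y : A) : twoNorm τ (x - y) = twoNorm τ (y - x) := by
  rw [← twoNorm_neg, neg_sub]

omit hτ in
theorem _root_.twoNorm_nonneg (x : A) : 0 ≤ twoNorm τ x := Real.sqrt_nonneg _

omit hτ in
theorem _root_.twoNorm_zero : twoNorm τ (0 : A) = 0 := by simp [twoNorm]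

theorem twoNorm_sub_le (x y z : A) :
    twoNorm τ (x - z) ≤ twoNorm τ (x - y) + twoNorm τ (y - z) := by
  simpa using hτ.twoNorm_add_le (x - y) (y - z)

theorem twoNorm_sum_le {ι : Type*} (s : Finset ι) (f : ι → A) :
    twoNorm τ (∑ i ∈ s, f i) ≤ ∑ i ∈ s, twoNorm τ (f i) :=
  Finset.le_sum_of_subadditive _ twoNorm_zero.le (hτ.twoNorm_add_le) s f

theorem twoNorm_sq (x : A) : twoNorm τ x ^ 2 = (τ (star x * x)).re :=
  Real.sq_sqrt (hτ.nonneg x)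

theorem twoNorm_star (x : A) : twoNorm τ (star x) = twoNorm τ x := by
  rw [twoNorm, twoNorm, star_star, hτ.map_mul_comm]

theorem twoNorm_one : twoNorm τ 1 = 1 := by simp [twoNorm, hτ.map_one]

theorem twoNorm_eq_zero {x : A} (h : twoNorm τ x = 0) : x = 0 := by
  apply hτ.eq_zero
  have := hτ.twoNorm_sq x
  apply Complex.ext
  · simp [← this, h]
  · simp [hτ.im_eq_zero]

theorem eq_of_twoNorm_sub_le {x y : A} (h : ∀ δ > 0, twoNorm τ (x - y) ≤ δ) : x = y :=
  sub_eq_zero.1 <| hτ.twoNorm_eq_zero <|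
    le_antisymm (le_of_forall_pos_le_add fun δ hδ => by simpa using h δ hδ) (twoNorm_nonneg _)

theorem norm_map_le (x : A) : ‖τ x‖ ≤ twoNorm τ x := by
  simpa [hτ.twoNorm_one] using hτ.norm_map_star_mul_le 1 x

theorem twoNorm_mul_le_left (x y : A) : twoNorm τ (x * y) ≤ ‖x‖ * twoNorm τ y := by
  let := CStarAlgebra.spectralOrder A
  let := CStarAlgebra.spectralOrderedRing A
  obtain ⟨z, hz⟩ := CStarAlgebra.nonneg_iff_eq_star_mul_self.1
    (sub_nonneg.2 (CStarAlgebra.star_mul_le_algebraMap_norm_sq (a := x)))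
  have h1 := hτ.nonneg (z * y)
  have h2 : star (z * y) * (z * y)
      = ((‖x‖ ^ 2 : ℝ) : ℂ) • (star y * y) - star (x * y) * (x * y) := by
    have : star (z * y) * (z * y) = star y * (star z * z) * y := by simp [mul_assoc]
    rw [this, ← hz, Algebra.algebraMap_eq_smul_one]
    simp [mul_sub, sub_mul, mul_assoc, ← Complex.coe_smul]
  rw [h2, map_sub, map_smul, smul_eq_mul, Complex.sub_re, Complex.re_ofReal_mul, ← hτ.twoNorm_sq,
    ← hτ.twoNorm_sq] at h1
  refine abs_le_of_sq_le_sq' ?_ (mul_nonneg (norm_nonneg _) (twoNorm_nonneg _)) |>.2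
  nlinarith

theorem twoNorm_mul_le_right (x y : A) : twoNorm τ (x * y) ≤ twoNorm τ x * ‖y‖ := by
  rw [← hτ.twoNorm_star, star_mul, mul_comm]
  simpa [hτ.twoNorm_star] using hτ.twoNorm_mul_le_left (star y) (star x)

theorem twoNorm_mul_le_of_norm_le_one {x : A} (hx : ‖x‖ ≤ 1) (y : A) :
    twoNorm τ (x * y) ≤ twoNorm τ y :=
  (hτ.twoNorm_mul_le_left x y).trans (mul_le_of_le_one_left (twoNorm_nonneg _) hx)

theorem twoNorm_mul_le_of_norm_le_one' {y : A} (hy : ‖y‖ ≤ 1) (x : A) :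
    twoNorm τ (x * y) ≤ twoNorm τ x :=
  (hτ.twoNorm_mul_le_right x y).trans (mul_le_of_le_one_right (twoNorm_nonneg _) hy)

theorem twoNorm_sq_of_isStarProjection {p : A} (hp : IsStarProjection p) :
    twoNorm τ p ^ 2 = (τ p).re := by
  rw [hτ.twoNorm_sq, hp.isSelfAdjoint.star_eq, hp.isIdempotentElem.eq]

theorem re_map_nonneg {p : A} (hp : IsStarProjection p) : 0 ≤ (τ p).re := by
  rw [← hτ.twoNorm_sq_of_isStarProjection hp]; positivity

theorem re_map_pos {p : A} (hp : IsStarProjection p) (h0 : p ≠ 0) : 0 < (τ p).re := by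
  refine (hτ.re_map_nonneg hp).lt_of_ne fun h => h0 (hτ.twoNorm_eq_zero ?_)
  rw [← hτ.twoNorm_sq_of_isStarProjection hp] at h
  simpa using h.symm

theorem re_map_mono {p q : A} (hp : IsStarProjection p) (hq : IsStarProjection q)
    (h : q * p = p) : (τ p).re ≤ (τ q).re := by
  have := hτ.re_map_nonneg (hp.sub_of_mul_eq_right hq h)
  simpa using this

end IsFaithfulTracialState
end TracialState

section FiniteDimensional

variable {A : Type*} [CStarAlgebra A] {B : StarSubalgebra ℂ A}

theorem StarSubalgebra.isClosed_of_finiteDimensional (B : StarSubalgebra ℂ A)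
    [FiniteDimensional ℂ B] : IsClosed (B : Set A) :=
  haveI : FiniteDimensional ℂ B.toSubalgebra.toSubmodule := ‹FiniteDimensional ℂ B›
  Submodule.closed_of_finiteDimensional B.toSubalgebra.toSubmodule

theorem cfc_mem_of_finiteDimensional [FiniteDimensional ℂ B] (f : ℝ → ℝ) {a : A} (ha : a ∈ B) :
    cfc f a ∈ B :=
  haveI := B.isClosed_of_finiteDimensional
  cfc_mem (𝕜' := ℂ) f ha

theorem spectrum_finite_of_mem_finiteDimensional [FiniteDimensional ℂ B] {a : A} (ha : a ∈ B) :
    (spectrum ℂ a).Finite := by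
  nontriviality A
  obtain ⟨p, hp, hpa⟩ := IsIntegral.of_finite ℂ (⟨a, ha⟩ : B)
  have h0 : Polynomial.aeval a p = 0 := by
    have := congrArg B.subtype hpa
    rw [← Polynomial.aeval_def] at this
    simpa using (Polynomial.aeval_algHom_apply B.toSubalgebra.val (⟨a, ha⟩ : B) p).trans this
  refine (p.roots.toFinset.finite_toSet).subset fun k hk => ?_
  have h1 := spectrum.subset_polynomial_aeval a p ⟨k, hk, rfl⟩
  rw [h0, spectrum.zero_eq] at h1
  simpa [hp.ne_zero] using h1

theorem real_spectrum_finite_of_mem_finiteDimensional [FiniteDimensional ℂ B] {a : A}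
    (ha : a ∈ B) : (spectrum ℝ a).Finite := by
  rw [← spectrum.preimage_algebraMap ℂ]
  exact (spectrum_finite_of_mem_finiteDimensional ha).preimage
    (FaithfulSMul.algebraMap_injective ℝ ℂ).injOn

theorem isStarProjection_cfc {a : A} {f : ℝ → ℝ} (hf : ContinuousOn f (spectrum ℝ a))
    (h : ∀ t ∈ spectrum ℝ a, f t * f t = f t) : IsStarProjection (cfc f a) where
  isIdempotentElem := by
    rw [IsIdempotentElem, ← cfc_mul f f a hf hf]
    exact cfc_congr h
  isSelfAdjoint := cfc_predicate f a

/-- A minimal projection of a ⋆-subalgebra. -/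
structure IsMinimalProjection (B : StarSubalgebra ℂ A) (e : A) : Prop where
  mem : e ∈ B
  isStarProjection : IsStarProjection e
  ne_zero : e ≠ 0
  exists_eq_smul : ∀ x ∈ B, ∃ c : ℂ, e * x * e = c • e

/-- A projection of a finite-dimensional algebra that is not minimal has a proper nonzero
subprojection. -/
theorem exists_proper_subprojection [FiniteDimensional ℂ B] {e : A} (heB : e ∈ B)
    (he : IsStarProjection e) (h0 : e ≠ 0) (hmin : ¬ IsMinimalProjection B e) :
    ∃ f ∈ B, IsStarProjection f ∧ e * f = f ∧ f ≠ 0 ∧ f ≠ e := by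
  have hee : e * e = e := he.isIdempotentElem
  obtain ⟨h, hB, hsa, hne⟩ : ∃ h ∈ B, IsSelfAdjoint h ∧ ∀ c : ℂ, e * h * e ≠ c • e := by
    by_contra! hcon
    refine hmin ⟨heB, he, h0, fun x hx => ?_⟩
    have h1 : (realPart x : A) ∈ B := by
      rw [realPart_apply_coe]
      exact (SMulMemClass.ofIsScalarTower (StarSubalgebra ℂ A) ℝ ℂ A).smul_mem _
        (add_mem hx (star_mem hx))
    have h2 : (imaginaryPart x : A) ∈ B := by
      rw [imaginaryPart_apply_coe]
      exact B.smul_mem ((SMulMemClass.ofIsScalarTower (StarSubalgebra ℂ A) ℝ ℂ A).smul_mem _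
        (sub_mem hx (star_mem hx))) _
    obtain ⟨c, hc⟩ := hcon _ h1 (realPart x).2
    obtain ⟨d, hd⟩ := hcon _ h2 (imaginaryPart x).2
    refine ⟨c + Complex.I * d, ?_⟩
    rw [← realPart_add_I_smul_imaginaryPart x, mul_add, add_mul, mul_smul_comm, smul_mul_assoc,
      hc, hd, smul_smul, add_smul]
  set k := e * h * e with hk
  have hkB : k ∈ B := mul_mem (mul_mem heB hB) heB
  have hksa : IsSelfAdjoint k := by
    simp [IsSelfAdjoint, hk, he.isSelfAdjoint.star_eq, hsa.star_eq, mul_assoc]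
  have hek : e * k = k := by rw [hk, ← mul_assoc, ← mul_assoc, hee]
  have hfin := real_spectrum_finite_of_mem_finiteDimensional hkB
  have hcont : ∀ f : ℝ → ℝ, ContinuousOn f (spectrum ℝ k) := fun f => hfin.continuousOn f
  by_contra! hcon
  let F : ℝ → ℝ → ℝ := fun l t => if t = l then 1 else 0
  have hF : ∀ l ≠ 0, ∃ c : ℂ, cfc (F l) k = c • e := by
    intro l hl
    by_cases hz : cfc (F l) k = 0
    · exact ⟨0, by simp [hz]⟩
    · refine ⟨1, ?_⟩
      rw [one_smul]
      refine hcon _ (cfc_mem_of_finiteDimensional _ hkB)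
        (isStarProjection_cfc (hcont _) fun t _ => by simp [F]) ?_ hz
      have : cfc (F l) k = k * cfc (fun t => F l t / t) k := by
        conv_rhs => enter [1]; rw [← cfc_id' ℝ k]
        rw [← cfc_mul _ _ k (hcont _) (hcont _)]
        refine cfc_congr fun t _ => ?_
        by_cases h : t = l
        · subst h; simp [F, hl]
        · simp [F, h]
      rw [this, ← mul_assoc, hek]
  have hsum : k = ∑ l ∈ hfin.toFinset, l • cfc (F l) k := by
    have h1 : ∀ l, l • cfc (F l) k = cfc (fun t => l * F l t) k := fun l => by
      rw [cfc_const_mul l (F l) k (hcont _)]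
    simp_rw [h1]
    rw [← cfc_sum (fun l t => l * F l t) k hfin.toFinset fun _ _ => hcont _]
    conv_lhs => rw [← cfc_id' ℝ k]
    refine cfc_congr fun t ht => ?_
    simp only [F, Finset.sum_apply, mul_ite, mul_one, mul_zero]
    rw [Finset.sum_ite_eq, if_pos (hfin.mem_toFinset.2 ht)]
  have : ∀ l : ℝ, ∃ c : ℂ, l • cfc (F l) k = c • e := by
    intro l
    by_cases hl : l = 0
    · exact ⟨0, by simp [hl]⟩
    · obtain ⟨c, hc⟩ := hF l hl
      exact ⟨l * c, by rw [hc, mul_smul, Complex.coe_smul]⟩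
  choose c hc using this
  refine hne (∑ l ∈ hfin.toFinset, c l) ?_
  conv_lhs => rw [hsum]
  rw [Finset.sum_smul]
  exact Finset.sum_congr rfl fun l _ => hc l

end FiniteDimensional

section Decomposition

variable {A : Type*} [CStarAlgebra A] {B : StarSubalgebra ℂ A} {τ : A →ₗ[ℂ] ℂ}

theorem IsStarProjection.mul_eq_of_mul_eq {e f : A} (he : IsStarProjection e)
    (hf : IsStarProjection f) (h : e * f = f) : f * e = f := by
  simpa [he.isSelfAdjoint.star_eq, hf.isSelfAdjoint.star_eq] using congrArg star h

theorem IsStarProjection.mul_eq_zero_of_mul_eq_zero {e f : A} (he : IsStarProjection e)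
    (hf : IsStarProjection f) (h : e * f = 0) : f * e = 0 := by
  simpa [he.isSelfAdjoint.star_eq, hf.isSelfAdjoint.star_eq] using congrArg star h

/-- `R` is a set of pairwise orthogonal minimal projections of `B` with sum `e`. -/
structure IsDecomposition (B : StarSubalgebra ℂ A) (e : A) (R : Finset A) : Prop where
  minimal : ∀ f ∈ R, IsMinimalProjection B f
  orth : ∀ f ∈ R, ∀ g ∈ R, f ≠ g → f * g = 0
  sum_eq : ∑ f ∈ R, f = e

theorem IsDecomposition.mul_eq {e : A} {R : Finset A} (h : IsDecomposition B e R) {f : A}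
    (hf : f ∈ R) : e * f = f := by
  rw [← h.sum_eq, Finset.sum_mul, Finset.sum_eq_single_of_mem f hf]
  · exact (h.minimal f hf).isStarProjection.isIdempotentElem
  · exact fun g hg hgf => h.orth g hg f hf hgf

theorem IsDecomposition.mul_eq' {e : A} {R : Finset A} (h : IsDecomposition B e R) {f : A}
    (hf : f ∈ R) : f * e = f := by
  rw [← h.sum_eq, Finset.mul_sum, Finset.sum_eq_single_of_mem f hf]
  · exact (h.minimal f hf).isStarProjection.isIdempotentElem
  · exact fun g hg hgf => h.orth f hf g hg hgf.symm

theorem IsDecomposition.union [DecidableEq A] {e f : A} {R S : Finset A}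
    (hR : IsDecomposition B e R) (hS : IsDecomposition B f S) (hef : e * f = 0)
    (hfe : f * e = 0) : IsDecomposition B (e + f) (R ∪ S) := by
  have h1 : ∀ x ∈ R, ∀ y ∈ S, x * y = 0 := fun x hx y hy => by
    rw [← hR.mul_eq' hx, ← hS.mul_eq hy, mul_assoc, ← mul_assoc e, hef, zero_mul, mul_zero]
  have h2 : ∀ x ∈ R, ∀ y ∈ S, y * x = 0 := fun x hx y hy => by
    rw [← hR.mul_eq hx, ← hS.mul_eq' hy, mul_assoc, ← mul_assoc f, hfe, zero_mul, mul_zero]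
  refine ⟨fun x hx => ?_, fun x hx y hy hxy => ?_, ?_⟩
  · rcases Finset.mem_union.1 hx with h | h
    exacts [hR.minimal x h, hS.minimal x h]
  · rcases Finset.mem_union.1 hx with h | h <;> rcases Finset.mem_union.1 hy with h' | h'
    exacts [hR.orth x h y h' hxy, h1 x h y h', h2 y h' x h, hS.orth x h y h' hxy]
  · rw [Finset.sum_union, hR.sum_eq, hS.sum_eq]
    rw [Finset.disjoint_left]
    intro x hx hx'
    apply (hR.minimal x hx).ne_zero
    rw [← (hR.minimal x hx).isStarProjection.isIdempotentElem.eq, h1 x hx x hx']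

/-- Every projection of a finite-dimensional algebra is a sum of minimal projections. -/
theorem exists_isDecomposition [FiniteDimensional ℂ B] {e : A} (heB : e ∈ B)
    (he : IsStarProjection e) : ∃ R, IsDecomposition B e R := by
  classical
  let T : A → Submodule ℂ A := fun e =>
    B.toSubalgebra.toSubmodule.map (LinearMap.mulLeft ℂ e ∘ₗ LinearMap.mulRight ℂ e)
  have : FiniteDimensional ℂ B.toSubalgebra.toSubmodule := ‹FiniteDimensional ℂ B›
  induction hn : Module.finrank ℂ (T e) using Nat.strong_induction_on generalizing e with
  | _ n ih =>
  subst hn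
  by_cases h0 : e = 0
  · exact ⟨∅, by simp, by simp, by simp [h0]⟩
  by_cases hmin : IsMinimalProjection B e
  · refine ⟨{e}, by simpa, ?_, by simp⟩
    simp +contextual
  obtain ⟨f, hfB, hf, hef, hf0, hfe⟩ := exists_proper_subprojection heB he h0 hmin
  have key : ∀ f ∈ B, IsStarProjection f → e * f = f → f ≠ e →
      ∃ R, IsDecomposition B f R := by
    intro f hfB hf hef hfe
    refine ih _ ?_ hfB hf rfl
    apply Submodule.finrank_lt_finrank_of_lt
    have hfe' := he.mul_eq_of_mul_eq hf hef
    refine lt_of_le_of_ne ?_ ?_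
    · rintro _ ⟨x, hx, rfl⟩
      have hxB : f * x * f ∈ B := mul_mem (mul_mem hfB hx) hfB
      refine ⟨f * x * f, hxB, ?_⟩
      simp [mul_assoc, hfe', ← mul_assoc e, hef]
    · intro heq
      have : e ∈ T e := ⟨1, one_mem B, by simp [he.isIdempotentElem.eq]⟩
      rw [← heq] at this
      obtain ⟨x, -, hx⟩ := this
      apply hfe
      have h3 : f * e = e := by
        rw [← hx]; simp [← mul_assoc, hf.isIdempotentElem.eq]
      rw [← h3, hfe']
  obtain ⟨R, hR⟩ := key f hfB hf hef hfe
  have hee : e * e = e := he.isIdempotentElem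
  have hff : f * f = f := hf.isIdempotentElem
  have hfe' := he.mul_eq_of_mul_eq hf hef
  obtain ⟨S, hS⟩ := key (e - f) (sub_mem heB hfB) (hf.sub_of_mul_eq_right he hef)
    (by rw [mul_sub, hee, hef]) (by simpa using hf0)
  refine ⟨R ∪ S, ?_⟩
  simpa using hR.union hS (by rw [mul_sub, hff, hfe', sub_self])
    (by rw [sub_mul, hff, hef, sub_self])

namespace IsFaithfulTracialState
variable (hτ : IsFaithfulTracialState τ)
include hτ

theorem im_map_of_isStarProjection {e : A} (he : IsStarProjection e) : (τ e).im = 0 := by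
  have := hτ.im_eq_zero e
  rwa [he.isSelfAdjoint.star_eq, he.isIdempotentElem.eq] at this

/-- A nonzero element supported on a minimal projection is a multiple of a partial isometry. -/
theorem exists_smul_isometry {e y : A} (he : IsMinimalProjection B e) (hy : y ∈ B)
    (hye : y * e = y) (h0 : y ≠ 0) : ∃ c : ℂ, c ≠ 0 ∧ star (c • y) * (c • y) = e := by
  obtain ⟨c, hc⟩ := he.exists_eq_smul (star y * y) (mul_mem (star_mem hy) hy)
  have hyy : star y * y = c • e := by
    have h1 : e * star y = star y := by
      simpa [he.isStarProjection.isSelfAdjoint.star_eq] using congrArg star hye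
    rwa [← mul_assoc, h1, mul_assoc, hye] at hc
  have h1 : (τ (star y * y)).re > 0 := (hτ.nonneg y).lt_of_ne fun h => h0 <| hτ.eq_zero y <|
    Complex.ext h.symm (hτ.im_eq_zero y)
  have h2 := hτ.im_eq_zero y
  have h3 := hτ.re_map_pos he.isStarProjection he.ne_zero
  have h4 := hτ.im_map_of_isStarProjection he.isStarProjection
  rw [hyy] at h1 h2
  simp only [map_smul, smul_eq_mul, Complex.mul_im, Complex.mul_re, h4, mul_zero, sub_zero,
    zero_add, mul_eq_zero, h3.ne', or_false] at h1 h2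
  have hcr : 0 < c.re := pos_of_mul_pos_left h1 h3.le
  have hc' : c = (c.re : ℂ) := Complex.ext rfl (by simp [h2])
  refine ⟨((√c.re)⁻¹ : ℝ), by simpa using (Real.sqrt_pos.2 hcr).ne', ?_⟩
  rw [star_smul, smul_mul_smul_comm, hyy, hc', smul_smul]
  have : star (((√c.re)⁻¹ : ℝ) : ℂ) * (((√c.re)⁻¹ : ℝ) : ℂ) * (c.re : ℂ) = 1 := by
    rw [Complex.star_def, Complex.conj_ofReal]
    norm_cast
    rw [← mul_inv, Real.mul_self_sqrt hcr.le, inv_mul_cancel₀ hcr.ne']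
  rw [Complex.ofReal_re, this, one_smul]

/-- Minimal projections connected by some element are equivalent. -/
theorem exists_partialIsometry {e f x : A} (he : IsMinimalProjection B e)
    (hf : IsMinimalProjection B f) (hx : x ∈ B) (h0 : f * x * e ≠ 0) :
    ∃ v ∈ B, star v * v = e ∧ v * star v = f ∧ ∃ c : ℂ, c ≠ 0 ∧ v = c • (f * x * e) := by
  have hee : e * e = e := he.isStarProjection.isIdempotentElem
  have hff : f * f = f := hf.isStarProjection.isIdempotentElem
  have hyB : f * x * e ∈ B := mul_mem (mul_mem hf.mem hx) he.mem
  obtain ⟨c, hc0, hc⟩ := hτ.exists_smul_isometry he hyB (by rw [mul_assoc, hee]) h0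
  set v := c • (f * x * e) with hv
  have hvB : v ∈ B := B.smul_mem hyB c
  refine ⟨v, hvB, hc, ?_, c, hc0, rfl⟩
  have hfv : f * v = v := by rw [hv, mul_smul_comm, ← mul_assoc, ← mul_assoc, hff]
  have hve : v * e = v := by rw [hv, smul_mul_assoc, mul_assoc, hee]
  have hvf : star v * f = star v := by
    simpa [hf.isStarProjection.isSelfAdjoint.star_eq] using congrArg star hfv
  obtain ⟨d, hd⟩ := hf.exists_eq_smul (v * star v) (mul_mem hvB (star_mem hvB))
  rw [← mul_assoc, hfv, mul_assoc, hvf] at hd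
  have h1 : (v * star v) * (v * star v) = v * star v := by
    rw [mul_assoc, ← mul_assoc (star v), hc, ← mul_assoc, hve]
  rw [hd, smul_mul_smul_comm, hff] at h1
  have h2 := smul_left_injective ℂ hf.ne_zero h1
  have hd0 : d ≠ 0 := by
    rintro rfl
    rw [zero_smul] at hd
    have : v = 0 := by rw [← hve, ← hc, ← mul_assoc, hd, zero_mul]
    rw [hv] at this
    exact (smul_ne_zero hc0 h0) this
  rw [hd, mul_right_cancel₀ hd0 (h2.trans (one_mul d).symm), one_smul]

/-- A minimal projection not orthogonal to a projection `h` has smaller trace than `h`. -/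
theorem re_map_le_of_mul_ne_zero {g h : A} (hg : IsMinimalProjection B g) (hhB : h ∈ B)
    (hh : IsStarProjection h) (h0 : h * g ≠ 0) : (τ g).re ≤ (τ h).re := by
  have hgg : g * g = g := hg.isStarProjection.isIdempotentElem
  obtain ⟨c, hc0, hc⟩ := hτ.exists_smul_isometry hg (mul_mem hhB hg.mem)
    (by rw [mul_assoc, hgg]) h0
  set v := c • (h * g) with hv
  have hve : v * g = v := by rw [hv, smul_mul_assoc, mul_assoc, hgg]
  have hhv : h * v = v := by rw [hv, mul_smul_comm, ← mul_assoc, hh.isIdempotentElem.eq]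
  have h1 : IsStarProjection (v * star v) := by
    refine ⟨?_, by simp [IsSelfAdjoint]⟩
    rw [IsIdempotentElem, mul_assoc, ← mul_assoc (star v), hc, ← mul_assoc, hve]
  rw [← hc, hτ.map_mul_comm]
  exact hτ.re_map_mono h1 hh (by rw [← mul_assoc, hhv])

end IsFaithfulTracialState
end Decomposition

section Matching

/-- A doubly stochastic rectangular array supports a bijection whose total weight is at least the
average weight. -/
theorem exists_equiv_of_doublyStochastic {X Y : Type*} [Fintype X] [Fintype Y]
    (m k : X → Y → ℝ) (h0 : ∀ x y, 0 ≤ m x y) (hrow : ∀ x, ∑ y, m x y = 1)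
    (hcol : ∀ y, ∑ x, m x y = 1) :
    ∃ π : X ≃ Y, (∀ x, 0 < m x (π x)) ∧ ∑ x, ∑ y, m x y * k x y ≤ ∑ x, k x (π x) := by
  classical
  have hcard : Fintype.card X = Fintype.card Y := by
    have : ∑ x, ∑ y, m x y = ∑ y, ∑ x, m x y := Finset.sum_comm
    simp only [hrow, hcol, Finset.sum_const, Finset.card_univ, nsmul_eq_mul, mul_one] at this
    exact_mod_cast this
  let e := Fintype.equivOfCardEq hcard
  obtain ⟨w, hw0, hw1, hw⟩ := exists_eq_sum_perm_of_mem_doublyStochastic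
    (M := (fun x x' => m x (e x') : Matrix X X ℝ)) (mem_doublyStochastic_iff_sum.2
      ⟨fun i j => h0 _ _, fun i => (e.sum_comp (m i)).trans (hrow i), fun j => hcol (e j)⟩)
  have hm : ∀ x x', m x (e x') = ∑ σ, w σ * if σ x = x' then 1 else 0 := by
    intro x x'
    have := congrFun (congrFun hw x) x'
    rw [← this, Matrix.sum_apply]
    simp [PEquiv.toMatrix_apply, eq_comm]
  have havg : ∑ x, ∑ y, m x y * k x y = ∑ σ, w σ * ∑ x, k x (e (σ x)) := by
    simp_rw [← fun x => e.sum_comp fun y => m x y * k x y, hm, Finset.sum_mul, Finset.mul_sum]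
    rw [Finset.sum_congr rfl fun x _ => Finset.sum_comm, Finset.sum_comm]
    simp [mul_ite]
  obtain ⟨σ, hσ, hle⟩ : ∃ σ, 0 < w σ ∧ ∑ x, ∑ y, m x y * k x y ≤ ∑ x, k x (e (σ x)) := by
    by_contra! hcon
    have hle : ∀ σ, w σ * ∑ x, k x (e (σ x)) ≤ w σ * ∑ x, ∑ y, m x y * k x y := by
      intro σ
      rcases (hw0 σ).eq_or_lt with h | h
      · simp [← h]
      · exact mul_le_mul_of_nonneg_left (hcon σ h).le h.le
    obtain ⟨σ, -, hσ⟩ : ∃ σ ∈ Finset.univ, 0 < w σ :=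
      Finset.exists_lt_of_sum_lt (f := fun _ => 0) (by simp [hw1])
    have := Finset.sum_lt_sum (fun σ _ => hle σ)
      ⟨σ, Finset.mem_univ _, mul_lt_mul_of_pos_left (hcon σ hσ) hσ⟩
    rw [← havg, ← Finset.sum_mul, hw1, one_mul] at this
    exact this.false
  refine ⟨σ.trans e, fun x => ?_, hle⟩
  rw [Equiv.trans_apply, hm]
  refine hσ.trans_le ?_
  have := Finset.single_le_sum (f := fun ρ => w ρ * if ρ x = σ x then 1 else 0)
    (fun ρ _ => mul_nonneg (hw0 ρ) (by split_ifs <;> simp)) (Finset.mem_univ σ)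
  simpa using this

end Matching

section Frames

variable {A : Type*} [CStarAlgebra A] {B : StarSubalgebra ℂ A} {τ : A →ₗ[ℂ] ℂ}
  {ι : Type*} [Fintype ι]

/-- A finite projection-valued partition of unity. -/
structure IsPVM (p : ι → A) : Prop where
  isStarProjection : ∀ i, IsStarProjection (p i)
  orth : ∀ i j, i ≠ j → p i * p j = 0
  sum_eq : ∑ i, p i = 1

/-- The projection `q` is a sum of elements of `S`. -/
def IsDiagonal (S : Finset A) (q : A) : Prop := ∀ e ∈ S, q * e = e ∨ q * e = 0

theorem IsPVM.mul_eq {p : ι → A} (hp : IsPVM p) [DecidableEq ι] (i j : ι) :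
    p i * p j = if i = j then p i else 0 := by
  split_ifs with h
  · rw [← h, (hp.isStarProjection i).isIdempotentElem.eq]
  · exact hp.orth i j h

theorem IsPVM.conj {p : ι → A} (hp : IsPVM p) {u : A} (hu : u ∈ unitary A) :
    IsPVM fun i => u * p i * star u := by
  have h : ∀ x y, u * x * star u * (u * y * star u) = u * (x * y) * star u := fun x y => by
    simp only [mul_assoc]
    rw [← mul_assoc (star u) u, Unitary.star_mul_self_of_mem hu, one_mul]
  refine ⟨fun i => ⟨?_, ?_⟩, fun i j hij => ?_, ?_⟩
  · rw [IsIdempotentElem, h, (hp.isStarProjection i).isIdempotentElem.eq]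
  · simp [IsSelfAdjoint, (hp.isStarProjection i).isSelfAdjoint.star_eq, mul_assoc]
  · rw [h, hp.orth i j hij]; simp
  · rw [← Finset.sum_mul, ← Finset.mul_sum, hp.sum_eq, mul_one, Unitary.mul_star_self_of_mem hu]

theorem IsDecomposition.biUnion [DecidableEq A] {p : ι → A} {R : ι → Finset A}
    (hR : ∀ i, IsDecomposition B (p i) (R i)) (hp : ∀ i j, i ≠ j → p i * p j = 0) :
    IsDecomposition B (∑ i, p i) (Finset.univ.biUnion R) := by
  have horth : ∀ i j, i ≠ j → ∀ e ∈ R i, ∀ f ∈ R j, e * f = 0 := fun i j hij e he f hf => by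
    rw [← (hR i).mul_eq' he, ← (hR j).mul_eq hf, mul_assoc, ← mul_assoc (p i), hp i j hij,
      zero_mul, mul_zero]
  refine ⟨fun f hf => ?_, fun e he f hf hef => ?_, ?_⟩
  · obtain ⟨i, -, hi⟩ := Finset.mem_biUnion.1 hf
    exact (hR i).minimal f hi
  · obtain ⟨i, -, hi⟩ := Finset.mem_biUnion.1 he
    obtain ⟨j, -, hj⟩ := Finset.mem_biUnion.1 hf
    by_cases h : i = j
    · subst h
      exact (hR _).orth e hi f hj hef
    · exact horth _ _ h e hi f hj
  · rw [Finset.sum_biUnion]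
    · exact Finset.sum_congr rfl fun i _ => (hR i).sum_eq
    · intro i _ j _ hij
      refine Finset.disjoint_left.2 fun e he he' => ((hR i).minimal e he).ne_zero ?_
      rw [← ((hR i).minimal e he).isStarProjection.isIdempotentElem.eq]
      exact horth i j hij e he e he'

theorem IsPVM.exists_frame [FiniteDimensional ℂ B] {p : ι → A} (hp : IsPVM p)
    (hpB : ∀ i, p i ∈ B) :
    ∃ R : Finset A, IsDecomposition B 1 R ∧ ∃ c : R → ι, ∀ e : R, p (c e) * e = e := by
  classical
  choose R hR using fun i => exists_isDecomposition (hpB i) (hp.isStarProjection i)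
  have hex : ∀ e : Finset.univ.biUnion R, ∃ i, (e : A) ∈ R i := by
    rintro ⟨e, he⟩
    simpa using he
  choose c hc using hex
  refine ⟨Finset.univ.biUnion R, ?_, c, fun e => (hR _).mul_eq (hc e)⟩
  rw [← hp.sum_eq]
  exact IsDecomposition.biUnion hR hp.orth

theorem IsPVM.mul_eq_ite {p : ι → A} (hp : IsPVM p) [DecidableEq ι] {e : A} {j : ι}
    (he : p j * e = e) (i : ι) : p i * e = if i = j then e else 0 := by
  rw [← he, ← mul_assoc, hp.mul_eq, ite_mul, zero_mul]
  split_ifs with h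
  · rw [h]
  · rfl

theorem IsDecomposition.sum_coe {e : A} {R : Finset A} (h : IsDecomposition B e R) :
    ∑ f : R, (f : A) = e := by
  exact (Finset.sum_coe_sort R fun f => f).trans h.sum_eq

theorem IsDecomposition.mul_coe [DecidableEq A] {e : A} {R : Finset A} (h : IsDecomposition B e R)
    (f g : R) : (f : A) * g = if f = g then (f : A) else 0 := by
  split_ifs with hfg
  · rw [← hfg, (h.minimal f f.2).isStarProjection.isIdempotentElem.eq]
  · exact h.orth f f.2 g g.2 fun hh => hfg (Subtype.ext hh)

namespace IsFaithfulTracialState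
variable (hτ : IsFaithfulTracialState τ)
include hτ

theorem re_map_mul {e f : A} (he : IsStarProjection e) (hf : IsStarProjection f) :
    (τ (e * f)).re = twoNorm τ (e * f) ^ 2 := by
  rw [hτ.twoNorm_sq, star_mul, he.isSelfAdjoint.star_eq, hf.isSelfAdjoint.star_eq,
    mul_assoc, ← mul_assoc e, he.isIdempotentElem.eq, hτ.map_mul_comm f, mul_assoc,
    hf.isIdempotentElem.eq]

theorem re_map_eq_of_mul_ne_zero {e f : A} (he : IsMinimalProjection B e)
    (hf : IsMinimalProjection B f) (h : e * f ≠ 0) : (τ e).re = (τ f).re :=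
  le_antisymm
    (hτ.re_map_le_of_mul_ne_zero he hf.mem hf.isStarProjection fun h' =>
      h (hf.isStarProjection.mul_eq_zero_of_mul_eq_zero he.isStarProjection h'))
    (hτ.re_map_le_of_mul_ne_zero hf he.mem he.isStarProjection h)

theorem exists_unitary_of_equiv {R S : Finset A} (hR : IsDecomposition B 1 R)
    (hS : IsDecomposition B 1 S) (π : R ≃ S) (hπ : ∀ e, (π e : A) * e ≠ 0) :
    ∃ w ∈ B, w ∈ unitary A ∧ ∀ e, w * e * star w = (π e : A) := by
  classical
  choose v hvB hv1 hv2 c _ hv using fun e : R => hτ.exists_partialIsometry (hR.minimal e e.2)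
    (hS.minimal _ (π e).2) (one_mem B) (by simpa using hπ e)
  simp only [mul_one] at hv
  have hve : ∀ e f : R, v e * f = if e = f then v e else 0 := by
    intro e f
    rw [hv, smul_mul_assoc, mul_assoc, hR.mul_coe]
    split_ifs <;> simp
  have hev : ∀ e f : R, (π f : A) * v e = if f = e then v e else 0 := by
    intro e f
    rw [hv, mul_smul_comm, ← mul_assoc, hS.mul_coe]
    by_cases h : f = e
    · simp [h]
    · simp [h]
  have hvv : ∀ e f : R, star (v e) * v f = if e = f then (e : A) else 0 := by
    intro e f
    have h1 : star (v e) = star (v e) * (π e : A) := by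
      have := congrArg star (hev e e)
      rw [if_pos rfl, star_mul, (hS.minimal _ (π e).2).isStarProjection.isSelfAdjoint.star_eq]
        at this
      exact this.symm
    rw [h1, mul_assoc, hev]
    split_ifs with h
    · rw [← h, hv1]
    · simp
  have hvv' : ∀ e f : R, v e * star (v f) = if e = f then (π e : A) else 0 := by
    intro e f
    have h1 : v e = v e * (e : A) := by rw [hve, if_pos rfl]
    have h2 : star (v f) = (f : A) * star (v f) := by
      have := congrArg star (hve f f)
      rw [if_pos rfl, star_mul, (hR.minimal _ f.2).isStarProjection.isSelfAdjoint.star_eq]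
        at this
      exact this.symm
    rw [h1, h2, mul_assoc, ← mul_assoc (e : A), hR.mul_coe]
    split_ifs with h
    · rw [h, ← mul_assoc, hve, if_pos rfl, hv2]
    · simp
  have hwe : ∀ e : R, (∑ f, v f) * (e : A) = v e := by
    intro e
    simp [Finset.sum_mul, hve]
  refine ⟨∑ e, v e, sum_mem fun e _ => hvB e, ?_, fun e => ?_⟩
  · rw [Unitary.mem_iff]
    constructor
    · simp only [star_sum, Finset.sum_mul, Finset.mul_sum, hvv, Finset.sum_ite_eq',
        Finset.mem_univ, if_true]
      exact hR.sum_coe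
    · simp only [star_sum, Finset.sum_mul, Finset.mul_sum, hvv', Finset.sum_ite_eq',
        Finset.mem_univ, if_true]
      exact (π.sum_comp fun f : S => (f : A)).trans hS.sum_coe
  · rw [hwe, star_sum, Finset.mul_sum]
    simp [hvv']

/-- A projection-valued partition of unity of `B` is conjugate in `B` to a diagonal one which is
at least as close to a given diagonal partition. -/
theorem exists_unitary_isDiagonal [FiniteDimensional ℂ B] {S : Finset A}
    (hS : IsDecomposition B 1 S) {p q : ι → A} (hp : IsPVM p) (hpB : ∀ i, p i ∈ B)
    (hq : IsPVM q) (hqS : ∀ i, IsDiagonal S (q i)) :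
    ∃ w ∈ B, w ∈ unitary A ∧ (∀ i, IsDiagonal S (w * p i * star w)) ∧
      ∑ i, (τ (p i * q i)).re ≤ ∑ i, (τ (w * p i * star w * q i)).re := by
  classical
  obtain ⟨R, hR, c, hc⟩ := hp.exists_frame hpB
  have hRp : ∀ e : R, IsStarProjection (e : A) := fun e => (hR.minimal e e.2).isStarProjection
  have hSp : ∀ e : S, IsStarProjection (e : A) := fun e => (hS.minimal e e.2).isStarProjection
  have hRpos : ∀ e : R, 0 < (τ (e : A)).re := fun e =>
    hτ.re_map_pos (hRp e) (hR.minimal e e.2).ne_zero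
  have hSpos : ∀ e : S, 0 < (τ (e : A)).re := fun e =>
    hτ.re_map_pos (hSp e) (hS.minimal e e.2).ne_zero
  let m : R → S → ℝ := fun e f => (τ ((e : A) * f)).re / (τ (e : A)).re
  let k : R → S → ℝ := fun e f => (τ ((f : A) * q (c e))).re
  have hm' : ∀ e f, m e f = (τ ((e : A) * f)).re / (τ (f : A)).re := by
    intro e f
    by_cases h : (e : A) * f = 0
    · simp [m, h]
    · simp only [m]
      rw [hτ.re_map_eq_of_mul_ne_zero (hR.minimal e e.2) (hS.minimal f f.2) h]
  have hqS' : ∀ i, ∀ f : S, (f : A) * q i = f ∨ (f : A) * q i = 0 := by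
    intro i f
    rcases hqS i f f.2 with h | h
    · exact Or.inl ((hq.isStarProjection i).mul_eq_of_mul_eq (hSp f) h)
    · exact Or.inr ((hq.isStarProjection i).mul_eq_zero_of_mul_eq_zero (hSp f) h)
  have hmk : ∀ e f, m e f * k e f = (τ ((e : A) * f * q (c e))).re := by
    intro e f
    rw [hm']
    rcases hqS' (c e) f with h | h
    · simp only [k, mul_assoc, h]
      exact div_mul_cancel₀ _ (hSpos f).ne'
    · simp [k, mul_assoc, h]
  obtain ⟨π, hπ, hle⟩ := exists_equiv_of_doublyStochastic m k
    (fun e f => by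
      simp only [m]; rw [hτ.re_map_mul (hRp e) (hSp f)]
      exact div_nonneg (sq_nonneg _) (hRpos e).le)
    (fun e => by
      simp only [m]
      rw [← Finset.sum_div, ← Complex.re_sum, ← map_sum, ← Finset.mul_sum, hS.sum_coe, mul_one,
        div_self (hRpos e).ne'])
    (fun f => by
      simp only [hm']
      rw [← Finset.sum_div, ← Complex.re_sum, ← map_sum, ← Finset.sum_mul, hR.sum_coe, one_mul,
        div_self (hSpos f).ne'])
  obtain ⟨w, hwB, hw, hwπ⟩ := hτ.exists_unitary_of_equiv hR hS π fun e h => (hπ e).ne' <| by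
    simp [m, (hSp _).mul_eq_zero_of_mul_eq_zero (hRp e) h]
  have hpe : ∀ i, ∀ e : R, p i * e = if i = c e then (e : A) else 0 := fun i e =>
    hp.mul_eq_ite (hc e) i
  have hpi : ∀ i, p i = ∑ e : R, if i = c e then (e : A) else 0 := fun i => by
    simp_rw [← hpe, ← Finset.mul_sum, hR.sum_coe, mul_one]
  have hwp : ∀ i, w * p i * star w = ∑ e : R, if i = c e then (π e : A) else 0 := fun i => by
    rw [hpi, Finset.mul_sum, Finset.sum_mul]
    refine Finset.sum_congr rfl fun e _ => ?_
    split_ifs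
    · exact hwπ e
    · simp
  refine ⟨w, hwB, hw, fun i f hf => ?_, ?_⟩
  · obtain ⟨e, he⟩ := π.surjective ⟨f, hf⟩
    have hfe : f = (π e : A) := by rw [he]
    have : ∀ e' : R, (if i = c e' then (π e' : A) else 0) * (π e : A)
        = if e' = e then (if i = c e' then (π e : A) else 0) else 0 := by
      intro e'
      rw [ite_mul, zero_mul, hS.mul_coe]
      by_cases h : e' = e <;> simp [h]
    rw [hwp, hfe, Finset.sum_mul, Finset.sum_congr rfl fun e' _ => this e']
    simp only [Finset.sum_ite_eq', Finset.mem_univ, if_true]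
    split_ifs <;> simp
  · calc ∑ i, (τ (p i * q i)).re = ∑ e : R, ∑ f : S, m e f * k e f := by
          simp_rw [hmk]
          simp_rw [← Complex.re_sum, ← map_sum, ← Finset.sum_mul, ← Finset.mul_sum, hS.sum_coe,
            mul_one]
          congr 2
          conv_lhs => enter [2, i]; rw [hpi, Finset.sum_mul]
          rw [Finset.sum_comm]
          simp
      _ ≤ _ := hle
      _ = _ := by
          simp_rw [hwp]
          simp_rw [k, ← Complex.re_sum, ← map_sum]
          congr 2
          conv_rhs => enter [2, i]; rw [Finset.sum_mul]
          rw [Finset.sum_comm]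
          simp

end IsFaithfulTracialState
end Frames

section Perturbation

variable {A : Type*} [CStarAlgebra A] {B : StarSubalgebra ℂ A} {τ : A →ₗ[ℂ] ℂ}
  {ι : Type*} [Fintype ι]

theorem StarSubalgebra.finiteDimensional_of_le {B C : StarSubalgebra ℂ A} [FiniteDimensional ℂ B]
    (h : C ≤ B) : FiniteDimensional ℂ C :=
  have : FiniteDimensional ℂ B.toSubalgebra.toSubmodule := ‹FiniteDimensional ℂ B›
  Submodule.finiteDimensional_of_le
    (S₁ := C.toSubalgebra.toSubmodule) (S₂ := B.toSubalgebra.toSubmodule) h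

theorem norm_le_one_of_mem_unitary {u : A} (hu : u ∈ unitary A) : ‖u‖ ≤ 1 := by
  have h : ‖u‖ * ‖u‖ ≤ 1 := by
    rw [← CStarRing.norm_star_mul_self, Unitary.star_mul_self_of_mem hu]
    rcases subsingleton_or_nontrivial A with h | h
    · simp [Subsingleton.elim (1 : A) 0]
    · simp
  nlinarith [norm_nonneg u]

theorem IsStarProjection.norm_le_one' {p : A} (hp : IsStarProjection p) : ‖p‖ ≤ 1 := by
  have h : ‖p‖ * ‖p‖ = ‖p‖ := by
    rw [← CStarRing.norm_star_mul_self, hp.isSelfAdjoint.star_eq, hp.isIdempotentElem.eq]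
  nlinarith [norm_nonneg p]

namespace IsFaithfulTracialState
variable (hτ : IsFaithfulTracialState τ)
include hτ

/-- An element of a finite-dimensional algebra is close to a unitary of the algebra if it is almost
isometric. -/
theorem exists_unitary_twoNorm_sub_le [FiniteDimensional ℂ B] {y : A} (hy : y ∈ B) {η : ℝ}
    (hη : 0 < η) :
    ∃ g ∈ B, g ∈ unitary A ∧ twoNorm τ (y - g) ≤ twoNorm τ (1 - star y * y) + η := by
  set c := twoNorm τ y with hc
  have hc0 : 0 ≤ c := twoNorm_nonneg _
  have hs0 : 0 < min 1 (η / (2 * c + 2)) := by positivity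
  have hfin : {s : ℝ | -(s : ℂ) ∈ spectrum ℂ y}.Finite :=
    (spectrum_finite_of_mem_finiteDimensional hy).preimage (f := fun s : ℝ => -(s : ℂ))
      (by intro s _ t _ h; simpa using h)
  obtain ⟨s, ⟨hs, hs'⟩, hsy⟩ := ((Set.Ioo_infinite hs0).sdiff hfin).nonempty
  have hs1 : s < 1 := hs'.trans_le (min_le_left _ _)
  have hs2 : s * (2 * c + 2) < η := (lt_div_iff₀ (by positivity)).1 (hs'.trans_le (min_le_right _ _))
  set z : A := y + algebraMap ℂ A s with hz
  have hzB : z ∈ B := add_mem hy (B.algebraMap_mem _)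
  have hzu : IsUnit z := by
    simp only [Set.mem_ofPred_eq, spectrum.notMem_iff, map_neg] at hsy
    rw [← IsUnit.neg_iff]
    convert hsy using 1
    rw [hz]; abel
  set a := star z * z with ha
  have haB : a ∈ B := mul_mem (star_mem hzB) hzB
  have hau : IsUnit a := hzu.star.mul hzu
  have hasa : IsSelfAdjoint a := IsSelfAdjoint.star_mul_self z
  have hcont : ∀ f : ℝ → ℝ, ContinuousOn f (spectrum ℝ a) := fun f =>
    (real_spectrum_finite_of_mem_finiteDimensional haB).continuousOn f
  have hpos : ∀ t ∈ spectrum ℝ a, 0 < t := fun t ht =>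
    (spectrum_star_mul_self_nonneg t ht).lt_of_ne fun h =>
      spectrum.zero_notMem ℝ hau (h ▸ ht)
  set b := cfc (fun t => (√t)⁻¹) a
  set h := cfc (fun t => √t) a
  set r := cfc (fun t => (1 + √t)⁻¹) a
  have hbB : b ∈ B := cfc_mem_of_finiteDimensional _ haB
  have hbh : b * h = 1 := by
    rw [← cfc_mul _ _ a (hcont _) (hcont _), ← cfc_one ℝ a]
    exact cfc_congr fun t ht => inv_mul_cancel₀ (Real.sqrt_pos.2 (hpos t ht)).ne'
  have hhb : h * b = 1 := by
    rw [← cfc_mul _ _ a (hcont _) (hcont _), ← cfc_one ℝ a]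
    exact cfc_congr fun t ht => mul_inv_cancel₀ (Real.sqrt_pos.2 (hpos t ht)).ne'
  have hhh : h * h = a := by
    rw [← cfc_mul _ _ a (hcont _) (hcont _)]
    conv_rhs => rw [← cfc_id' ℝ a]
    exact cfc_congr fun t ht => Real.mul_self_sqrt (hpos t ht).le
  have hr : 1 - h = r * (1 - a) := by
    have h1 : 1 - a = cfc (fun t : ℝ => 1 - t) a := by
      rw [cfc_sub (fun _ => 1) (fun t => t) a (hcont _) (hcont _), cfc_const_one ℝ a, cfc_id' ℝ a]
    have h2 : 1 - h = cfc (fun t : ℝ => 1 - √t) a := by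
      rw [cfc_sub (fun _ => 1) (fun t => √t) a (hcont _) (hcont _), cfc_const_one ℝ a]
    rw [h1, h2, ← cfc_mul _ _ a (hcont _) (hcont _)]
    refine cfc_congr fun t ht => ?_
    have := Real.sqrt_pos.2 (hpos t ht)
    have h3 := Real.mul_self_sqrt (hpos t ht).le
    field_simp
    nlinarith
  have hr1 : ‖r‖ ≤ 1 := norm_cfc_le zero_le_one fun t ht => by
    have := Real.sqrt_nonneg t
    rw [Real.norm_eq_abs, abs_of_nonneg (by positivity)]
    exact inv_le_one_of_one_le₀ (by linarith)
  have hbsa : star b = b := (cfc_predicate (R := ℝ) (p := IsSelfAdjoint) _ a : IsSelfAdjoint b)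
  set g := z * b with hg
  have hgg : star g * g = 1 := by
    rw [hg, star_mul, hbsa, mul_assoc, ← mul_assoc (star z), ← ha, ← hhh, ← mul_assoc,
      ← mul_assoc, hbh, one_mul, hhb]
  have hgu : IsUnit g := hzu.mul ⟨⟨b, h, hbh, hhb⟩, rfl⟩
  have hg1 : g ∈ unitary A := by
    refine Unitary.mem_iff.2 ⟨hgg, ?_⟩
    obtain ⟨u, hu⟩ := hgu
    have : star g = ↑u⁻¹ := by
      rw [← hu] at hgg ⊢
      exact (Units.inv_eq_of_mul_eq_one_left hgg).symm
    rw [this, ← hu, Units.mul_inv]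
  refine ⟨g, mul_mem hzB hbB, hg1, ?_⟩
  have hal : ∀ t : ℝ, algebraMap ℂ A t = (t : ℂ) • 1 := fun t => Algebra.algebraMap_eq_smul_one _
  have hsm : ∀ (t : ℝ), 0 ≤ t → ∀ x : A, twoNorm τ ((t : ℂ) • x) ≤ t * twoNorm τ x := by
    intro t ht x
    rw [← one_mul x, ← smul_mul_assoc]
    refine (hτ.twoNorm_mul_le_left _ _).trans ?_
    rw [one_mul]
    refine mul_le_mul_of_nonneg_right ?_ (twoNorm_nonneg _)
    rw [norm_smul, Complex.norm_real, Real.norm_eq_abs, abs_of_nonneg ht]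
    exact mul_le_of_le_one_right ht (norm_le_one_of_mem_unitary (one_mem _))
  have h1 : y - g = -(g * (1 - h)) - algebraMap ℂ A s := by
    rw [mul_sub, mul_one, hg, mul_assoc, hbh, mul_one, hz]; abel
  have h2 : 1 - a = (1 - star y * y) - ((s : ℂ) • (y + star y) + ((s : ℂ) • ((s : ℂ) • 1))) := by
    rw [ha, hz, hal]
    simp [add_mul, mul_add]
    abel
  have h3 : twoNorm τ (1 - a) ≤ twoNorm τ (1 - star y * y) + (s * (2 * c) + s * (s * 1)) := by
    rw [h2, sub_eq_add_neg]
    refine (hτ.twoNorm_add_le _ _).trans ?_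
    rw [twoNorm_neg]
    gcongr
    refine (hτ.twoNorm_add_le _ _).trans (add_le_add ?_ ?_)
    · refine (hsm s hs.le _).trans ?_
      gcongr
      refine (hτ.twoNorm_add_le _ _).trans ?_
      rw [hτ.twoNorm_star, two_mul]
    · refine (hsm s hs.le _).trans ?_
      gcongr
      refine (hsm s hs.le _).trans ?_
      rw [hτ.twoNorm_one]
  calc twoNorm τ (y - g) ≤ twoNorm τ (1 - a) + s := by
        rw [h1, sub_eq_add_neg]
        refine (hτ.twoNorm_add_le _ _).trans ?_
        rw [twoNorm_neg, twoNorm_neg]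
        refine add_le_add ?_ ?_
        · refine (hτ.twoNorm_mul_le_of_norm_le_one (norm_le_one_of_mem_unitary hg1) _).trans ?_
          rw [hr]
          exact hτ.twoNorm_mul_le_of_norm_le_one hr1 _
        · rw [hal]
          simpa [hτ.twoNorm_one] using hsm s hs.le 1
    _ ≤ _ := by nlinarith

/-- Unitarily conjugate partitions of unity in a finite-dimensional algebra that are close are
conjugate by a unitary close to `1`. -/
theorem exists_unitary_conj_eq [FiniteDimensional ℂ B] {p : ι → A} (hp : IsPVM p)
    (hpB : ∀ i, p i ∈ B) {w : A} (hwB : w ∈ B) (hw : w ∈ unitary A) {η : ℝ} (hη : 0 < η) :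
    ∃ v ∈ B, v ∈ unitary A ∧ (∀ i, v * p i * star v = w * p i * star w) ∧
      twoNorm τ (v - 1) ≤ 2 * ∑ i, twoNorm τ (p i - w * p i * star w) + η := by
  classical
  have hww : star w * w = 1 := Unitary.star_mul_self_of_mem hw
  have hww' : w * star w = 1 := Unitary.mul_star_self_of_mem hw
  set q : ι → A := fun i => w * p i * star w with hqdef
  have hq : IsPVM q := hp.conj hw
  have hpp : ∀ i, p i * p i = p i := fun i => (hp.isStarProjection i).isIdempotentElem
  have hps : ∀ i, star (p i) = p i := fun i => (hp.isStarProjection i).isSelfAdjoint.star_eq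
  have hqs : ∀ i, star (q i) = q i := fun i => (hq.isStarProjection i).isSelfAdjoint.star_eq
  set Δ := ∑ i, twoNorm τ (p i - q i)
  set x := ∑ i, q i * p i with hx
  set y := star w * x with hy
  let C : StarSubalgebra ℂ A := B ⊓ StarSubalgebra.centralizer ℂ (Set.range p)
  have hCB : C ≤ B := inf_le_left
  have : FiniteDimensional ℂ C := StarSubalgebra.finiteDimensional_of_le hCB
  have hwq : ∀ i, star w * q i = p i * star w := fun i => by
    rw [hqdef]; simp only [← mul_assoc]; rw [hww, one_mul]
  have hyC : y ∈ C := by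
    refine StarSubalgebra.mem_inf.2 ⟨mul_mem (star_mem hwB) (sum_mem fun i _ => mul_mem
      (mul_mem (mul_mem hwB (hpB i)) (star_mem hwB)) (hpB i)), ?_⟩
    have hyy : y = ∑ i, p i * star w * p i := by
      rw [hy, hx, Finset.mul_sum]
      exact Finset.sum_congr rfl fun i _ => by rw [← mul_assoc, hwq]
    have hc : ∀ i, p i * y = y * p i := by
      intro i
      rw [hyy, Finset.mul_sum, Finset.sum_mul]
      refine Finset.sum_congr rfl fun j _ => ?_
      by_cases hij : i = j
      · rw [hij, ← mul_assoc, ← mul_assoc, hpp, mul_assoc _ (p j) (p j), hpp]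
      · rw [← mul_assoc, ← mul_assoc, hp.orth i j hij, mul_assoc _ (p j) (p i),
          hp.orth j i (Ne.symm hij), zero_mul, zero_mul, mul_zero]
    rw [StarSubalgebra.mem_centralizer_iff]
    rintro _ ⟨i, rfl⟩
    exact ⟨hc i, by rw [hps]; exact hc i⟩
  obtain ⟨g, hgC, hg, hle⟩ := hτ.exists_unitary_twoNorm_sub_le hyC hη
  have hgp : ∀ i, p i * g = g * p i := fun i =>
    ((StarSubalgebra.mem_centralizer_iff ℂ).1 (StarSubalgebra.mem_inf.1 hgC).2 (p i) ⟨i, rfl⟩).1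
  have hx1 : twoNorm τ (x - 1) ≤ Δ := by
    have : x - 1 = ∑ i, (q i - p i) * p i := by
      simp_rw [sub_mul, hpp]
      rw [Finset.sum_sub_distrib, hp.sum_eq]
    rw [this]
    refine (hτ.twoNorm_sum_le _ _).trans (Finset.sum_le_sum fun i _ => ?_)
    rw [twoNorm_sub_comm]
    exact hτ.twoNorm_mul_le_of_norm_le_one' (hp.isStarProjection i).norm_le_one' _
  have hy1 : twoNorm τ (1 - star y * y) ≤ Δ := by
    have h1 : star y * y = star x * x := by
      rw [hy, star_mul, star_star, mul_assoc, ← mul_assoc w, hww', one_mul]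
    have h2 : star x * x = ∑ i, p i * q i * p i := by
      rw [hx, star_sum, Finset.sum_mul]
      refine Finset.sum_congr rfl fun i _ => ?_
      rw [Finset.mul_sum, Finset.sum_eq_single_of_mem i (Finset.mem_univ _)]
      · rw [star_mul, hps, hqs, mul_assoc, ← mul_assoc (q i),
          (hq.isStarProjection i).isIdempotentElem.eq, ← mul_assoc]
      · intro j _ hj
        rw [star_mul, hqs, mul_assoc, ← mul_assoc (q i), hq.orth i j hj.symm, zero_mul, mul_zero]
    have : 1 - star y * y = ∑ i, p i * ((p i - q i) * p i) := by
      rw [h1, h2, ← hp.sum_eq, ← Finset.sum_sub_distrib]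
      refine Finset.sum_congr rfl fun i _ => ?_
      rw [sub_mul, mul_sub, hpp, hpp, mul_assoc]
    rw [this]
    refine (hτ.twoNorm_sum_le _ _).trans (Finset.sum_le_sum fun i _ => ?_)
    exact (hτ.twoNorm_mul_le_of_norm_le_one (hp.isStarProjection i).norm_le_one' _).trans
      (hτ.twoNorm_mul_le_of_norm_le_one' (hp.isStarProjection i).norm_le_one' _)
  refine ⟨w * g, mul_mem hwB (hCB hgC), mul_mem hw hg, fun i => ?_, ?_⟩
  · rw [star_mul, mul_assoc w, ← hgp, ← mul_assoc, ← mul_assoc, mul_assoc (w * p i) g,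
      Unitary.mul_star_self_of_mem hg, mul_one]
  · have h1 : w * g - 1 = (x - 1) + -(w * (y - g)) := by
      rw [mul_sub, hy, ← mul_assoc, hww', one_mul]; abel
    rw [h1]
    refine (hτ.twoNorm_add_le _ _).trans ?_
    rw [twoNorm_neg]
    have := hτ.twoNorm_mul_le_of_norm_le_one (norm_le_one_of_mem_unitary hw) (y - g)
    linarith

theorem sum_twoNorm_sub_sq {p q : ι → A} (hp : IsPVM p) (hq : IsPVM q) :
    ∑ i, twoNorm τ (p i - q i) ^ 2 = 2 * (1 - ∑ i, (τ (p i * q i)).re) := by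
  have h : ∀ i, twoNorm τ (p i - q i) ^ 2
      = (τ (p i)).re + (τ (q i)).re - 2 * (τ (p i * q i)).re := by
    intro i
    rw [hτ.twoNorm_sq, star_sub, (hp.isStarProjection i).isSelfAdjoint.star_eq,
      (hq.isStarProjection i).isSelfAdjoint.star_eq, sub_mul, mul_sub, mul_sub,
      (hp.isStarProjection i).isIdempotentElem.eq, (hq.isStarProjection i).isIdempotentElem.eq,
      map_sub, map_sub, map_sub, hτ.map_mul_comm (q i)]
    simp only [Complex.sub_re]
    ring
  simp_rw [h, Finset.sum_sub_distrib, Finset.sum_add_distrib, ← Finset.mul_sum, ← Complex.re_sum,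
    ← map_sum, hp.sum_eq, hq.sum_eq, hτ.map_one]
  simp
  ring

/-- A partition of unity of `B` that is close to a diagonal one becomes diagonal after conjugation
by a unitary close to `1`. -/
theorem exists_unitary_isDiagonal_near [FiniteDimensional ℂ B] {S : Finset A}
    (hS : IsDecomposition B 1 S) {p q : ι → A} (hp : IsPVM p) (hpB : ∀ i, p i ∈ B)
    (hq : IsPVM q) (hqS : ∀ i, IsDiagonal S (q i)) {δ : ℝ} (hδ : 0 < δ)
    (hpq : ∀ i, twoNorm τ (p i - q i) ≤ δ) :
    ∃ w ∈ B, w ∈ unitary A ∧ (∀ i, IsDiagonal S (w * p i * star w)) ∧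
      twoNorm τ (w - 1) ≤ (2 * (Fintype.card ι * (1 + Fintype.card ι)) + 1) * δ := by
  obtain ⟨w, hwB, hw, hwS, hle⟩ := hτ.exists_unitary_isDiagonal hS hp hpB hq hqS
  obtain ⟨v, hvB, hv, hvw, hvle⟩ := hτ.exists_unitary_conj_eq hp hpB hwB hw hδ
  refine ⟨v, hvB, hv, fun i => by rw [hvw]; exact hwS i, hvle.trans ?_⟩
  set k : ℝ := (Fintype.card ι : ℝ) with hk_def
  have h1 := hτ.sum_twoNorm_sub_sq hp hq
  have h2 := hτ.sum_twoNorm_sub_sq (hp.conj hw) hq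
  have h3 : ∑ i, twoNorm τ (p i - q i) ^ 2 ≤ k * δ ^ 2 := by
    refine (Finset.sum_le_sum fun i _ => pow_le_pow_left₀ (twoNorm_nonneg _) (hpq i) 2).trans ?_
    simp [hk_def]
  have h4 : ∀ i, twoNorm τ (w * p i * star w - q i) ≤ k * δ := by
    intro i
    have hk : 1 ≤ k := by
      have : 0 < Fintype.card ι := Fintype.card_pos_iff.2 ⟨i⟩
      rw [hk_def]; exact_mod_cast this
    have := Finset.single_le_sum (f := fun i => twoNorm τ (w * p i * star w - q i) ^ 2)
      (fun i _ => sq_nonneg _) (Finset.mem_univ i)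
    refine abs_le_of_sq_le_sq' ?_ (by positivity) |>.2
    calc _ ≤ _ := this
      _ ≤ k * δ ^ 2 := by linarith
      _ ≤ (k * δ) ^ 2 := by
        rw [mul_pow]
        gcongr
        nlinarith
  have h5 : ∑ i, twoNorm τ (p i - w * p i * star w) ≤ k * ((1 + k) * δ) := by
    refine (Finset.sum_le_sum fun i _ => (?_ : _ ≤ (1 + k) * δ)).trans (by simp [hk_def])
    have := hτ.twoNorm_sub_le (p i) (q i) (w * p i * star w)
    have h6 := h4 i
    rw [twoNorm_sub_comm] at h6
    linarith [hpq i]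
  linarith

end IsFaithfulTracialState
end Perturbation

section Normalizer

variable {A : Type*} [CStarAlgebra A] {B B' : StarSubalgebra ℂ A} {τ : A →ₗ[ℂ] ℂ}

theorem conj_mul_conj {u : A} (hu : u ∈ unitary A) (x y : A) :
    u * x * star u * (u * y * star u) = u * (x * y) * star u := by
  simp only [mul_assoc]
  rw [← mul_assoc (star u) u, Unitary.star_mul_self_of_mem hu, one_mul]

theorem conj_conj (u v x : A) :
    u * (v * x * star v) * star u = (u * v) * x * star (u * v) := by
  simp only [mul_assoc, star_mul]

theorem IsStarProjection.conj {u e : A} (he : IsStarProjection e) (hu : u ∈ unitary A) :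
    IsStarProjection (u * e * star u) := by
  refine ⟨?_, ?_⟩
  · rw [IsIdempotentElem, conj_mul_conj hu, he.isIdempotentElem.eq]
  · simp [IsSelfAdjoint, he.isSelfAdjoint.star_eq, mul_assoc]

theorem unitary_conj_injective {u : A} (hu : u ∈ unitary A) :
    Function.Injective fun x => u * x * star u := by
  intro x y h
  have := congrArg (fun z => star u * z * u) h
  simpa [← mul_assoc, Unitary.star_mul_self_of_mem hu, mul_assoc _ (star u) u] using this

theorem IsMinimalProjection.conj {u e : A} (he : IsMinimalProjection B e) (huB : u ∈ B)
    (hu : u ∈ unitary A) : IsMinimalProjection B (u * e * star u) where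
  mem := mul_mem (mul_mem huB he.mem) (star_mem huB)
  isStarProjection := he.isStarProjection.conj hu
  ne_zero h := he.ne_zero <| unitary_conj_injective hu (by simpa using h)
  exists_eq_smul x hx := by
    obtain ⟨c, hc⟩ := he.exists_eq_smul (star u * x * u)
      (mul_mem (mul_mem (star_mem huB) hx) huB)
    refine ⟨c, ?_⟩
    have : u * (e * (star u * x * u) * e) * star u = u * (c • e) * star u := by rw [hc]
    simpa [mul_assoc] using this

theorem IsDecomposition.conj [DecidableEq A] {e u : A} {R : Finset A} (h : IsDecomposition B e R)
    (huB : u ∈ B) (hu : u ∈ unitary A) :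
    IsDecomposition B (u * e * star u) (R.image fun x => u * x * star u) where
  minimal f hf := by
    obtain ⟨g, hg, rfl⟩ := Finset.mem_image.1 hf
    exact (h.minimal g hg).conj huB hu
  orth f hf g hg hfg := by
    obtain ⟨f, hf', rfl⟩ := Finset.mem_image.1 hf
    obtain ⟨g, hg', rfl⟩ := Finset.mem_image.1 hg
    rw [conj_mul_conj hu, h.orth f hf' g hg' fun h => hfg (by rw [h])]
    simp
  sum_eq := by
    rw [Finset.sum_image fun x _ y _ hxy => unitary_conj_injective hu hxy, ← Finset.sum_mul,
      ← Finset.mul_sum, h.sum_eq]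

/-- The unitaries of `B` permuting the elements of `S` by conjugation. -/
structure IsNormalizing (B : StarSubalgebra ℂ A) (S : Finset A) (u : A) : Prop where
  mem : u ∈ B
  mem_unitary : u ∈ unitary A
  conj_mem : ∀ e ∈ S, u * e * star u ∈ S
  conj_mem' : ∀ e ∈ S, star u * e * u ∈ S

namespace IsNormalizing
variable {S : Finset A} {u v : A}

theorem one : IsNormalizing B S 1 := ⟨one_mem _, one_mem _, by simp, by simp⟩

theorem star (hu : IsNormalizing B S u) : IsNormalizing B S (star u) :=
  ⟨star_mem hu.mem, Unitary.star_mem hu.mem_unitary, by simpa using hu.conj_mem',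
    by simpa using hu.conj_mem⟩

theorem mul (hu : IsNormalizing B S u) (hv : IsNormalizing B S v) : IsNormalizing B S (u * v) :=
  ⟨mul_mem hu.mem hv.mem, mul_mem hu.mem_unitary hv.mem_unitary,
    fun e he => by rw [← conj_conj]; exact hu.conj_mem _ (hv.conj_mem e he),
    fun e he => by
      have := hv.conj_mem' _ (hu.conj_mem' e he)
      simpa [mul_assoc] using this⟩

end IsNormalizing

/-- A normalizing unitary fixing a minimal projection `e` fixes everything below `e`. -/
theorem IsMinimalProjection.conj_eq_of_conj_eq {e w r : A} (he : IsMinimalProjection B e)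
    (hwB : w ∈ B) (hw : w ∈ unitary A) (hwe : w * e * Star.star w = e) (her : e * r = r)
    (hre : r * e = r) : w * r * Star.star w = r := by
  have hee : e * e = e := he.isStarProjection.isIdempotentElem
  have h1 : w * e = e * w := by
    have := congrArg (· * w) hwe
    simpa [mul_assoc, Unitary.star_mul_self_of_mem hw] using this
  obtain ⟨c, hc⟩ := he.exists_eq_smul w hwB
  have hwc : w * e = c • e := by rw [← hc, ← h1, mul_assoc, hee]
  have hwc' : e * Star.star w = Star.star c • e := by
    have := congrArg Star.star hwc
    simpa [he.isStarProjection.isSelfAdjoint.star_eq] using this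
  have hcc : c * Star.star c = 1 := by
    have : (c * Star.star c) • e = (1 : ℂ) • e := by
      rw [one_smul]
      conv_rhs => rw [← hwe, ← hee, ← mul_assoc, hwc, mul_assoc, hwc', smul_mul_smul_comm, hee]
    exact smul_left_injective ℂ he.ne_zero this
  calc w * r * Star.star w = w * (e * r * e) * Star.star w := by rw [her, hre]
    _ = (w * e) * r * (e * Star.star w) := by simp only [mul_assoc]
    _ = r := by
      rw [hwc, hwc', smul_mul_assoc, her, smul_mul_smul_comm, hre, hcc, one_smul]

/-- A frame of `B` refines to a frame of a larger algebra in a way that is compatible with the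
normalizers. -/
theorem IsDecomposition.exists_refinement [FiniteDimensional ℂ B'] {S : Finset A}
    (hBB : B ≤ B') (hS : IsDecomposition B 1 S) :
    ∃ S', IsDecomposition B' 1 S' ∧ (∀ f ∈ S', ∃ e ∈ S, e * f = f) ∧
      ∀ u, IsNormalizing B S u → IsNormalizing B' S' u := by
  classical
  let s : Setoid S :=
    { r := fun e f => ∃ u, IsNormalizing B S u ∧ u * e * star u = (f : A)
      iseqv :=
        { refl := fun e => ⟨1, .one, by simp⟩
          symm := by
            rintro e f ⟨u, hu, h⟩
            refine ⟨star u, hu.star, ?_⟩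
            rw [← h, conj_conj, Unitary.star_mul_self_of_mem hu.mem_unitary]
            simp
          trans := by
            rintro e f g ⟨u, hu, h⟩ ⟨v, hv, h'⟩
            refine ⟨v * u, hv.mul hu, ?_⟩
            rw [← h', ← h, conj_conj] } }
  let rep : S → S := fun e => (Quotient.mk s e).out
  have hrep : ∀ e, ∃ u, IsNormalizing B S u ∧ u * rep e * star u = (e : A) := fun e =>
    Quotient.mk_out (s := s) e
  choose U hU hUe using hrep
  choose R hR using fun e : S => exists_isDecomposition (hBB (hS.minimal e e.2).mem)
    (hS.minimal e e.2).isStarProjection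
  let T : S → Finset A := fun e => (R (rep e)).image fun x => U e * x * star (U e)
  have hT : ∀ e : S, IsDecomposition B' (e : A) (T e) := by
    intro e
    have := (hR (rep e)).conj (hBB (hU e).mem) (hU e).mem_unitary
    rwa [hUe] at this
  have key : ∀ u, IsNormalizing B S u → ∀ x ∈ Finset.univ.biUnion T,
      u * x * star u ∈ Finset.univ.biUnion T := by
    intro u hu x hx
    obtain ⟨e, -, hx⟩ := Finset.mem_biUnion.1 hx
    obtain ⟨r, hr, rfl⟩ := Finset.mem_image.1 hx
    let f : S := ⟨u * e * star u, hu.conj_mem e e.2⟩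
    have hef : rep e = rep f := congrArg Quotient.out (Quotient.sound ⟨u, hu, rfl⟩)
    refine Finset.mem_biUnion.2 ⟨f, Finset.mem_univ _, Finset.mem_image.2 ⟨r, hef ▸ hr, ?_⟩⟩
    have hUf := Unitary.star_mul_self_of_mem (hU f).mem_unitary
    have hUf' := Unitary.mul_star_self_of_mem (hU f).mem_unitary
    set w := star (U f) * (u * U e) with hw
    have hwN : IsNormalizing B S w := (hU f).star.mul (hu.mul (hU e))
    have h1 : w * rep e * star w = (rep e : A) := by
      rw [hw, ← conj_conj, ← conj_conj, hUe]
      change star (U f) * (f : A) * _ = _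
      rw [← hUe f, conj_conj, hUf, hef]
      simp
    have h2 : w * r * star w = r := (hS.minimal _ (rep e).2).conj_eq_of_conj_eq hwN.mem
      hwN.mem_unitary h1 ((hR _).mul_eq hr) ((hR _).mul_eq' hr)
    conv_lhs => rw [← h2]
    rw [conj_conj, conj_conj, hw, ← mul_assoc, hUf', one_mul]
  refine ⟨Finset.univ.biUnion T, ?_, fun f hf => ?_, fun u hu => ⟨hBB hu.mem, hu.mem_unitary,
    key u hu, by simpa using key _ hu.star⟩⟩
  · rw [← hS.sum_coe]
    exact IsDecomposition.biUnion hT fun e f hef =>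
      hS.orth e e.2 f f.2 fun h => hef (Subtype.ext h)
  · obtain ⟨e, -, hx⟩ := Finset.mem_biUnion.1 hf
    exact ⟨e, e.2, (hT e).mul_eq hx⟩

theorem IsDecomposition.swap_conj {S : Finset A} (hS : IsDecomposition B 1 S) {e f v : A}
    (he : e ∈ S) (hf : f ∈ S) (hef : e ≠ f) (hve : v * e = v) (hfv : f * v = v)
    (hv : star v * v = e) (hv' : v * star v = f) {s : ℂ} (hs : s * s = 1) (hss : star s = s) :
    (v + s • star v + (1 - e - f)) * star (v + s • star v + (1 - e - f)) = 1 ∧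
      ∀ g ∈ S, (v + s • star v + (1 - e - f)) * g * star (v + s • star v + (1 - e - f)) ∈ S := by
  have hpe := (hS.minimal e he).isStarProjection
  have hpf := (hS.minimal f hf).isStarProjection
  have hes : star e = e := hpe.isSelfAdjoint
  have hfs : star f = f := hpf.isSelfAdjoint
  have hee : e * e = e := hpe.isIdempotentElem
  have hff : f * f = f := hpf.isIdempotentElem
  have hef0 : e * f = 0 := hS.orth e he f hf hef
  have hfe0 : f * e = 0 := hS.orth f hf e he hef.symm
  have hev' : e * star v = star v := by simpa [hes] using congrArg star hve
  have hvf' : star v * f = star v := by simpa [hfs] using congrArg star hfv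
  have hvf : v * f = 0 := by rw [← hve, mul_assoc, hef0, mul_zero]
  have hev : e * v = 0 := by rw [← hfv, ← mul_assoc, hef0, zero_mul]
  have hve' : star v * e = 0 := by rw [← hvf', mul_assoc, hfe0, mul_zero]
  have hfv' : f * star v = 0 := by rw [← hev', ← mul_assoc, hfe0, zero_mul]
  have hvv : v * v = 0 := by
    nth_rewrite 1 [← hve]
    rw [mul_assoc, hev, mul_zero]
  have hvv' : star v * star v = 0 := by simpa using congrArg star hvv
  have hsu : star (v + s • star v + (1 - e - f)) = star v + s • v + (1 - e - f) := by
    simp [hss, hes, hfs]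
  refine ⟨?_, fun g hg => ?_⟩
  · rw [hsu]
    have h1 : s • star v * (s • v) = e := by rw [smul_mul_smul_comm, hs, one_smul, hv]
    have h2 : v * (s • v) = 0 := by rw [mul_smul_comm, hvv, smul_zero]
    have h3 : s • star v * star v = 0 := by rw [smul_mul_assoc, hvv', smul_zero]
    have h4 : s • star v * e = 0 := by rw [smul_mul_assoc, hve', smul_zero]
    have h5 : s • star v * f = s • star v := by rw [smul_mul_assoc, hvf']
    have h6 : e * (s • v) = 0 := by rw [mul_smul_comm, hev, smul_zero]
    have h7 : f * (s • v) = s • v := by rw [mul_smul_comm, hfv]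
    simp only [mul_add, add_mul, mul_sub, sub_mul, mul_one, one_mul, hve, hv', hee,
      hff, hef0, hfe0, hev', hvf, hfv', h1, h2, h3, h4, h5, h6, h7]
    abel
  · have hgp := (hS.minimal g hg).isStarProjection
    have hconj : ∀ u : A, u * g * star u = (u * g) * star (u * g) := fun u => by
      rw [star_mul, hgp.isSelfAdjoint.star_eq, mul_assoc, mul_assoc, ← mul_assoc g g,
        hgp.isIdempotentElem.eq]
    rw [hconj]
    by_cases hge : g = e
    · subst hge
      have : (v + s • star v + (1 - g - f)) * g = v := by
        simp [add_mul, sub_mul, hve, hve', hee, hfe0]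
      rw [this, hv']
      exact hf
    by_cases hgf : g = f
    · subst hgf
      have : (v + s • star v + (1 - e - g)) * g = s • star v := by
        simp [add_mul, sub_mul, hvf, hvf', hff, hef0]
      rw [this, star_smul, star_star, hss, smul_mul_smul_comm, hs, one_smul, hv]
      exact he
    · have h1 : e * g = 0 := hS.orth e he g hg (Ne.symm hge)
      have h2 : f * g = 0 := hS.orth f hf g hg (Ne.symm hgf)
      have h3 : v * g = 0 := by rw [← hve, mul_assoc, h1, mul_zero]
      have h4 : star v * g = 0 := by rw [← hvf', mul_assoc, h2, mul_zero]
      have : (v + s • star v + (1 - e - f)) * g = g := by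
        simp [add_mul, sub_mul, h1, h2, h3, h4]
      rw [this, hgp.isSelfAdjoint.star_eq, hgp.isIdempotentElem.eq]
      exact hg

theorem IsDecomposition.isNormalizing_swap {S : Finset A} (hS : IsDecomposition B 1 S) {e f v : A}
    (he : e ∈ S) (hf : f ∈ S) (hef : e ≠ f) (hvB : v ∈ B) (hve : v * e = v) (hfv : f * v = v)
    (hv : star v * v = e) (hv' : v * star v = f) {s : ℂ} (hs : s * s = 1) (hss : star s = s) :
    IsNormalizing B S (v + s • star v + (1 - e - f)) := by
  obtain ⟨h1, h2⟩ := hS.swap_conj he hf hef hve hfv hv hv' hs hss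
  obtain ⟨h3, h4⟩ := hS.swap_conj (v := s • v) he hf hef (by rw [smul_mul_assoc, hve])
    (by rw [mul_smul_comm, hfv]) (by rw [star_smul, smul_mul_smul_comm, hss, hs, one_smul, hv])
    (by rw [star_smul, smul_mul_smul_comm, hss, hs, one_smul, hv']) hs hss
  have hes : star e = e := (hS.minimal e he).isStarProjection.isSelfAdjoint
  have hfs : star f = f := (hS.minimal f hf).isStarProjection.isSelfAdjoint
  have h5 : s • v + s • star (s • v) + (1 - e - f) = star (v + s • star v + (1 - e - f)) := by
    simp only [star_add, star_smul, star_star, star_sub, star_one, hes, hfs, hss, smul_smul, hs,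
      one_smul]
    abel
  rw [h5, star_star] at h3 h4
  exact ⟨add_mem (add_mem hvB (B.smul_mem (star_mem hvB) _)) (sub_mem (sub_mem (one_mem _)
    (hS.minimal e he).mem) (hS.minimal f hf).mem), Unitary.mem_iff.2 ⟨h3, h1⟩, h2, h4⟩

theorem IsDecomposition.isNormalizing_reflection {S : Finset A} (hS : IsDecomposition B 1 S)
    {e : A} (he : e ∈ S) : IsNormalizing B S (1 - (2 : ℂ) • e) := by
  have hes : star e = e := (hS.minimal e he).isStarProjection.isSelfAdjoint
  have hee : e * e = e := (hS.minimal e he).isStarProjection.isIdempotentElem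
  have hsa : star (1 - (2 : ℂ) • e) = 1 - (2 : ℂ) • e := by simp [hes]
  have h1 : (1 - (2 : ℂ) • e) * (1 - (2 : ℂ) • e) = 1 := by
    simp only [mul_sub, sub_mul, mul_one, one_mul, smul_mul_smul_comm, hee]
    module
  have h2 : ∀ g ∈ S, (1 - (2 : ℂ) • e) * g * (1 - (2 : ℂ) • e) = g := by
    intro g hg
    have : (1 - (2 : ℂ) • e) * g = g * (1 - (2 : ℂ) • e) := by
      by_cases h : g = e
      · rw [h]; simp [mul_sub, sub_mul]
      · simp [mul_sub, sub_mul, hS.orth g hg e he h, hS.orth e he g hg (Ne.symm h)]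
    rw [this, mul_assoc, h1, mul_one]
  refine ⟨sub_mem (one_mem _) (B.smul_mem (hS.minimal e he).mem _),
    Unitary.mem_iff.2 ⟨by rw [hsa, h1], by rw [hsa, h1]⟩, fun g hg => ?_, fun g hg => ?_⟩
  · rw [hsa, h2 g hg]; exact hg
  · rw [hsa, h2 g hg]; exact hg

/-- The normalizing unitaries of a frame span the algebra. -/
theorem IsDecomposition.mem_span_isNormalizing (hτ : IsFaithfulTracialState τ) {S : Finset A}
    (hS : IsDecomposition B 1 S) {b : A} (hb : b ∈ B) :
    b ∈ Submodule.span ℂ {u | IsNormalizing B S u} := by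
  set P := Submodule.span ℂ {u | IsNormalizing B S u}
  have hP : ∀ u, IsNormalizing B S u → u ∈ P := fun u hu => Submodule.subset_span hu
  have h1 : (1 : A) ∈ P := hP 1 .one
  have hproj : ∀ e ∈ S, e ∈ P := by
    intro e he
    have := P.smul_mem (1 / 2 : ℂ) (sub_mem h1 (hP _ (hS.isNormalizing_reflection he)))
    simpa using this
  have hsum : b = ∑ f ∈ S, ∑ e ∈ S, f * b * e := by
    conv_lhs => rw [← one_mul b, ← mul_one (1 * b), ← hS.sum_eq, Finset.sum_mul, Finset.sum_mul]
    simp_rw [Finset.mul_sum]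
  rw [hsum]
  refine sum_mem fun f hf => sum_mem fun e he => ?_
  have hee : e * e = e := (hS.minimal e he).isStarProjection.isIdempotentElem
  have hff : f * f = f := (hS.minimal f hf).isStarProjection.isIdempotentElem
  by_cases h0 : f * b * e = 0
  · rw [h0]; exact zero_mem _
  by_cases hef : e = f
  · obtain ⟨c, hc⟩ := (hS.minimal e he).exists_eq_smul b hb
    rw [← hef, hc]
    exact P.smul_mem c (hproj e he)
  obtain ⟨v, hvB, hv, hv', c, hc, rfl⟩ :=
    hτ.exists_partialIsometry (hS.minimal e he) (hS.minimal f hf) hb h0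
  set v := c • (f * b * e) with hvdef
  have hve : v * e = v := by rw [hvdef, smul_mul_assoc, mul_assoc, hee]
  have hfv : f * v = v := by rw [hvdef, mul_smul_comm, ← mul_assoc, ← mul_assoc, hff]
  have h2 := hP _ (hS.isNormalizing_swap he hf hef hvB hve hfv hv hv' (s := 1) (by simp) (by simp))
  have h3 := hP _ (hS.isNormalizing_swap he hf hef hvB hve hfv hv hv' (s := -1) (by simp) (by simp))
  have hvP : v ∈ P := by
    have := P.sub_mem (P.smul_mem (1 / 2 : ℂ) (add_mem h2 h3))
      (sub_mem (sub_mem h1 (hproj e he)) (hproj f hf))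
    convert this using 1
    module
  have : f * b * e = c⁻¹ • v := by rw [hvdef, smul_smul, inv_mul_cancel₀ hc, one_smul]
  rw [this]
  exact P.smul_mem _ hvP

end Normalizer

section Approximation

variable {A : Type*} [CStarAlgebra A] {B : StarSubalgebra ℂ A} {τ : A →ₗ[ℂ] ℂ}
  {ι : Type*} [Fintype ι]

theorem abs_sub_ite_le (t : ℝ) :
    |(t - if 1 / 2 ≤ t then 1 else 0) / (t * t - t)| ≤ 2 := by
  rw [abs_div]
  refine div_le_of_le_mul₀ (abs_nonneg _) zero_le_two ?_
  have : t * t - t = t * (t - 1) := by ring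
  rw [this, abs_mul]
  split_ifs with h
  · have : 1 / 2 ≤ |t| := h.trans (le_abs_self t)
    nlinarith [abs_nonneg (t - 1)]
  · have : 1 / 2 ≤ |t - 1| := by
      rw [abs_sub_comm]
      exact le_trans (by linarith) (le_abs_self _)
    rw [sub_zero]
    nlinarith [abs_nonneg t]

namespace IsFaithfulTracialState
variable (hτ : IsFaithfulTracialState τ)
include hτ

/-- A self-adjoint contraction of a finite-dimensional algebra near a projection is near a
projection of the algebra. -/
theorem exists_projection_near [FiniteDimensional ℂ B] {k p : A} (hkB : k ∈ B)
    (hk : IsSelfAdjoint k) (hk1 : ‖k‖ ≤ 1) (hp : IsStarProjection p) :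
    ∃ q ∈ B, IsStarProjection q ∧ twoNorm τ (q - p) ≤ 7 * twoNorm τ (k - p) ∧ ∃ z, q = k * z := by
  have hcont : ∀ f : ℝ → ℝ, ContinuousOn f (spectrum ℝ k) := fun f =>
    (real_spectrum_finite_of_mem_finiteDimensional hkB).continuousOn f
  let χ : ℝ → ℝ := fun t => if 1 / 2 ≤ t then 1 else 0
  have hχ : IsStarProjection (cfc χ k) := isStarProjection_cfc (hcont _) fun t _ => by simp [χ]
  refine ⟨cfc χ k, cfc_mem_of_finiteDimensional _ hkB, hχ, ?_, cfc (fun t => χ t / t) k, ?_⟩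
  · set r := cfc (fun t => (t - χ t) / (t * t - t)) k
    have hr : ‖r‖ ≤ 2 := norm_cfc_le zero_le_two fun t _ => abs_sub_ite_le t
    have h1 : k - cfc χ k = r * (k * k - k) := by
      have e1 : k * k - k = cfc (fun t : ℝ => t * t - t) k := by
        rw [cfc_sub _ _ k (hcont _) (hcont _), cfc_mul _ _ k (hcont _) (hcont _), cfc_id' ℝ k]
      have e2 : k - cfc χ k = cfc (fun t : ℝ => t - χ t) k := by
        rw [cfc_sub _ _ k (hcont _) (hcont _), cfc_id' ℝ k]
      rw [e1, e2, ← cfc_mul _ _ k (hcont _) (hcont _)]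
      refine cfc_congr fun t _ => ?_
      by_cases h : t * t - t = 0
      · have h' : t * (t - 1) = 0 := by linarith
        rcases mul_eq_zero.1 h' with h0 | h0
        · simp [h0, χ]
        · simp [sub_eq_zero.1 h0, χ]; norm_num
      · exact (div_mul_cancel₀ _ h).symm
    have h2 : k * k - k = k * (k - p) + (k - p) * p + -(k - p) := by
      rw [mul_sub, sub_mul, hp.isIdempotentElem.eq]; abel
    have h3 : twoNorm τ (k * k - k) ≤ 3 * twoNorm τ (k - p) := by
      rw [h2]
      refine (hτ.twoNorm_add_le _ _).trans ?_
      have h4 := hτ.twoNorm_add_le (k * (k - p)) ((k - p) * p)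
      have h5 := hτ.twoNorm_mul_le_of_norm_le_one hk1 (k - p)
      have h6 := hτ.twoNorm_mul_le_of_norm_le_one' hp.norm_le_one' (k - p)
      rw [twoNorm_neg]
      linarith
    have h7 : twoNorm τ (k - cfc χ k) ≤ 2 * twoNorm τ (k * k - k) := by
      rw [h1]
      exact (hτ.twoNorm_mul_le_left _ _).trans
        (mul_le_mul_of_nonneg_right hr (twoNorm_nonneg _))
    have h8 := hτ.twoNorm_sub_le (cfc χ k) k p
    rw [twoNorm_sub_comm] at h7
    linarith
  · conv_rhs => enter [1]; rw [← cfc_id' ℝ k]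
    rw [← cfc_mul _ _ k (hcont _) (hcont _)]
    refine cfc_congr fun t _ => ?_
    by_cases h : t = 0
    · simp [h, χ]
    · exact (mul_div_cancel₀ _ h).symm

omit [Fintype ι] in
theorem exists_orthogonal_near {B : ℕ → StarSubalgebra ℂ A} (hmono : Monotone B)
    (hfin : ∀ n, FiniteDimensional ℂ (B n))
    (hdense : ∀ p, IsStarProjection p → ∀ δ > 0, ∃ n, ∃ k ∈ B n, IsSelfAdjoint k ∧ ‖k‖ ≤ 1 ∧
      twoNorm τ (k - p) ≤ δ) {p : ι → A} (hp : ∀ i, IsStarProjection (p i))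
    (horth : ∀ i j, i ≠ j → p i * p j = 0) (s : Finset ι) {δ : ℝ} (hδ : 0 < δ) :
    ∃ n, ∃ q : ι → A, (∀ i ∈ s, q i ∈ B n ∧ IsStarProjection (q i) ∧
      twoNorm τ (q i - p i) ≤ δ) ∧ ∀ i ∈ s, ∀ j ∈ s, i ≠ j → q i * q j = 0 := by
  classical
  induction s using Finset.induction_on generalizing δ with
  | empty => exact ⟨0, 0, by simp, by simp⟩
  | insert j s hj ih =>
  set c : ℝ := 7 * (1 + 2 * s.card) with hc
  have hc1 : 1 ≤ c := by
    have : (0 : ℝ) ≤ s.card := Nat.cast_nonneg _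
    linarith
  have hδ' : 0 < δ / c := by positivity
  have hδc : δ / c ≤ δ := div_le_self hδ.le hc1
  obtain ⟨n, q, hq, hqo⟩ := ih hδ'
  obtain ⟨m, k, hkB, hk, hk1, hkp⟩ := hdense (p j) (hp j) _ hδ'
  have hBn : B n ≤ B (max n m) := hmono (le_max_left _ _)
  have hBm : B m ≤ B (max n m) := hmono (le_max_right _ _)
  set Q := ∑ i ∈ s, q i with hQ
  have hqQ : ∀ i ∈ s, q i * Q = q i := fun i hi => by
    rw [hQ, Finset.mul_sum, Finset.sum_eq_single_of_mem i hi,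
      (hq i hi).2.1.isIdempotentElem.eq]
    exact fun l hl hli => hqo i hi l hl hli.symm
  have hQp : IsStarProjection Q := by
    refine ⟨?_, ?_⟩
    · rw [IsIdempotentElem]
      conv_lhs => enter [1]; rw [hQ]
      rw [Finset.sum_mul, Finset.sum_congr rfl hqQ]
    · rw [IsSelfAdjoint, hQ, star_sum]
      exact Finset.sum_congr rfl fun i hi => (hq i hi).2.1.isSelfAdjoint
  set R := 1 - Q with hR
  have hRp : IsStarProjection R := hQp.one_sub
  have hRB : R ∈ B (max n m) := sub_mem (one_mem _) (sum_mem fun i hi => hBn (hq i hi).1)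
  have hRs : star R = R := hRp.isSelfAdjoint
  have hqR : ∀ i ∈ s, q i * R = 0 := fun i hi => by rw [hR, mul_sub, mul_one, hqQ i hi, sub_self]
  have hRpj : twoNorm τ (R * p j - p j) ≤ s.card * (δ / c) := by
    have : R * p j - p j = -∑ i ∈ s, (q i - p i) * p j := by
      have hs : ∑ i ∈ s, (q i - p i) * p j = ∑ i ∈ s, q i * p j :=
        Finset.sum_congr rfl fun i hi => by
          rw [sub_mul, horth i j (fun h => hj (h ▸ hi)), sub_zero]
      rw [hs, hR, sub_mul, one_mul, hQ, Finset.sum_mul]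
      abel
    rw [this, twoNorm_neg]
    refine (hτ.twoNorm_sum_le _ _).trans ?_
    refine (Finset.sum_le_sum fun i hi => (hτ.twoNorm_mul_le_of_norm_le_one'
      (hp j).norm_le_one' _).trans (hq i hi).2.2).trans ?_
    simp
  have hRpj' : twoNorm τ (p j * R - p j) ≤ s.card * (δ / c) := by
    rw [← hτ.twoNorm_star] at hRpj
    simpa [hRs, (hp j).isSelfAdjoint.star_eq] using hRpj
  have hkk : twoNorm τ (R * k * R - p j) ≤ (1 + 2 * s.card) * (δ / c) := by
    have e1 : R * k * R - p j = R * (k - p j) * R + ((R * p j - p j) * R + (p j * R - p j)) := by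
      simp only [mul_sub, sub_mul]; abel
    rw [e1]
    refine (hτ.twoNorm_add_le _ _).trans ?_
    have h1 := hτ.twoNorm_mul_le_of_norm_le_one' hRp.norm_le_one' (R * (k - p j))
    have h2 := hτ.twoNorm_mul_le_of_norm_le_one hRp.norm_le_one' (k - p j)
    have h3 := hτ.twoNorm_add_le ((R * p j - p j) * R) (p j * R - p j)
    have h4 := hτ.twoNorm_mul_le_of_norm_le_one' hRp.norm_le_one' (R * p j - p j)
    linarith
  obtain ⟨P, hPB, hP, hPp, z, hz⟩ := hτ.exists_projection_near (B := B (max n m))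
    (k := R * k * R) (p := p j) (mul_mem (mul_mem hRB (hBm hkB)) hRB)
    (by simp [IsSelfAdjoint, hRs, hk.star_eq, mul_assoc])
    (by
      have h1 := hRp.norm_le_one'
      calc ‖R * k * R‖ ≤ ‖R‖ * ‖k‖ * ‖R‖ :=
            (norm_mul_le _ _).trans (mul_le_mul_of_nonneg_right (norm_mul_le _ _) (norm_nonneg _))
        _ ≤ 1 * 1 * 1 := by gcongr
        _ = 1 := by norm_num) (hp j)
  have hqP : ∀ i ∈ s, q i * P = 0 := fun i hi => by
    rw [hz, ← mul_assoc, ← mul_assoc, ← mul_assoc, hqR i hi]; simp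
  have hne : ∀ i ∈ s, i ≠ j := fun i hi h => hj (h ▸ hi)
  refine ⟨max n m, Function.update q j P, fun i hi => ?_, fun i hi l hl hil => ?_⟩
  · rcases Finset.mem_insert.1 hi with rfl | hi
    · rw [Function.update_self]
      refine ⟨hPB, hP, hPp.trans ?_⟩
      calc 7 * twoNorm τ (R * k * R - p i) ≤ 7 * ((1 + 2 * s.card) * (δ / c)) := by gcongr
        _ = c * (δ / c) := by rw [hc]; ring
        _ = δ := mul_div_cancel₀ _ (by positivity)
        _ ≤ δ := le_rfl
    · rw [Function.update_of_ne (hne i hi)]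
      exact ⟨hBn (hq i hi).1, (hq i hi).2.1, (hq i hi).2.2.trans hδc⟩
  · rcases Finset.mem_insert.1 hi with h | his <;> rcases Finset.mem_insert.1 hl with h' | hls
    · exact absurd (h.trans h'.symm) hil
    · rw [h, Function.update_self, Function.update_of_ne (hne l hls)]
      exact (hq l hls).2.1.mul_eq_zero_of_mul_eq_zero hP (hqP l hls)
    · rw [h', Function.update_self, Function.update_of_ne (hne i his)]
      exact hqP i his
    · rw [Function.update_of_ne (hne i his), Function.update_of_ne (hne l hls)]
      exact hqo i his l hls hil

/-- Partitions of unity can be approximated by partitions of unity of the approximating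
finite-dimensional algebras. -/
theorem exists_isPVM_near {B : ℕ → StarSubalgebra ℂ A} (hmono : Monotone B)
    (hfin : ∀ n, FiniteDimensional ℂ (B n))
    (hdense : ∀ p, IsStarProjection p → ∀ δ > 0, ∃ n, ∃ k ∈ B n, IsSelfAdjoint k ∧ ‖k‖ ≤ 1 ∧
      twoNorm τ (k - p) ≤ δ) {p : ι → A} (hp : IsPVM p) {δ : ℝ} (hδ : 0 < δ) :
    ∃ n, ∃ q : ι → A, IsPVM q ∧ ∀ i, q i ∈ B n ∧ twoNorm τ (q i - p i) ≤ δ := by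
  classical
  set c : ℝ := Fintype.card ι + 1 with hc
  have hc0 : 0 < c := by positivity
  obtain ⟨n, q, hq, hqo⟩ := hτ.exists_orthogonal_near hmono hfin hdense hp.isStarProjection hp.orth
    Finset.univ (div_pos hδ hc0)
  have hne : Nonempty ι := by
    by_contra h
    rw [not_nonempty_iff] at h
    have h1 := hp.sum_eq
    have h2 := hτ.map_one
    rw [← h1] at h2
    simp at h2
  obtain ⟨j⟩ := hne
  have hqp : ∀ i, IsStarProjection (q i) := fun i => (hq i (Finset.mem_univ _)).2.1
  have hqB : ∀ i, q i ∈ B n := fun i => (hq i (Finset.mem_univ _)).1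
  have hqd : ∀ i, twoNorm τ (q i - p i) ≤ δ / c := fun i => (hq i (Finset.mem_univ _)).2.2
  have hqo' : ∀ i j, i ≠ j → q i * q j = 0 := fun i j =>
    hqo i (Finset.mem_univ _) j (Finset.mem_univ _)
  set Q := ∑ i, q i with hQ
  have hqQ : ∀ i, q i * Q = q i := fun i => by
    rw [hQ, Finset.mul_sum, Finset.sum_eq_single_of_mem i (Finset.mem_univ _),
      (hqp i).isIdempotentElem.eq]
    exact fun l _ hli => hqo' i l hli.symm
  have hQp : IsStarProjection Q := by
    refine ⟨?_, ?_⟩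
    · rw [IsIdempotentElem]
      conv_lhs => enter [1]; rw [hQ]
      rw [Finset.sum_mul, Finset.sum_congr rfl fun i _ => hqQ i]
    · rw [IsSelfAdjoint, hQ, star_sum]
      exact Finset.sum_congr rfl fun i _ => (hqp i).isSelfAdjoint
  have hQp' := hQp.one_sub
  have hqR : ∀ i, q i * (1 - Q) = 0 := fun i => by rw [mul_sub, mul_one, hqQ i, sub_self]
  have hRq : ∀ i, (1 - Q) * q i = 0 := fun i =>
    (hqp i).mul_eq_zero_of_mul_eq_zero hQp' (hqR i)
  have hQd : twoNorm τ (1 - Q) ≤ Fintype.card ι * (δ / c) := by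
    rw [← hp.sum_eq, hQ, ← Finset.sum_sub_distrib]
    refine (hτ.twoNorm_sum_le _ _).trans ((Finset.sum_le_sum fun i _ => ?_).trans
      (b := ∑ i : ι, δ / c) (by simp))
    rw [twoNorm_sub_comm]
    exact hqd i
  refine ⟨n, Function.update q j (q j + (1 - Q)), ⟨fun i => ?_, fun i l hil => ?_, ?_⟩,
    fun i => ?_⟩
  · by_cases h : i = j
    · subst h
      rw [Function.update_self]
      exact (hqp i).add hQp' (hqR i)
    · rw [Function.update_of_ne h]; exact hqp i
  · by_cases h : i = j
    · subst h
      rw [Function.update_self, Function.update_of_ne hil.symm, add_mul, hqo' i l hil, hRq, zero_add]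
    · rw [Function.update_of_ne h]
      by_cases h' : l = j
      · subst h'
        rw [Function.update_self, mul_add, hqo' i l hil, hqR, zero_add]
      · rw [Function.update_of_ne h', hqo' i l hil]
  · rw [Finset.sum_update_of_mem (Finset.mem_univ _)]
    have : ∑ x ∈ Finset.univ \ {j}, q x = Q - q j := by
      rw [hQ, eq_sub_iff_add_eq, ← Finset.sum_singleton q j,
        Finset.sum_sdiff (Finset.subset_univ _)]
    rw [this]; abel
  · by_cases h : i = j
    · subst h
      rw [Function.update_self]
      refine ⟨add_mem (hqB i) (sub_mem (one_mem _) (sum_mem fun l _ => hqB l)), ?_⟩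
      have e1 : q i + (1 - Q) - p i = (q i - p i) + (1 - Q) := by abel
      rw [e1]
      refine (hτ.twoNorm_add_le _ _).trans ?_
      calc _ ≤ δ / c + Fintype.card ι * (δ / c) := add_le_add (hqd i) hQd
        _ = c * (δ / c) := by rw [hc]; ring
        _ = δ := mul_div_cancel₀ _ hc0.ne'
        _ ≤ δ := le_rfl
    · rw [Function.update_of_ne h]
      refine ⟨hqB i, (hqd i).trans (div_le_self hδ.le ?_)⟩
      have : (0 : ℝ) ≤ Fintype.card ι := Nat.cast_nonneg _
      linarith

end IsFaithfulTracialState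
end Approximation

section Iteration

variable {A : Type*} [CStarAlgebra A] {τ : A →ₗ[ℂ] ℂ} {ι : Type*} [Fintype ι]

/-- Completeness of the closed unit ball for the norm `twoNorm τ`, with limits taken in the whole
algebra. -/
def IsTwoNormComplete (τ : A →ₗ[ℂ] ℂ) : Prop :=
  ∀ x : ℕ → A, (∀ n, ‖x n‖ ≤ 1) →
    (∀ δ > 0, ∃ N, ∀ m ≥ N, ∀ n ≥ N, twoNorm τ (x m - x n) ≤ δ) →
    ∃ y, Tendsto (fun n => twoNorm τ (x n - y)) atTop (𝓝 0)

theorem IsDiagonal.of_refinement {S S' : Finset A} {q : A} (hq : IsDiagonal S q)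
    (hS : ∀ f ∈ S', ∃ e ∈ S, e * f = f) : IsDiagonal S' q := by
  intro f hf
  obtain ⟨e, he, hef⟩ := hS f hf
  rcases hq e he with h | h
  · left; rw [← hef, ← mul_assoc, h]
  · right; rw [← hef, ← mul_assoc, h, zero_mul]

namespace IsFaithfulTracialState
variable (hτ : IsFaithfulTracialState τ)
include hτ

theorem twoNorm_conj_sub_le {u v p q : A} (hu : u ∈ unitary A) (hv : v ∈ unitary A)
    (hp : ‖p‖ ≤ 1) (hq : ‖q‖ ≤ 1) :
    twoNorm τ (u * p * star u - v * q * star v) ≤ 2 * twoNorm τ (u - v) + twoNorm τ (p - q) := by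
  have hu' := norm_le_one_of_mem_unitary hu
  have hv' := norm_le_one_of_mem_unitary hv
  have hus : ‖star u‖ ≤ 1 := by rwa [norm_star]
  have e1 : u * p * star u - v * q * star v =
      (u - v) * p * star u + (v * (p - q) * star u + v * (q * star (u - v))) := by
    simp only [mul_sub, sub_mul, star_sub, mul_assoc]; abel
  rw [e1]
  have h1 := hτ.twoNorm_add_le ((u - v) * p * star u)
    (v * (p - q) * star u + v * (q * star (u - v)))
  have h2 := hτ.twoNorm_add_le (v * (p - q) * star u) (v * (q * star (u - v)))
  have h3 := hτ.twoNorm_mul_le_of_norm_le_one' hus ((u - v) * p)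
  have h4 := hτ.twoNorm_mul_le_of_norm_le_one' hp (u - v)
  have h5 := hτ.twoNorm_mul_le_of_norm_le_one' hus (v * (p - q))
  have h6 := hτ.twoNorm_mul_le_of_norm_le_one hv' (p - q)
  have h7 := hτ.twoNorm_mul_le_of_norm_le_one hv' (q * star (u - v))
  have h8 := hτ.twoNorm_mul_le_of_norm_le_one hq (star (u - v))
  rw [hτ.twoNorm_star] at h8
  linarith

theorem mem_unitary_of_tendsto {x : ℕ → A} {y : A} (hx : ∀ n, x n ∈ unitary A)
    (hy : Tendsto (fun n => twoNorm τ (x n - y)) atTop (𝓝 0)) : y ∈ unitary A := by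
  have hlim : ∀ c : ℝ, Tendsto (fun n => c * twoNorm τ (x n - y)) atTop (𝓝 0) := fun c => by
    simpa using hy.const_mul c
  have key : ∀ z : A, (∀ n, twoNorm τ (z - 1) ≤ (‖y‖ + 1) * twoNorm τ (x n - y)) → z = 1 :=
    fun z hz => hτ.eq_of_twoNorm_sub_le fun δ hδ => by
      obtain ⟨n, hn⟩ := ((hlim (‖y‖ + 1)).eventually (gt_mem_nhds hδ)).exists
      exact (hz n).trans hn.le
  rw [Unitary.mem_iff]
  constructor
  · refine key _ fun n => ?_
    have e1 : star y * y - 1 = star (y - x n) * y + star (x n) * (y - x n) := by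
      rw [star_sub, sub_mul, mul_sub, Unitary.star_mul_self_of_mem (hx n)]; abel
    rw [e1]
    have h1 := hτ.twoNorm_add_le (star (y - x n) * y) (star (x n) * (y - x n))
    have h2 := hτ.twoNorm_mul_le_right (star (y - x n)) y
    have h3 := hτ.twoNorm_mul_le_of_norm_le_one
      (norm_le_one_of_mem_unitary (Unitary.star_mem (hx n))) (y - x n)
    rw [hτ.twoNorm_star] at h2
    rw [twoNorm_sub_comm y (x n)] at h2 h3
    linarith
  · refine key _ fun n => ?_
    have e1 : y * star y - 1 = y * star (y - x n) + (y - x n) * star (x n) := by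
      rw [star_sub, sub_mul, mul_sub, Unitary.mul_star_self_of_mem (hx n)]; abel
    rw [e1]
    have h1 := hτ.twoNorm_add_le (y * star (y - x n)) ((y - x n) * star (x n))
    have h2 := hτ.twoNorm_mul_le_left y (star (y - x n))
    have h3 := hτ.twoNorm_mul_le_of_norm_le_one'
      (norm_le_one_of_mem_unitary (Unitary.star_mem (hx n))) (y - x n)
    rw [hτ.twoNorm_star] at h2
    rw [twoNorm_sub_comm y (x n)] at h2 h3
    linarith

theorem exists_tendsto_of_geometric (hcomp : IsTwoNormComplete τ) {x : ℕ → A}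
    (hx : ∀ n, ‖x n‖ ≤ 1) {C : ℝ} (hC : 0 < C)
    (hxC : ∀ n, twoNorm τ (x (n + 1) - x n) ≤ C * (1 / 2) ^ n) :
    ∃ y, Tendsto (fun n => twoNorm τ (x n - y)) atTop (𝓝 0) := by
  have h1 : ∀ n k, twoNorm τ (x (n + k) - x n) ≤ 2 * C * ((1 / 2) ^ n - (1 / 2) ^ (n + k)) := by
    intro n k
    induction k with
    | zero => simp [twoNorm_zero]
    | succ k ih =>
      have h2 := hτ.twoNorm_sub_le (x (n + k + 1)) (x (n + k)) (x n)
      have h3 := hxC (n + k)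
      rw [← add_assoc, pow_succ]
      linarith
  have h2 : ∀ N, ∀ m ≥ N, twoNorm τ (x m - x N) ≤ 2 * C * (1 / 2) ^ N := fun N m hm => by
    obtain ⟨k, rfl⟩ := Nat.exists_eq_add_of_le hm
    refine (h1 N k).trans (mul_le_mul_of_nonneg_left ?_ (by positivity))
    have : (0 : ℝ) ≤ (1 / 2) ^ (N + k) := by positivity
    linarith
  refine hcomp x hx fun δ hδ => ?_
  have h3 : Tendsto (fun N : ℕ => 4 * C * (1 / 2 : ℝ) ^ N) atTop (𝓝 0) := by
    simpa using (tendsto_pow_atTop_nhds_zero_of_lt_one (r := (1 / 2 : ℝ)) (by norm_num)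
      (by norm_num)).const_mul (4 * C)
  obtain ⟨N, hN⟩ := (h3.eventually (gt_mem_nhds hδ)).exists
  refine ⟨N, fun m hm n hn => ?_⟩
  have h4 := hτ.twoNorm_sub_le (x m) (x N) (x n)
  have h5 := h2 N m hm
  have h6 := h2 N n hn
  rw [twoNorm_sub_comm] at h6
  linarith

/-- A partition of unity can be rotated by a unitary so that it becomes diagonal, in the limit,
with respect to a compatible system of frames of the approximating algebras. -/
theorem exists_frames_and_unitary {B : ℕ → StarSubalgebra ℂ A} (hmono : Monotone B)
    (hfin : ∀ n, FiniteDimensional ℂ (B n)) (hcomp : IsTwoNormComplete τ)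
    (hdense : ∀ p, IsStarProjection p → ∀ δ > 0, ∃ n, ∃ k ∈ B n, IsSelfAdjoint k ∧ ‖k‖ ≤ 1 ∧
      twoNorm τ (k - p) ≤ δ) {p : ι → A} (hp : IsPVM p) :
    ∃ (φ : ℕ → ℕ) (S : ℕ → Finset A) (u : A), Monotone φ ∧ (∀ n, n ≤ φ n) ∧
      (∀ n, IsDecomposition (B (φ n)) 1 (S n)) ∧
      (∀ n, ∀ f ∈ S (n + 1), ∃ e ∈ S n, e * f = f) ∧
      (∀ n v, IsNormalizing (B (φ n)) (S n) v → IsNormalizing (B (φ (n + 1))) (S (n + 1)) v) ∧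
      u ∈ unitary A ∧
      ∃ r : ℕ → ι → A, (∀ n i, IsStarProjection (r n i) ∧ IsDiagonal (S n) (r n i)) ∧
        ∀ i, Tendsto (fun n => twoNorm τ (r n i - u * p i * star u)) atTop (𝓝 0) := by
  classical
  have hne : Nonempty ι := by
    by_contra h
    rw [not_nonempty_iff] at h
    have h2 := hτ.map_one
    rw [← hp.sum_eq] at h2
    simp at h2
  obtain ⟨j⟩ := hne
  choose ν P hP hPB using fun m : ℕ => hτ.exists_isPVM_near hmono hfin hdense hp
    (δ := (1 / 2) ^ m) (by positivity)
  set φ : ℕ → ℕ := fun m => m + ∑ l ∈ Finset.range (m + 1), ν l with hφ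
  have hφm : Monotone φ := fun a b hab => add_le_add hab
    (Finset.sum_le_sum_of_subset (Finset.range_mono (Nat.add_le_add_right hab 1)))
  have hPφ : ∀ m i, P m i ∈ B (φ m) := fun m i =>
    hmono ((Finset.single_le_sum (fun _ _ => Nat.zero_le _)
      (Finset.self_mem_range_succ m)).trans (Nat.le_add_left _ _)) (hPB m i).1
  have hfin' : ∀ m, FiniteDimensional ℂ (B (φ m)) := fun m => hfin _
  let T : ℕ → Type _ := fun n => {x : Finset A × A // IsDecomposition (B (φ n)) 1 x.1 ∧
    x.2 ∈ B (φ n) ∧ x.2 ∈ unitary A ∧ ∀ i, IsDiagonal x.1 (x.2 * P n i * star x.2)}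
  set K : ℝ := (2 * (Fintype.card ι * (1 + Fintype.card ι)) + 1) with hK
  have hK0 : 0 < K := by positivity
  have h0 : Nonempty (T 0) := by
    obtain ⟨S, hS⟩ := exists_isDecomposition (B := B (φ 0)) (e := 1) (one_mem _)
      (IsStarProjection.one A)
    have hq : IsPVM (fun i : ι => if i = j then (1 : A) else 0) := by
      refine ⟨fun i => ?_, fun i l hil => ?_, by simp⟩
      · split_ifs
        exacts [IsStarProjection.one A, IsStarProjection.zero A]
      · by_cases h : i = j
        · have : l ≠ j := fun h' => hil (h.trans h'.symm)
          simp [this]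
        · simp [h]
    obtain ⟨w, hwB, hw, hwd, -⟩ := hτ.exists_unitary_isDiagonal hS (hP 0) (hPφ 0) hq
      (fun i e _ => by
        by_cases h : i = j
        · simp [h]
        · simp [h])
    exact ⟨⟨(S, w), hS, hwB, hw, hwd⟩⟩
  have hstep : ∀ n (x : T n), ∃ y : T (n + 1), (∀ f ∈ y.1.1, ∃ e ∈ x.1.1, e * f = f) ∧
      (∀ v, IsNormalizing (B (φ n)) x.1.1 v → IsNormalizing (B (φ (n + 1))) y.1.1 v) ∧
      twoNorm τ (y.1.2 - x.1.2) ≤ K * 2 * (1 / 2) ^ n := by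
    rintro n ⟨⟨S, u⟩, hS, huB, hu, hud⟩
    have hBB : B (φ n) ≤ B (φ (n + 1)) := hmono (hφm n.le_succ)
    obtain ⟨S', hS', hSS', hnorm⟩ := hS.exists_refinement hBB
    have hclose : ∀ i, twoNorm τ (u * P (n + 1) i * star u - u * P n i * star u) ≤
        2 * (1 / 2) ^ n := fun i => by
      refine (hτ.twoNorm_conj_sub_le hu hu ((hP _).isStarProjection i).norm_le_one'
        ((hP _).isStarProjection i).norm_le_one').trans ?_
      have h1 := hτ.twoNorm_sub_le (P (n + 1) i) (p i) (P n i)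
      have h2 := (hPB (n + 1) i).2
      have h3 := (hPB n i).2
      have h4 : (0 : ℝ) ≤ (1 / 2) ^ n := by positivity
      rw [twoNorm_sub_comm] at h3
      rw [pow_succ] at h2
      rw [sub_self, twoNorm_zero]
      linarith
    obtain ⟨w, hwB, hw, hwd, hw1⟩ := hτ.exists_unitary_isDiagonal_near hS'
      ((hP (n + 1)).conj hu) (fun i => mul_mem (mul_mem (hBB huB) (hPφ _ i)) (star_mem (hBB huB)))
      ((hP n).conj hu) (fun i => (hud i).of_refinement hSS') (by positivity) hclose
    refine ⟨⟨(S', w * u), hS', mul_mem hwB (hBB huB), mul_mem hw hu, fun i => ?_⟩, hSS', hnorm, ?_⟩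
    · rw [← conj_conj]; exact hwd i
    · have e1 : w * u - u = (w - 1) * u := by rw [sub_mul, one_mul]
      change twoNorm τ (w * u - u) ≤ _
      rw [e1, mul_assoc K]
      exact (hτ.twoNorm_mul_le_of_norm_le_one' (norm_le_one_of_mem_unitary hu) _).trans hw1
  obtain ⟨x0⟩ := h0
  choose next hnext using hstep
  let seq : ∀ n, T n := fun n => Nat.rec x0 next n
  have hu : ∀ n, (seq n).1.2 ∈ unitary A := fun n => (seq n).2.2.2.1
  obtain ⟨u, hulim⟩ := hτ.exists_tendsto_of_geometric hcomp (x := fun n => (seq n).1.2)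
    (fun n => norm_le_one_of_mem_unitary (hu n)) (C := K * 2) (by positivity)
    (fun n => (hnext n (seq n)).2.2)
  have huu := hτ.mem_unitary_of_tendsto hu hulim
  refine ⟨φ, fun n => (seq n).1.1, u, hφm, fun n => Nat.le_add_right _ _, fun n => (seq n).2.1,
    fun n => (hnext n (seq n)).1,
    fun n => (hnext n (seq n)).2.1, huu,
    fun n i => (seq n).1.2 * P n i * star (seq n).1.2,
    fun n i => ⟨((hP n).isStarProjection i).conj (hu n), (seq n).2.2.2.2 i⟩, fun i => ?_⟩
  have hlim : Tendsto (fun n => 2 * twoNorm τ ((seq n).1.2 - u) + (1 / 2 : ℝ) ^ n) atTop (𝓝 0) := by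
    simpa using (hulim.const_mul 2).add (tendsto_pow_atTop_nhds_zero_of_lt_one
      (r := (1 / 2 : ℝ)) (by norm_num) (by norm_num))
  refine squeeze_zero (fun _ => twoNorm_nonneg _) (fun n => ?_) hlim
  refine (hτ.twoNorm_conj_sub_le (hu n) huu ((hP _).isStarProjection i).norm_le_one'
    (hp.isStarProjection i).norm_le_one').trans ?_
  have := (hPB n i).2
  linarith

end IsFaithfulTracialState
end Iteration

section FiniteDimensional

theorem Submonoid.finite_closure_of_commute_of_isIdempotentElem {R : Type*} [Monoid R] {X : Set R}
    (hX : X.Finite) (hcomm : ∀ x ∈ X, ∀ y ∈ X, Commute x y) (hidem : ∀ x ∈ X, IsIdempotentElem x) :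
    (Submonoid.closure X : Set R).Finite := by
  induction X, hX using Set.Finite.induction_on with
  | empty => simp
  | @insert a X _ _ ih =>
    have ih' := ih (fun x hx y hy => hcomm x (.inr hx) y (.inr hy)) fun x hx => hidem x (.inr hx)
    have hac : ∀ z ∈ Submonoid.closure X, Commute a z := fun z hz => by
      induction hz using Submonoid.closure_induction with
      | mem x hx => exact hcomm a (.inl rfl) x (.inr hx)
      | one => exact Commute.one_right a
      | mul x y _ _ hx hy => exact hx.mul_right hy
    have haa : a * a = a := hidem a (.inl rfl)
    refine (ih'.union (ih'.image (a * ·))).subset ?_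
    intro z hz
    induction hz using Submonoid.closure_induction with
    | mem x hx =>
      rcases hx with rfl | hx
      · exact .inr ⟨1, one_mem _, mul_one _⟩
      · exact .inl (Submonoid.subset_closure hx)
    | one => exact .inl (one_mem _)
    | mul x y _ _ hx hy =>
      rcases hx with hx | ⟨x, hx, rfl⟩ <;> rcases hy with hy | ⟨y, hy, rfl⟩
      · exact .inl (mul_mem hx hy)
      · refine .inr ⟨x * y, mul_mem hx hy, ?_⟩
        change a * (x * y) = x * (a * y)
        rw [← mul_assoc, (hac x hx).eq, mul_assoc]
      · exact .inr ⟨x * y, mul_mem hx hy, (mul_assoc _ _ _).symm⟩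
      · refine .inr ⟨x * y, mul_mem hx hy, ?_⟩
        change a * (x * y) = a * x * (a * y)
        rw [mul_assoc a x, ← mul_assoc x a, ← (hac x hx).eq, mul_assoc a x, ← mul_assoc a a, haa]

variable {A : Type*} [CStarAlgebra A] {τ : A →ₗ[ℂ] ℂ} {ι : Type*} [Fintype ι]
  {B : StarSubalgebra ℂ A} {S : Finset A}

theorem IsDecomposition.eq_of_mul_eq (hS : IsDecomposition B 1 S) {x y : A}
    (h : ∀ e ∈ S, x * e = y * e) : x = y := by
  rw [← mul_one x, ← mul_one y, ← hS.sum_eq, Finset.mul_sum, Finset.mul_sum]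
  exact Finset.sum_congr rfl h

theorem IsDiagonal.commute (hS : IsDecomposition B 1 S) {x y : A} (hx : IsDiagonal S x)
    (hy : IsDiagonal S y) : Commute x y := by
  refine hS.eq_of_mul_eq fun e he => ?_
  rcases hx e he with h | h <;> rcases hy e he with h' | h' <;>
    simp [mul_assoc, h, h']

theorem IsDiagonal.conj {v x : A} (hv : IsNormalizing B S v) (hx : IsDiagonal S x) :
    IsDiagonal S (v * x * star v) := by
  intro e he
  have h1 : v * star v = 1 := Unitary.mul_star_self_of_mem hv.mem_unitary
  have e1 : v * x * star v * e = v * (x * (star v * e * v)) * star v := by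
    simp only [mul_assoc, h1, mul_one]
  have e2 : e = v * (star v * e * v) * star v := by
    simp only [mul_assoc, h1, mul_one]
    rw [← mul_assoc, h1, one_mul]
  rcases hx _ (hv.conj_mem' e he) with h | h
  · left; rw [e1, h, ← e2]
  · right; rw [e1, h, mul_zero, zero_mul]

theorem IsDecomposition.isDiagonal (hS : IsDecomposition B 1 S) {e : A} (he : e ∈ S) :
    IsDiagonal S e := by
  intro f hf
  by_cases h : e = f
  · left; rw [h]; exact (hS.minimal f hf).isStarProjection.isIdempotentElem.eq
  · exact .inr (hS.orth e he f hf h)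

/-- An element commuting with a frame is fixed by the unitaries which fix the frame. -/
theorem IsDecomposition.conj_eq_of_commute (hS : IsDecomposition B 1 S) {w x : A} (hwB : w ∈ B)
    (hw : w ∈ unitary A) (hwS : ∀ e ∈ S, w * e * star w = e) (hx : ∀ e ∈ S, Commute x e) :
    w * x * star w = x := by
  have hsum : x = ∑ e ∈ S, x * e := by rw [← Finset.mul_sum, hS.sum_eq, mul_one]
  rw [hsum, Finset.mul_sum, Finset.sum_mul]
  refine Finset.sum_congr rfl fun e he => ?_
  have hee := (hS.minimal e he).isStarProjection.isIdempotentElem.eq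
  refine (hS.minimal e he).conj_eq_of_conj_eq hwB hw (hwS e he) ?_ ?_
  · rw [(hx e he).eq, ← mul_assoc, hee]
  · rw [mul_assoc, hee]

theorem IsDecomposition.finite_conj (hS : IsDecomposition B 1 S) {q : ι → A}
    (hq : ∀ i, ∀ e ∈ S, Commute (q i) e) :
    {x | ∃ v i, IsNormalizing B S v ∧ x = v * q i * star v}.Finite := by
  classical
  have key : ∀ v v', IsNormalizing B S v → IsNormalizing B S v' →
      (∀ e ∈ S, v * e * star v = v' * e * star v') → ∀ i, v * q i * star v = v' * q i * star v' := by
    intro v v' hv hv' h i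
    have hw := hv.star.mul hv'
    have h1 : star v * v = 1 := Unitary.star_mul_self_of_mem hv.mem_unitary
    have h2 : v * star v = 1 := Unitary.mul_star_self_of_mem hv.mem_unitary
    have h3 : star v * v' * q i * star (star v * v') = q i := by
      refine hS.conj_eq_of_commute hw.mem hw.mem_unitary (fun e he => ?_) (hq i)
      rw [← conj_conj, ← h e he, conj_conj, h1]; simp
    conv_lhs => rw [← h3, conj_conj, ← mul_assoc, h2, one_mul]
  let f : (S → S) × ι → A := fun g =>
    if h : ∃ v, IsNormalizing B S v ∧ ∀ e : S, v * e * star v = g.1 e then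
      h.choose * q g.2 * star h.choose else 0
  refine (Set.finite_range f).subset ?_
  rintro x ⟨v, i, hv, rfl⟩
  refine ⟨(fun e => ⟨v * e * star v, hv.conj_mem e e.2⟩, i), ?_⟩
  have h : ∃ v', IsNormalizing B S v' ∧ ∀ e : S, v' * e * star v' = v * e * star v :=
    ⟨v, hv, fun _ => rfl⟩
  change (if h : ∃ v', IsNormalizing B S v' ∧ ∀ e : S, v' * e * star v' = v * e * star v then
      h.choose * q i * star h.choose else 0) = _
  rw [dif_pos h]
  exact key _ _ h.choose_spec.1 hv (fun e he => h.choose_spec.2 ⟨e, he⟩) i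

/-- Adjoining to a finite-dimensional algebra a family of projections whose translates under the
normalizer of a frame commute gives a finite-dimensional algebra. -/
theorem IsDecomposition.finiteDimensional_adjoin [FiniteDimensional ℂ B]
    (hS : IsDecomposition B 1 S) {q : ι → A} (hqp : ∀ i, IsStarProjection (q i))
    (hq : ∀ i, ∀ e ∈ S, Commute (q i) e)
    (hqq : ∀ i j v w, IsNormalizing B S v → IsNormalizing B S w →
      Commute (v * q i * star v) (w * q j * star w)) :
    FiniteDimensional ℂ (StarAlgebra.adjoin ℂ ({v | IsNormalizing B S v} ∪ Set.range q)) := by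
  set X := {x | ∃ v i, IsNormalizing B S v ∧ x = v * q i * star v} with hXdef
  have hX : X.Finite := hS.finite_conj hq
  set F := Submonoid.closure X with hF
  have hFfin : (F : Set A).Finite := by
    refine Submonoid.finite_closure_of_commute_of_isIdempotentElem hX ?_ ?_
    · rintro _ ⟨v, i, hv, rfl⟩ _ ⟨w, j, hw, rfl⟩
      exact hqq i j v w hv hw
    · rintro _ ⟨v, i, hv, rfl⟩
      exact ((hqp i).conj hv.mem_unitary).isIdempotentElem
  have hconj : ∀ v, IsNormalizing B S v → ∀ f ∈ F, star v * f * v ∈ F := by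
    intro v hv f hf
    have h1 : star v * v = 1 := Unitary.star_mul_self_of_mem hv.mem_unitary
    induction hf using Submonoid.closure_induction with
    | mem x hx =>
      obtain ⟨w, i, hw, rfl⟩ := hx
      refine Submonoid.subset_closure ⟨star v * w, i, hv.star.mul hw, ?_⟩
      rw [← conj_conj, star_star]
    | one => rw [mul_one, h1]; exact one_mem _
    | mul x y _ _ hx hy =>
      have := mul_mem hx hy
      have h2 := conj_mul_conj (Unitary.star_mem hv.mem_unitary) x y
      rw [star_star] at h2
      rwa [h2] at this
  let W : Submodule ℂ A := ⨆ f : hFfin.toFinset,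
    (Subalgebra.toSubmodule B.toSubalgebra).map (LinearMap.mulRight ℂ (f : A))
  have hfd : FiniteDimensional ℂ (Subalgebra.toSubmodule B.toSubalgebra) :=
    inferInstanceAs (FiniteDimensional ℂ B)
  have hW : FiniteDimensional ℂ W := inferInstance
  have hvf : ∀ v, IsNormalizing B S v → ∀ f ∈ F, v * f ∈ W := fun v hv f hf =>
    (le_iSup (fun f : hFfin.toFinset =>
      (Subalgebra.toSubmodule B.toSubalgebra).map (LinearMap.mulRight ℂ (f : A)))
      ⟨f, hFfin.mem_toFinset.2 hf⟩) ⟨v, hv.mem, rfl⟩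
  have hstar : star ({v | IsNormalizing B S v} ∪ Set.range q) =
      {v | IsNormalizing B S v} ∪ Set.range q := by
    refine Set.Subset.antisymm ?_ ?_ <;> rintro x (hx | ⟨i, hi⟩)
    · left; simpa using IsNormalizing.star hx
    · right; exact ⟨i, by rw [← star_star x, ← hi, (hqp i).isSelfAdjoint.star_eq]⟩
    · left; exact IsNormalizing.star hx
    · right; exact ⟨i, by rw [← hi, (hqp i).isSelfAdjoint.star_eq]⟩
  have hle : Subalgebra.toSubmodule
      (StarAlgebra.adjoin ℂ ({v | IsNormalizing B S v} ∪ Set.range q)).toSubalgebra ≤ W := by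
    rw [StarAlgebra.adjoin_toSubalgebra, hstar, Set.union_self, Algebra.adjoin_eq_span,
      Submodule.span_le]
    intro x hx
    suffices ∃ v f, IsNormalizing B S v ∧ f ∈ F ∧ x = v * f by
      obtain ⟨v, f, hv, hf, rfl⟩ := this
      exact hvf v hv f hf
    induction hx using Submonoid.closure_induction with
    | mem x hx =>
      rcases hx with hx | ⟨i, rfl⟩
      · exact ⟨x, 1, hx, one_mem _, (mul_one x).symm⟩
      · exact ⟨1, q i, IsNormalizing.one,
          Submonoid.subset_closure ⟨1, i, IsNormalizing.one, by simp⟩, (one_mul _).symm⟩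
    | one => exact ⟨1, 1, IsNormalizing.one, one_mem _, (mul_one 1).symm⟩
    | mul x y _ _ hx hy =>
      obtain ⟨v, f, hv, hf, rfl⟩ := hx
      obtain ⟨w, g, hw, hg, rfl⟩ := hy
      refine ⟨v * w, star w * f * w * g, hv.mul hw, mul_mem (hconj w hw f hf) hg, ?_⟩
      have h2 : w * star w = 1 := Unitary.mul_star_self_of_mem hw.mem_unitary
      calc v * f * (w * g) = v * (1 * f * w * g) := by simp only [one_mul, mul_assoc]
        _ = _ := by rw [← h2]; simp only [mul_assoc]
  exact Submodule.finiteDimensional_of_le hle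

namespace IsFaithfulTracialState
variable (hτ : IsFaithfulTracialState τ)
include hτ

theorem commute_of_tendsto {r s : ℕ → A} {x y : A} (hr : ∀ n, ‖r n‖ ≤ 1)
    (hrs : ∀ᶠ n in atTop, Commute (r n) (s n))
    (hx : Tendsto (fun n => twoNorm τ (r n - x)) atTop (𝓝 0))
    (hy : Tendsto (fun n => twoNorm τ (s n - y)) atTop (𝓝 0)) : Commute x y := by
  refine hτ.eq_of_twoNorm_sub_le fun δ hδ => ?_
  have hlim : Tendsto (fun n => (2 * ‖y‖) * twoNorm τ (r n - x) + 2 * twoNorm τ (s n - y))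
      atTop (𝓝 0) := by
    simpa using (hx.const_mul (2 * ‖y‖)).add (hy.const_mul 2)
  obtain ⟨n, hn, hc⟩ := ((hlim.eventually (gt_mem_nhds hδ)).and hrs).exists
  refine le_trans ?_ hn.le
  have e1 : x * y - y * x = ((x - r n) * y + r n * (y - s n)) +
      ((s n - y) * r n + y * (r n - x)) := by
    have := hc.eq
    simp only [mul_sub, sub_mul]
    rw [this]; abel
  rw [e1]
  have h1 := hτ.twoNorm_add_le ((x - r n) * y + r n * (y - s n)) ((s n - y) * r n + y * (r n - x))
  have h2 := hτ.twoNorm_add_le ((x - r n) * y) (r n * (y - s n))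
  have h3 := hτ.twoNorm_add_le ((s n - y) * r n) (y * (r n - x))
  have h4 := hτ.twoNorm_mul_le_right (x - r n) y
  have h5 := hτ.twoNorm_mul_le_of_norm_le_one (hr n) (y - s n)
  have h6 := hτ.twoNorm_mul_le_of_norm_le_one' (hr n) (s n - y)
  have h7 := hτ.twoNorm_mul_le_left y (r n - x)
  rw [twoNorm_sub_comm x] at h4
  rw [twoNorm_sub_comm y] at h5
  linarith

/-- A partition of unity is unitarily equivalent to one which, together with any of the
approximating algebras, generates a finite-dimensional algebra. -/
theorem exists_unitary_and_chain {B : ℕ → StarSubalgebra ℂ A} (hmono : Monotone B)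
    (hfin : ∀ n, FiniteDimensional ℂ (B n)) (hcomp : IsTwoNormComplete τ)
    (hdense : ∀ p, IsStarProjection p → ∀ δ > 0, ∃ n, ∃ k ∈ B n, IsSelfAdjoint k ∧ ‖k‖ ≤ 1 ∧
      twoNorm τ (k - p) ≤ δ) {p : ι → A} (hp : IsPVM p) :
    ∃ u ∈ unitary A, ∃ C : ℕ → StarSubalgebra ℂ A, Monotone C ∧
      (∀ n, FiniteDimensional ℂ (C n)) ∧ (∀ n, B n ≤ C n) ∧
      ∀ n i, u * p i * star u ∈ C n := by
  obtain ⟨φ, S, u, hφ, hnφ, hS, href, hnorm, hu, r, hr, hlim⟩ :=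
    hτ.exists_frames_and_unitary hmono hfin hcomp hdense hp
  have hnorm' : ∀ n m, n ≤ m → ∀ v, IsNormalizing (B (φ n)) (S n) v →
      IsNormalizing (B (φ m)) (S m) v := fun n m hnm v hv => by
    induction m, hnm using Nat.le_induction with
    | base => exact hv
    | succ m _ ih => exact hnorm m v ih
  have hdiag : ∀ n m, n ≤ m → ∀ x, IsDiagonal (S n) x → IsDiagonal (S m) x :=
    fun n m hnm x hx => by
      induction m, hnm using Nat.le_induction with
      | base => exact hx
      | succ m _ ih => exact ih.of_refinement (href m)
  have hconj : ∀ v ∈ unitary A, ∀ i, Tendsto (fun n => twoNorm τ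
      (v * r n i * star v - v * (u * p i * star u) * star v)) atTop (𝓝 0) := fun v hv i => by
    refine squeeze_zero (fun _ => twoNorm_nonneg _) (fun n => ?_) (hlim i)
    refine (hτ.twoNorm_conj_sub_le hv hv (hr n i).1.norm_le_one'
      ((hp.isStarProjection i).conj hu).norm_le_one').trans ?_
    rw [sub_self, twoNorm_zero, mul_zero, zero_add]
  refine ⟨u, hu, fun n => StarAlgebra.adjoin ℂ ({v | IsNormalizing (B (φ n)) (S n) v} ∪
    Set.range fun i => u * p i * star u), ?_, fun n => ?_, fun n b hb => ?_, fun n i => ?_⟩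
  · intro n m hnm
    exact StarAlgebra.adjoin_mono (Set.union_subset_union_left _ (hnorm' n m hnm))
  · have := hfin (φ n)
    refine (hS n).finiteDimensional_adjoin (fun i => (hp.isStarProjection i).conj hu)
      (fun i e he => ?_) fun i j v w hv hw => ?_
    · refine hτ.commute_of_tendsto (r := fun m => r m i) (s := fun _ => e)
        (fun m => (hr m i).1.norm_le_one')
        ?_ (hlim i)
        (by simp [twoNorm_zero])
      filter_upwards [eventually_ge_atTop n] with m hm
      exact (hr m i).2.commute (hS m) (hdiag n m hm e ((hS n).isDiagonal he))
    · refine hτ.commute_of_tendsto (r := fun m => v * r m i * star v)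
        (s := fun m => w * r m j * star w)
        (fun m => ((hr m i).1.conj hv.mem_unitary).norm_le_one') ?_
        (hconj v hv.mem_unitary i) (hconj w hw.mem_unitary j)
      filter_upwards [eventually_ge_atTop n] with m hm
      exact ((hr m i).2.conj (hnorm' n m hm v hv)).commute (hS m)
        ((hr m j).2.conj (hnorm' n m hm w hw))
  · have h1 := (hS n).mem_span_isNormalizing hτ (hmono (hnφ n) hb)
    have h2 : Submodule.span ℂ {v | IsNormalizing (B (φ n)) (S n) v} ≤ Subalgebra.toSubmodule
        (StarAlgebra.adjoin ℂ ({v | IsNormalizing (B (φ n)) (S n) v} ∪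
          Set.range fun i => u * p i * star u)).toSubalgebra :=
      Submodule.span_le.2 fun v hv => StarAlgebra.subset_adjoin _ _ (.inl hv)
    exact h2 h1
  · exact StarAlgebra.subset_adjoin _ _ (.inr ⟨i, rfl⟩)

end IsFaithfulTracialState
end FiniteDimensional

section SmallTrace

variable {A : Type*} [CStarAlgebra A] {τ : A →ₗ[ℂ] ℂ}

namespace IsFaithfulTracialState
variable (hτ : IsFaithfulTracialState τ)
include hτ

theorem exists_minimal_re_map_ge {B C : StarSubalgebra ℂ A} [FiniteDimensional ℂ B] (hBC : B ≤ C)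
    {g f : A} (hgB : g ∈ B) (hg : IsStarProjection g) (hf : IsMinimalProjection C f)
    (hgf : g * f ≠ 0) :
    ∃ h, IsMinimalProjection B h ∧ g * h = h ∧ (τ f).re ≤ (τ h).re := by
  obtain ⟨R, hR⟩ := exists_isDecomposition hgB hg
  obtain ⟨h, hh, hhf⟩ : ∃ h ∈ R, h * f ≠ 0 := by
    by_contra! hcon
    refine hgf ?_
    rw [← hR.sum_eq, Finset.sum_mul]
    exact Finset.sum_eq_zero hcon
  exact ⟨h, hR.minimal h hh, hR.mul_eq hh,
    hτ.re_map_le_of_mul_ne_zero hf (hBC (hR.minimal h hh).mem) (hR.minimal h hh).isStarProjection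
      hhf⟩

theorem re_map_lt_of_le {B C : StarSubalgebra ℂ A} [FiniteDimensional ℂ B] (hBC : B ≤ C) {ε : ℝ}
    (hB : ∀ e, IsMinimalProjection B e → (τ e).re < ε) {f : A} (hf : IsMinimalProjection C f) :
    (τ f).re < ε := by
  obtain ⟨h, hh, -, hle⟩ := hτ.exists_minimal_re_map_ge hBC (one_mem B) (IsStarProjection.one A) hf
    (by rw [one_mul]; exact hf.ne_zero)
  exact hle.trans_lt (hB h hh)

theorem exists_heavy_subprojection {B : ℕ → StarSubalgebra ℂ A} (hmono : Monotone B)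
    (hfin : ∀ n, FiniteDimensional ℂ (B n)) {ε : ℝ} {n : ℕ} {e : A} (heB : e ∈ B n)
    (he : IsStarProjection e)
    (heavy : ∀ m ≥ n, ∃ f, IsMinimalProjection (B m) f ∧ e * f = f ∧ ε ≤ (τ f).re) :
    ∃ g, IsMinimalProjection (B n) g ∧ e * g = g ∧
      ∀ m ≥ n, ∃ f, IsMinimalProjection (B m) f ∧ g * f = f ∧ ε ≤ (τ f).re := by
  have := hfin n
  obtain ⟨R, hR⟩ := exists_isDecomposition heB he
  by_contra! hcon
  have h1 : ∀ g : R, ∃ m ≥ n, ∀ f, IsMinimalProjection (B m) f → (g : A) * f = f →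
      (τ f).re < ε := fun g => hcon g (hR.minimal g g.2) (hR.mul_eq g.2)
  choose m hm hm' using h1
  obtain ⟨f, hf, hef, hε⟩ := heavy (n + ∑ g, m g) (Nat.le_add_right _ _)
  obtain ⟨g, hg, hgf⟩ : ∃ g ∈ R, g * f ≠ 0 := by
    by_contra! hcon
    refine hf.ne_zero ?_
    rw [← hef, ← hR.sum_eq, Finset.sum_mul]
    exact Finset.sum_eq_zero hcon
  have h2 : m ⟨g, hg⟩ ≤ n + ∑ g, m g :=
    (Finset.single_le_sum (f := m) (fun _ _ => Nat.zero_le _) (Finset.mem_univ ⟨g, hg⟩)).trans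
      (Nat.le_add_left _ _)
  have := hfin (m ⟨g, hg⟩)
  obtain ⟨h, hh, hgh, hle⟩ := hτ.exists_minimal_re_map_ge (hmono h2)
    (hmono (hm ⟨g, hg⟩) (hR.minimal g hg).mem) (hR.minimal g hg).isStarProjection hf hgf
  exact (hm' ⟨g, hg⟩ h hh hgh).not_ge (hε.trans hle)

theorem exists_limit_of_decreasing (hcomp : IsTwoNormComplete τ) {e : ℕ → A}
    (he : ∀ n, IsStarProjection (e n)) (hmul : ∀ n m, n ≤ m → e n * e m = e m) :
    ∃ f, IsStarProjection f ∧ (∀ n, e n * f = f) ∧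
      Tendsto (fun n => twoNorm τ (e n - f)) atTop (𝓝 0) := by
  have hanti : Antitone fun n => (τ (e n)).re := fun n m hnm =>
    hτ.re_map_mono (he m) (he n) (hmul n m hnm)
  have hbdd : BddBelow (Set.range fun n => (τ (e n)).re) := ⟨0, by
    rintro _ ⟨n, rfl⟩; exact hτ.re_map_nonneg (he n)⟩
  have hlim := tendsto_atTop_ciInf hanti hbdd
  set L := ⨅ n, (τ (e n)).re
  have hL : ∀ n, L ≤ (τ (e n)).re := fun n => ciInf_le hbdd n
  have hsq : ∀ n m, n ≤ m → twoNorm τ (e n - e m) ^ 2 ≤ (τ (e n)).re - L := fun n m hnm => by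
    have hp : IsStarProjection (e n - e m) :=
      (he m).sub_of_mul_eq_right (he n) (hmul n m hnm)
    rw [hτ.twoNorm_sq_of_isStarProjection hp, map_sub, Complex.sub_re]
    linarith [hL m]
  obtain ⟨f, hf⟩ := hcomp e (fun n => (he n).norm_le_one') fun δ hδ => by
    have h1 : L < L + (δ / 2) ^ 2 := lt_add_of_pos_right _ (by positivity)
    obtain ⟨N, hN⟩ := (hlim.eventually (gt_mem_nhds h1)).exists
    have h2 : ∀ m ≥ N, twoNorm τ (e N - e m) ≤ δ / 2 := fun m hm => by
      refine (sq_le_sq₀ (twoNorm_nonneg _) (by positivity)).1 ?_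
      linarith [hsq N m hm]
    refine ⟨N, fun m hm n hn => ?_⟩
    have h3 := hτ.twoNorm_sub_le (e m) (e N) (e n)
    have h4 := h2 m hm
    rw [twoNorm_sub_comm] at h4
    linarith [h2 n hn]
  have hmulf : ∀ n, e n * f = f := fun n => hτ.eq_of_twoNorm_sub_le fun δ hδ => by
    obtain ⟨m, hm, hnm⟩ := ((hf.eventually (gt_mem_nhds (half_pos hδ))).and
      (eventually_ge_atTop n)).exists
    have e1 : e n * f - f = e n * (f - e m) + (e m - f) := by
      rw [mul_sub, hmul n m hnm]; abel
    have h1 := hτ.twoNorm_add_le (e n * (f - e m)) (e m - f)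
    have h2 := hτ.twoNorm_mul_le_of_norm_le_one (he n).norm_le_one' (f - e m)
    rw [twoNorm_sub_comm f] at h2
    rw [e1]
    linarith
  refine ⟨f, ⟨hτ.eq_of_twoNorm_sub_le fun δ hδ => ?_, hτ.eq_of_twoNorm_sub_le fun δ hδ => ?_⟩,
    hmulf, hf⟩
  · have h3 : Tendsto (fun n => twoNorm τ (e n - f) * ‖f‖) atTop (𝓝 0) := by
      simpa using hf.mul_const ‖f‖
    obtain ⟨n, hn⟩ := (h3.eventually (gt_mem_nhds hδ)).exists
    have e1 : f * f - f = (f - e n) * f := by rw [sub_mul, hmulf]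
    rw [e1]
    refine (hτ.twoNorm_mul_le_right _ _).trans ?_
    rw [twoNorm_sub_comm]
    exact hn.le
  · obtain ⟨n, hn⟩ := (hf.eventually (gt_mem_nhds (half_pos hδ))).exists
    have e1 : star f - f = star (f - e n) + (e n - f) := by
      rw [star_sub, (he n).isSelfAdjoint.star_eq]; abel
    have h1 := hτ.twoNorm_add_le (star (f - e n)) (e n - f)
    rw [hτ.twoNorm_star, twoNorm_sub_comm f] at h1
    rw [e1]
    linarith

/-- If no nonzero projection is minimal relative to the union of the chain `B`, then the traces of
the minimal projections of `B n` tend to zero. -/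
theorem exists_forall_minimal_re_map_lt {B : ℕ → StarSubalgebra ℂ A} (hmono : Monotone B)
    (hfin : ∀ n, FiniteDimensional ℂ (B n)) (hcomp : IsTwoNormComplete τ)
    (hdiff : ∀ e, IsStarProjection e → e ≠ 0 → ∃ n, ∃ x ∈ B n, ∀ c : ℂ, e * x * e ≠ c • e)
    {ε : ℝ} (hε : 0 < ε) : ∃ n, ∀ e, IsMinimalProjection (B n) e → (τ e).re < ε := by
  by_contra! hcon
  let T : ℕ → Type _ := fun n => {e : A // IsMinimalProjection (B n) e ∧
    ∀ m ≥ n, ∃ f, IsMinimalProjection (B m) f ∧ e * f = f ∧ ε ≤ (τ f).re}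
  have h0 : Nonempty (T 0) := by
    obtain ⟨g, hg, -, hg'⟩ := hτ.exists_heavy_subprojection hmono hfin (n := 0) (one_mem _)
      (IsStarProjection.one A) (ε := ε) fun m _ => by
        obtain ⟨f, hf, hf'⟩ := hcon m
        exact ⟨f, hf, one_mul f, hf'⟩
    exact ⟨⟨g, hg, hg'⟩⟩
  have hstep : ∀ n (x : T n), ∃ y : T (n + 1), x.1 * y.1 = y.1 := by
    rintro n ⟨e, he, hheavy⟩
    obtain ⟨g, hg, heg, hg'⟩ := hτ.exists_heavy_subprojection hmono hfin (hmono n.le_succ he.mem)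
      he.isStarProjection fun m hm => hheavy m (n.le_succ.trans hm)
    exact ⟨⟨g, hg, hg'⟩, heg⟩
  obtain ⟨x0⟩ := h0
  choose next hnext using hstep
  let seq : ∀ n, T n := fun n => Nat.rec x0 next n
  have hp : ∀ n, IsStarProjection (seq n).1 := fun n => (seq n).2.1.isStarProjection
  have hseq : ∀ n, (seq n).1 * (seq (n + 1)).1 = (seq (n + 1)).1 := fun n => hnext n (seq n)
  have hmul : ∀ n m, n ≤ m → (seq n).1 * (seq m).1 = (seq m).1 := fun n m hnm => by
    induction m, hnm using Nat.le_induction with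
    | base => exact (hp n).isIdempotentElem.eq
    | succ m _ ih => rw [← hseq m, ← mul_assoc, ih]
  have hge : ∀ n, ε ≤ (τ (seq n).1).re := fun n => by
    obtain ⟨f, hf, hf', hε'⟩ := (seq n).2.2 n le_rfl
    exact hε'.trans (hτ.re_map_mono hf.isStarProjection (hp n) hf')
  obtain ⟨f, hf, hmulf, hlim⟩ := hτ.exists_limit_of_decreasing hcomp hp hmul
  have hf0 : f ≠ 0 := by
    rintro rfl
    obtain ⟨n, hn⟩ := (hlim.eventually (gt_mem_nhds hε)).exists
    rw [sub_zero] at hn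
    have h1 := hτ.norm_map_le (seq n).1
    have h2 := Complex.re_le_norm (τ (seq n).1)
    linarith [hge n]
  obtain ⟨n, x, hx, hxc⟩ := hdiff f hf hf0
  obtain ⟨c, hc⟩ := (seq n).2.1.exists_eq_smul x hx
  have h1 : f * (seq n).1 = f := (hp n).mul_eq_of_mul_eq hf (hmulf n)
  refine hxc c ?_
  calc f * x * f = f * ((seq n).1 * x * (seq n).1) * f := by
        conv_lhs => rw [← h1]
        conv_lhs => enter [2]; rw [h1, ← hmulf n]
        simp only [mul_assoc]
    _ = c • f := by rw [hc]; simp [h1, hf.isIdempotentElem.eq]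

end IsFaithfulTracialState
end SmallTrace

section Chain

variable {A : Type*} [CStarAlgebra A] {τ : A →ₗ[ℂ] ℂ}

theorem IsDecomposition.isPVM {B : StarSubalgebra ℂ A} {R : Finset A}
    (hR : IsDecomposition B 1 R) : IsPVM (fun e : R => (e : A)) :=
  ⟨fun e => (hR.minimal e e.2).isStarProjection,
    fun e f hef => hR.orth e e.2 f f.2 fun h => hef (Subtype.ext h), hR.sum_coe⟩

theorem IsDecomposition.mem_span_of_commutative {D : StarSubalgebra ℂ A} {R : Finset A}
    (hR : IsDecomposition D 1 R) (hD : ∀ x ∈ D, ∀ y ∈ D, x * y = y * x) {d : A} (hd : d ∈ D) :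
    d ∈ Submodule.span ℂ (R : Set A) := by
  rw [← mul_one d, ← hR.sum_eq, Finset.mul_sum]
  refine Submodule.sum_mem _ fun e he => ?_
  have hmin := hR.minimal e he
  obtain ⟨c, hc⟩ := hmin.exists_eq_smul d hd
  have h1 : d * e = c • e := by
    rw [← hc, ← hD d hd e hmin.mem, mul_assoc, hmin.isStarProjection.isIdempotentElem.eq]
  rw [h1]
  exact Submodule.smul_mem _ _ (Submodule.subset_span he)

namespace IsFaithfulTracialState
variable (hτ : IsFaithfulTracialState τ)
include hτ

/-- Existence of an approximating chain which contains a given finite-dimensional abelian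
subalgebra and has minimal projections of small trace. -/
theorem exists_chain {B : ℕ → StarSubalgebra ℂ A} (hmono : Monotone B)
    (hfin : ∀ n, FiniteDimensional ℂ (B n)) (hcomp : IsTwoNormComplete τ)
    (hdense : ∀ p, IsStarProjection p → ∀ δ > 0, ∃ n, ∃ k ∈ B n, IsSelfAdjoint k ∧ ‖k‖ ≤ 1 ∧
      twoNorm τ (k - p) ≤ δ)
    (hdiff : ∀ e, IsStarProjection e → e ≠ 0 → ∃ n, ∃ x ∈ B n, ∀ c : ℂ, e * x * e ≠ c • e)
    {D : StarSubalgebra ℂ A} (hDfin : FiniteDimensional ℂ D)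
    (hD : ∀ x ∈ D, ∀ y ∈ D, x * y = y * x) {ε : ℝ} (hε : 0 < ε) :
    ∃ C : ℕ → StarSubalgebra ℂ A, Monotone C ∧ (∀ n, FiniteDimensional ℂ (C n)) ∧
      (∀ n, D ≤ C n) ∧ (∀ n f, IsMinimalProjection (C n) f → (τ f).re < ε) ∧
      ∃ u ∈ unitary A, ∀ n, ∀ b ∈ B n, star u * b * u ∈ C n := by
  obtain ⟨R, hR⟩ := exists_isDecomposition (one_mem D) (IsStarProjection.one A)
  obtain ⟨u, hu, C, hC, hCfin, hBC, huC⟩ :=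
    hτ.exists_unitary_and_chain hmono hfin hcomp hdense hR.isPVM
  obtain ⟨N, hN⟩ := hτ.exists_forall_minimal_re_map_lt hmono hfin hcomp hdiff hε
  have h1 : u * star u = 1 := Unitary.mul_star_self_of_mem hu
  have h2 : star u * u = 1 := Unitary.star_mul_self_of_mem hu
  set Φ : A ≃⋆ₐ[ℂ] A := Unitary.conjStarAlgAut ℂ A ⟨u, hu⟩ with hΦ
  have hΦa : ∀ x, Φ x = u * x * star u := fun x => rfl
  have hmem : ∀ n x, x ∈ (C (n + N)).comap (Φ : A →⋆ₐ[ℂ] A) ↔ u * x * star u ∈ C (n + N) :=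
    fun n x => Iff.rfl
  refine ⟨fun n => (C (n + N)).comap (Φ : A →⋆ₐ[ℂ] A), fun n m hnm x hx =>
    hC (Nat.add_le_add_right hnm N) hx, fun n => ?_, fun n d hd => ?_, fun n f hf => ?_, u, hu,
    fun n b hb => ?_⟩
  · have := hCfin (n + N)
    let L : (C (n + N)).comap (Φ : A →⋆ₐ[ℂ] A) →ₗ[ℂ] C (n + N) :=
      { toFun := fun x => ⟨Φ x, x.2⟩
        map_add' := fun x y => Subtype.ext (map_add Φ (x : A) y)
        map_smul' := fun c x => Subtype.ext (map_smul Φ c (x : A)) }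
    exact FiniteDimensional.of_injective L fun x y hxy =>
      Subtype.ext (Φ.injective (congrArg Subtype.val hxy))
  · have h3 : Submodule.span ℂ (R : Set A) ≤
        Subalgebra.toSubmodule ((C (n + N)).comap (Φ : A →⋆ₐ[ℂ] A)).toSubalgebra :=
      Submodule.span_le.2 fun e he => huC (n + N) ⟨e, he⟩
    exact h3 (hR.mem_span_of_commutative hD hd)
  · have := hfin N
    have h3 : IsMinimalProjection (C (n + N)) (u * f * star u) := by
      refine ⟨hf.mem, hf.isStarProjection.conj hu, fun h => hf.ne_zero ?_, fun x hx => ?_⟩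
      · exact Φ.injective (h.trans (map_zero Φ).symm)
      · obtain ⟨c, hc⟩ := hf.exists_eq_smul (star u * x * u) (by
          rw [hmem]
          have : u * (star u * x * u) * star u = u * star u * x * (u * star u) := by
            simp only [mul_assoc]
          rwa [this, h1, one_mul, mul_one])
        refine ⟨c, ?_⟩
        calc u * f * star u * x * (u * f * star u) = u * (f * (star u * x * u) * f) * star u := by
              simp only [mul_assoc]
          _ = _ := by rw [hc, mul_smul_comm, smul_mul_assoc]
    have h4 := hτ.re_map_lt_of_le ((hmono (Nat.le_add_left N n)).trans (hBC _)) hN h3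
    rwa [hτ.map_mul_comm, ← mul_assoc, h2, one_mul] at h4
  · rw [hmem]
    have : u * (star u * b * u) * star u = u * star u * b * (u * star u) := by
      simp only [mul_assoc]
    rw [this, h1, one_mul, mul_one]
    exact hBC _ (hmono (Nat.le_add_right n N) hb)

end IsFaithfulTracialState
end Chain

section WeakCompactness

theorem cauchySeq_of_dense {X : Type*} [PseudoMetricSpace X] {f : ℕ → X → ℂ} {K : ℝ}
    (hf : ∀ n a b, dist (f n a) (f n b) ≤ K * dist a b) {s : Set X} (hs : Dense s)
    (hfs : ∀ a ∈ s, CauchySeq fun n => f n a) (a : X) : CauchySeq fun n => f n a := by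
  rw [Metric.cauchySeq_iff]
  intro δ hδ
  have hK : 0 < 3 * (|K| + 1) := by positivity
  obtain ⟨b, hb, hab⟩ := hs.exists_dist_lt a (div_pos hδ hK)
  obtain ⟨N, hN⟩ := Metric.cauchySeq_iff.1 (hfs b hb) (δ / 3) (by positivity)
  have h1 : K * dist a b ≤ δ / 3 := by
    calc K * dist a b ≤ (|K| + 1) * (δ / (3 * (|K| + 1))) :=
          mul_le_mul ((le_abs_self K).trans (le_add_of_nonneg_right zero_le_one)) hab.le
            dist_nonneg (by positivity)
      _ = δ / 3 := by field_simp
  refine ⟨N, fun m hm n hn => ?_⟩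
  have h2 := dist_triangle4 (f m a) (f m b) (f n b) (f n a)
  have h3 := hf m a b
  have h4 := hf n a b
  rw [dist_comm] at h4
  linarith [hN m hm n hn]

variable {H : Type*} [NormedAddCommGroup H] [InnerProductSpace ℂ H] [CompleteSpace H]

/-- A bounded sequence of operators whose matrix coefficients converge has a weak limit. -/
theorem exists_weak_limit {x : ℕ → H →L[ℂ] H} (hx : ∀ n, ‖x n‖ ≤ 1)
    (hc : ∀ v w, CauchySeq fun n => ⟪x n v, w⟫_ℂ) :
    ∃ y : H →L[ℂ] H, ∀ v w, Tendsto (fun n => ⟪x n v, w⟫_ℂ) atTop (𝓝 ⟪y v, w⟫_ℂ) := by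
  choose b hb using fun v w => cauchySeq_tendsto_of_complete (hc v w)
  have hbound : ∀ v w, ‖b v w‖ ≤ 1 * ‖v‖ * ‖w‖ := fun v w => by
    refine le_of_tendsto (hb v w).norm (Eventually.of_forall fun n => ?_)
    refine (norm_inner_le_norm _ _).trans (mul_le_mul_of_nonneg_right ?_ (norm_nonneg _))
    exact (x n).le_of_opNorm_le (hx n) v
  let L : H →ₗ⋆[ℂ] H →ₗ[ℂ] ℂ := LinearMap.mk₂'ₛₗ (starRingEnd ℂ) (RingHom.id ℂ) b
    (fun v v' w => tendsto_nhds_unique (hb _ _) (by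
      simpa [inner_add_left] using (hb v w).add (hb v' w)))
    (fun c v w => tendsto_nhds_unique (hb _ _) (by
      simpa [inner_smul_left, mul_comm] using (hb v w).const_mul (starRingEnd ℂ c)))
    (fun v w w' => tendsto_nhds_unique (hb _ _) (by
      simpa [inner_add_right] using (hb v w).add (hb v w')))
    (fun c v w => tendsto_nhds_unique (hb _ _) (by
      simpa [inner_smul_right] using (hb v w).const_mul c))
  refine ⟨InnerProductSpace.continuousLinearMapOfBilin (L.mkContinuous₂ 1 hbound), fun v w => ?_⟩
  rw [InnerProductSpace.continuousLinearMapOfBilin_apply]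
  exact hb v w

variable [TopologicalSpace.SeparableSpace H]

/-- Sequential compactness of the unit ball in the weak operator topology. -/
theorem exists_weak_limit_subseq {x : ℕ → H →L[ℂ] H} (hx : ∀ n, ‖x n‖ ≤ 1) :
    ∃ (y : H →L[ℂ] H) (φ : ℕ → ℕ), StrictMono φ ∧
      ∀ v w, Tendsto (fun n => ⟪v, x (φ n) w⟫_ℂ) atTop (𝓝 ⟪v, y w⟫_ℂ) := by
  set d := TopologicalSpace.denseSeq H with hd
  have hdd : DenseRange d := TopologicalSpace.denseRange_denseSeq H
  have hle : ∀ n v w, ‖⟪x n v, w⟫_ℂ‖ ≤ ‖v‖ * ‖w‖ := fun n v w => by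
    refine (norm_inner_le_norm _ _).trans (mul_le_mul_of_nonneg_right ?_ (norm_nonneg _))
    simpa using (x n).le_of_opNorm_le (hx n) v
  have hcpt : IsCompact (Set.univ.pi fun i : ℕ × ℕ =>
      Metric.closedBall (0 : ℂ) (‖d i.1‖ * ‖d i.2‖)) :=
    isCompact_univ_pi fun i => isCompact_closedBall _ _
  obtain ⟨a, -, φ, hφ, hlim⟩ := hcpt.tendsto_subseq
    (x := fun n (i : ℕ × ℕ) => ⟪x n (d i.1), d i.2⟫_ℂ) (fun n i _ => by
      rw [mem_closedBall_zero_iff]; exact hle n _ _)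
  rw [tendsto_pi_nhds] at hlim
  have h1 : ∀ i w, CauchySeq fun n => ⟪x (φ n) (d i), w⟫_ℂ := fun i =>
    cauchySeq_of_dense (f := fun n w => ⟪x (φ n) (d i), w⟫_ℂ) (K := ‖d i‖) (fun n v w => by
      rw [dist_eq_norm, dist_eq_norm, ← inner_sub_right]; exact hle _ _ _) hdd (by
      rintro _ ⟨j, rfl⟩
      exact (hlim (i, j)).cauchySeq)
  have h2 : ∀ v w, CauchySeq fun n => ⟪x (φ n) v, w⟫_ℂ := fun v w =>
    cauchySeq_of_dense (f := fun n v => ⟪x (φ n) v, w⟫_ℂ) (K := ‖w‖) (fun n v v' => by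
      rw [dist_eq_norm, dist_eq_norm, ← inner_sub_left, ← map_sub, mul_comm]; exact hle _ _ _)
      hdd (by rintro _ ⟨j, rfl⟩; exact h1 j w) v
  obtain ⟨y, hy⟩ := exists_weak_limit (fun n => hx (φ n)) h2
  refine ⟨y, φ, hφ, fun v w => ?_⟩
  simpa [Function.comp_def] using (Complex.continuous_conj.tendsto _).comp (hy w v)

omit [TopologicalSpace.SeparableSpace H] in
theorem VonNeumannAlgebra.mem_of_weak_limit (M : VonNeumannAlgebra H) {x : ℕ → H →L[ℂ] H}
    {y : H →L[ℂ] H} (hx : ∀ n, x n ∈ M)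
    (hy : ∀ v w, Tendsto (fun n => ⟪v, x n w⟫_ℂ) atTop (𝓝 ⟪v, y w⟫_ℂ)) : y ∈ M := by
  rw [← M.commutant_commutant, VonNeumannAlgebra.mem_commutant_iff]
  intro g hg
  ext w
  refine ext_inner_left ℂ fun v => ?_
  have h1 := hy v (g w)
  have h2 := hy (star g v) w
  have h3 : ∀ n, ⟪star g v, x n w⟫_ℂ = ⟪v, x n (g w)⟫_ℂ := fun n => by
    have h4 := DFunLike.congr_fun ((VonNeumannAlgebra.mem_commutant_iff.1 hg) (x n) (hx n)) w
    rw [ContinuousLinearMap.star_eq_adjoint, ContinuousLinearMap.adjoint_inner_left]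
    exact congrArg _ h4.symm
  simp only [h3] at h2
  have h5 := tendsto_nhds_unique h2 h1
  rw [ContinuousLinearMap.star_eq_adjoint, ContinuousLinearMap.adjoint_inner_left] at h5
  exact h5

omit [TopologicalSpace.SeparableSpace H] in
theorem VonNeumannAlgebra.isClosed (M : VonNeumannAlgebra H) :
    IsClosed (M.toStarSubalgebra : Set (H →L[ℂ] H)) := by
  rw [VonNeumannAlgebra.coe_toStarSubalgebra, ← M.centralizer_centralizer]
  exact Set.isClosed_centralizer _

end WeakCompactness

section StrongDensity

theorem mem_closure_of_re_inner {E : Type*} [NormedAddCommGroup E] [InnerProductSpace ℂ E]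
    [CompleteSpace E] {V : AddSubgroup E} (hV : ∀ v ∈ V, ∀ r : ℝ, (r : ℂ) • v ∈ V) {x : E}
    (hx : ∀ η, (∀ v ∈ V, (⟪η, v⟫_ℂ).re = 0) → (⟪η, x⟫_ℂ).re = 0) :
    x ∈ closure (V : Set E) := by
  let := InnerProductSpace.rclikeToReal ℂ E
  let K : Submodule ℝ E := { V with smul_mem' := fun r v hv => hV v hv r }
  have h : x ∈ Kᗮᗮ := fun η hη => by
    rw [real_inner_eq_re_inner ℂ]
    refine hx η fun v hv => ?_
    have := hη v hv
    rw [real_inner_comm, real_inner_eq_re_inner ℂ] at this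
    exact this
  rw [Submodule.orthogonal_orthogonal_eq_closure] at h
  exact h

variable {H : Type*} [NormedAddCommGroup H] [InnerProductSpace ℂ H] [CompleteSpace H]
  {B : ℕ → StarSubalgebra ℂ (H →L[ℂ] H)} {p : H →L[ℂ] H}

/-- A self-adjoint operator in the strong closure of an increasing union of *-algebras is
strongly approximated by self-adjoint elements of these algebras. -/
theorem exists_isSelfAdjoint_approx (hB : Monotone B) (hp : IsSelfAdjoint p)
    (h : ∀ s : Finset H, ∀ δ : ℝ, 0 < δ → ∃ n, ∃ a ∈ B n, ∀ ξ ∈ s, ‖(a - p) ξ‖ < δ)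
    (s : Finset H) {δ : ℝ} (hδ : 0 < δ) :
    ∃ n, ∃ a ∈ B n, IsSelfAdjoint a ∧ ∀ ξ ∈ s, ‖(a - p) ξ‖ < δ := by
  classical
  let ev : (H →L[ℂ] H) →ₗ[ℂ] PiLp 2 fun _ : s => H :=
    { toFun := fun a => WithLp.toLp 2 fun i : s => a i
      map_add' := fun a b => rfl
      map_smul' := fun c a => rfl }
  have hev : ∀ a i, ev a i = a (i : H) := fun a i => rfl
  let V : AddSubgroup (PiLp 2 fun _ : s => H) :=
    { carrier := {v | ∃ n, ∃ a ∈ B n, IsSelfAdjoint a ∧ ev a = v}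
      add_mem' := by
        rintro _ _ ⟨n, a, ha, has, rfl⟩ ⟨m, b, hb, hbs, rfl⟩
        exact ⟨max n m, a + b, add_mem (hB (le_max_left _ _) ha) (hB (le_max_right _ _) hb),
          has.add hbs, map_add _ _ _⟩
      zero_mem' := ⟨0, 0, zero_mem _, .zero _, map_zero _⟩
      neg_mem' := by
        rintro _ ⟨n, a, ha, has, rfl⟩
        exact ⟨n, -a, neg_mem ha, has.neg, map_neg _ _⟩ }
  have hVs : ∀ v ∈ V, ∀ r : ℝ, (r : ℂ) • v ∈ V := by
    rintro _ ⟨n, a, ha, has, rfl⟩ r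
    refine ⟨n, (r : ℂ) • a, SMulMemClass.smul_mem _ ha, IsSelfAdjoint.smul ?_ has, map_smul _ _ _⟩
    exact Complex.conj_ofReal r
  have hmem : ev p ∈ closure (V : Set (PiLp 2 fun _ : s => H)) := by
    refine mem_closure_of_re_inner hVs fun η hη => ?_
    have hC : 0 ≤ ∑ i, (‖η i‖ + ‖(i : H)‖) := Finset.sum_nonneg fun i _ => by positivity
    set C := ∑ i, (‖η i‖ + ‖(i : H)‖) with hCdef
    have key : ∀ γ > 0, |2 * (⟪η, ev p⟫_ℂ).re| ≤ γ * C := by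
      intro γ hγ
      obtain ⟨n, b, hb, hbp⟩ := h (s ∪ Finset.univ.image fun i : s => η i) γ hγ
      have h0 := hη (ev (b + star b))
        ⟨n, _, add_mem hb (star_mem hb), IsSelfAdjoint.add_star_self b, rfl⟩
      have h1 : (⟪η, ev (b + star b)⟫_ℂ).re
          = (∑ i : s, (⟪η i, b i⟫_ℂ + ⟪b (η i), (i : H)⟫_ℂ)).re := by
        simp only [PiLp.inner_apply, hev, add_apply, inner_add_right,
          ContinuousLinearMap.star_eq_adjoint, ContinuousLinearMap.adjoint_inner_right]
      have h2 : 2 * (⟪η, ev p⟫_ℂ).re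
          = (∑ i : s, (⟪η i, p i⟫_ℂ + ⟪p (η i), (i : H)⟫_ℂ)).re := by
        have h3 : ∀ i : s, ⟪p (η i), (i : H)⟫_ℂ = ⟪η i, p i⟫_ℂ := fun i => by
          rw [← ContinuousLinearMap.adjoint_inner_right, ← ContinuousLinearMap.star_eq_adjoint,
            hp.star_eq]
        simp only [h3, PiLp.inner_apply, hev, ← two_mul, ← Finset.mul_sum]
        simp
      have h4 : 2 * (⟪η, ev p⟫_ℂ).re
          = -(∑ i : s, (⟪η i, (b - p) i⟫_ℂ + ⟪(b - p) (η i), (i : H)⟫_ℂ)).re := by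
        rw [h1] at h0
        rw [h2, ← sub_zero (Complex.re _), ← h0, ← neg_sub, ← Complex.sub_re,
          ← Finset.sum_sub_distrib]
        simp only [sub_apply, inner_sub_left, inner_sub_right]
        congr 3
        ext i
        ring
      rw [h4, abs_neg, hCdef, Finset.mul_sum]
      refine (Complex.abs_re_le_norm _).trans (norm_sum_le_of_le _ fun i _ => ?_)
      have h5 := (hbp i (Finset.mem_union_left _ i.2)).le
      have h6 := (hbp (η i) (Finset.mem_union_right _
        (Finset.mem_image_of_mem _ (Finset.mem_univ i)))).le
      have h7 := norm_inner_le_norm (𝕜 := ℂ) (η i) ((b - p) (i : H))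
      have h8 := norm_inner_le_norm (𝕜 := ℂ) ((b - p) (η i)) (i : H)
      have h9 := mul_le_mul_of_nonneg_left h5 (norm_nonneg (η i))
      have h10 := mul_le_mul_of_nonneg_right h6 (norm_nonneg (i : H))
      refine (norm_add_le _ _).trans ?_
      linarith
    have h0 : |2 * (⟪η, ev p⟫_ℂ).re| ≤ 0 := by
      refine le_of_forall_pos_le_add fun γ hγ => ?_
      refine (key (γ / (C + 1)) (by positivity)).trans ?_
      rw [zero_add, div_mul_eq_mul_div, div_le_iff₀ (by positivity)]
      nlinarith
    simpa using abs_nonpos_iff.1 h0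
  obtain ⟨_, ⟨n, a, ha, has, rfl⟩, hdist⟩ := Metric.mem_closure_iff.1 hmem δ hδ
  refine ⟨n, a, ha, has, fun ξ hξ => lt_of_le_of_lt ?_ hdist⟩
  rw [dist_comm, dist_eq_norm, ← map_sub]
  exact PiLp.norm_apply_le (ev (a - p)) ⟨ξ, hξ⟩

/-- Kaplansky density for projections. -/
theorem exists_contraction_approx [∀ n, FiniteDimensional ℂ (B n)] (hB : Monotone B)
    (hp : IsStarProjection p)
    (h : ∀ s : Finset H, ∀ δ : ℝ, 0 < δ → ∃ n, ∃ a ∈ B n, ∀ ξ ∈ s, ‖(a - p) ξ‖ < δ)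
    (s : Finset H) {δ : ℝ} (hδ : 0 < δ) :
    ∃ n, ∃ k ∈ B n, IsSelfAdjoint k ∧ ‖k‖ ≤ 1 ∧ ∀ ξ ∈ s, ‖(k - p) ξ‖ < δ := by
  classical
  obtain ⟨n, a, ha, has, hap⟩ :=
    exists_isSelfAdjoint_approx hB hp.isSelfAdjoint h (s ∪ s.image p) (δ := δ / 8) (by positivity)
  have hden : ∀ t : ℝ, 1 + t ^ 2 ≠ 0 := fun t => by positivity
  have hc : Continuous fun t : ℝ => (1 + t ^ 2)⁻¹ :=
    Continuous.inv₀ (by fun_prop) hden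
  set r : H →L[ℂ] H := cfc (fun t : ℝ => (1 + t ^ 2)⁻¹) a with hr
  have hrn : ‖r‖ ≤ 1 := norm_cfc_le zero_le_one fun t _ => by
    rw [Real.norm_of_nonneg (by positivity)]
    exact inv_le_one_of_one_le₀ (by nlinarith)
  have hra : r * a = cfc (fun t : ℝ => (1 + t ^ 2)⁻¹ * t) a := by
    rw [cfc_mul (fun t : ℝ => (1 + t ^ 2)⁻¹) (fun t => t) a hc.continuousOn, cfc_id' ℝ a]
  have hran : ‖r * a‖ ≤ 1 / 2 := by
    rw [hra]
    refine norm_cfc_le (by norm_num) fun t _ => ?_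
    rw [Real.norm_eq_abs, abs_mul, abs_of_nonneg (inv_nonneg.2 (by positivity)),
      inv_mul_le_iff₀ (by positivity), ← sq_abs]
    nlinarith [sq_nonneg (|t| - 1)]
  have hr1 : r * (1 + a * a) = 1 := by
    have h1 : (1 + a * a) = cfc (fun t : ℝ => 1 + t ^ 2) a := by
      rw [cfc_const_add 1 (fun t : ℝ => t ^ 2) a, cfc_pow_id a 2, map_one, sq]
    rw [h1, hr, ← cfc_mul _ _ a hc.continuousOn]
    simp only [inv_mul_cancel₀ (hden _)]
    exact cfc_const_one ℝ a
  have hpp : p * p = p := hp.isIdempotentElem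
  have hid : (2 : ℝ) • (r * a) - p = r * (a - p) * (2 - p) + r * a * (p - a) * p := by
    have h1 : p = r * p + r * a * a * p := by
      calc p = r * (1 + a * a) * p := by rw [hr1, one_mul]
        _ = _ := by noncomm_ring
    have h2 : r * (a - p) * (2 - p) + r * a * (p - a) * p
        = (2 : ℝ) • (r * a) - (r * p + r * a * a * p)
          + (r * (p * p - p) + r * a * (p * p - p)) := by
      rw [two_smul, ← one_add_one_eq_two]
      noncomm_ring
    rw [h2, hpp, sub_self, mul_zero, mul_zero, add_zero, add_zero, ← h1]
  have hk : (2 : ℝ) • (r * a) ∈ B n := by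
    rw [two_smul]
    have := mul_mem (cfc_mem_of_finiteDimensional (fun t : ℝ => (1 + t ^ 2)⁻¹) ha) ha
    exact add_mem this this
  refine ⟨n, _, hk, ?_, ?_, fun ξ hξ => ?_⟩
  · rw [hra]
    exact IsSelfAdjoint.smul (.all _) (cfc_predicate _ a)
  · rw [norm_smul, Real.norm_two]
    linarith
  · have h1 := hap ξ (Finset.mem_union_left _ hξ)
    have h2 := hap (p ξ) (Finset.mem_union_right _ (Finset.mem_image_of_mem _ hξ))
    have h3 : ((2 : ℝ) • (r * a) - p) ξ
        = r ((2 : ℝ) • (a - p) ξ - (a - p) (p ξ)) - (r * a) ((a - p) (p ξ)) := by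
      rw [hid, two_smul, ← one_add_one_eq_two]
      simp only [add_apply, mul_apply_eq_comp, map_sub, map_add,
        sub_apply, one_apply_eq_self]
      abel
    rw [h3]
    have h4 : ‖r ((2 : ℝ) • (a - p) ξ - (a - p) (p ξ))‖ ≤ 3 * (δ / 8) := by
      refine (r.le_of_opNorm_le hrn _).trans ?_
      rw [one_mul]
      refine (norm_sub_le _ _).trans ?_
      rw [norm_smul, Real.norm_two]
      linarith
    have h5 := (r * a).le_of_opNorm_le hran ((a - p) (p ξ))
    refine (norm_sub_le _ _).trans_lt ?_
    linarith

end StrongDensity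

section Concrete

variable {H : Type*} [NormedAddCommGroup H] [InnerProductSpace ℂ H] [CompleteSpace H]

omit [CompleteSpace H] in
theorem tendsto_apply_zero_of_dense {y : ℕ → H →L[ℂ] H} {K : ℝ} (hy : ∀ n, ‖y n‖ ≤ K)
    {s : Set H} (hs : Dense s) (h : ∀ ξ ∈ s, Tendsto (fun n => y n ξ) atTop (𝓝 0)) (ξ : H) :
    Tendsto (fun n => y n ξ) atTop (𝓝 0) := by
  have hK : 0 ≤ K := (norm_nonneg _).trans (hy 0)
  rw [Metric.tendsto_atTop]
  intro δ hδ
  obtain ⟨ζ, hζ, hd⟩ := hs.exists_dist_lt ξ (ε := δ / (2 * (K + 1))) (by positivity)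
  obtain ⟨N, hN⟩ := Metric.tendsto_atTop.1 (h ζ hζ) (δ / 2) (by positivity)
  refine ⟨N, fun n hn => ?_⟩
  have h1 := hN n hn
  rw [dist_zero_right] at h1 ⊢
  rw [dist_eq_norm, lt_div_iff₀ (by positivity)] at hd
  have h2 := (y n).le_of_opNorm_le (hy n) (ξ - ζ)
  have h3 : y n ξ = y n (ξ - ζ) + y n ζ := by rw [← map_add, sub_add_cancel]
  rw [h3]
  refine (norm_add_le _ _).trans_lt ?_
  nlinarith [norm_nonneg (ξ - ζ)]

/-- If the compression of strongly dense algebras to a projection `e` consists of scalars, then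
so does the compression of their strong closure. -/
theorem exists_compression_eq_smul {B : ℕ → StarSubalgebra ℂ (H →L[ℂ] H)} {e x : H →L[ℂ] H}
    (he : IsStarProjection e)
    (hx : ∀ s : Finset H, ∀ δ : ℝ, 0 < δ → ∃ n, ∃ a ∈ B n, ∀ ξ ∈ s, ‖(a - x) ξ‖ < δ)
    (h : ∀ n, ∀ b ∈ B n, ∃ c : ℂ, e * b * e = c • e) : ∃ c : ℂ, e * x * e = c • e := by
  classical
  by_cases h0 : e = 0
  · exact ⟨0, by simp [h0]⟩
  obtain ⟨ζ₀, hζ₀⟩ : ∃ ζ, e ζ ≠ 0 := by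
    by_contra! hc
    exact h0 (ContinuousLinearMap.ext hc)
  have hee : ∀ ξ, e (e ξ) = e ξ := fun ξ => by
    rw [← mul_apply_eq_comp, he.isIdempotentElem.eq]
  have hen : ∀ ξ, ‖e ξ‖ ≤ ‖ξ‖ := fun ξ => by
    simpa using e.le_of_opNorm_le he.norm_le ξ
  obtain ⟨ζ, hζe, hζ⟩ : ∃ ζ, e ζ = ζ ∧ ζ ≠ 0 := ⟨e ζ₀, hee ζ₀, hζ₀⟩
  have hζn : 0 < ‖ζ‖ := norm_pos_iff.2 hζ
  have hself : ∀ v w, ⟪e v, w⟫_ℂ = ⟪v, e w⟫_ℂ := fun v w => by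
    rw [← ContinuousLinearMap.adjoint_inner_right, ← ContinuousLinearMap.star_eq_adjoint,
      he.isSelfAdjoint.star_eq]
  set c₀ : ℂ := ⟪ζ, x ζ⟫_ℂ / ⟪ζ, ζ⟫_ℂ with hc₀
  have hζζ : ⟪ζ, ζ⟫_ℂ ≠ 0 := inner_self_ne_zero.2 hζ
  refine ⟨c₀, ContinuousLinearMap.ext fun η => ?_⟩
  rw [mul_apply_eq_comp, mul_apply_eq_comp, smul_apply, ← sub_eq_zero, ← norm_eq_zero]
  refine le_antisymm (le_of_forall_pos_le_add fun γ hγ => ?_) (norm_nonneg _)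
  set K : ℝ := 1 + ‖e η‖ / ‖ζ‖ with hK
  have hK0 : 0 < K := by positivity
  obtain ⟨n, b, hb, hbx⟩ := hx {ζ, e η} (γ / K) (by positivity)
  obtain ⟨c, hc⟩ := h n b hb
  have hce : ∀ ξ, e (b (e ξ)) = c • e ξ := fun ξ => by
    rw [← mul_apply_eq_comp, ← mul_apply_eq_comp, hc, smul_apply]
  have h1 : (c - c₀) * ⟪ζ, ζ⟫_ℂ = ⟪ζ, (b - x) ζ⟫_ℂ := by
    rw [sub_mul, hc₀, div_mul_cancel₀ _ hζζ, sub_apply, inner_sub_right, ← inner_smul_right]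
    congr 1
    have := hce ζ
    rw [hζe] at this
    rw [← this, ← hself, hζe]
  have h2 : ‖c - c₀‖ * ‖ζ‖ ≤ γ / K := by
    have h3 : ‖c - c₀‖ * ‖ζ‖ * ‖ζ‖ ≤ γ / K * ‖ζ‖ := by
      calc ‖c - c₀‖ * ‖ζ‖ * ‖ζ‖ = ‖(c - c₀) * ⟪ζ, ζ⟫_ℂ‖ := by
            rw [norm_mul, inner_self_eq_norm_sq_to_K, norm_pow]
            simp [sq, mul_assoc]
        _ ≤ ‖ζ‖ * ‖(b - x) ζ‖ := by rw [h1]; exact norm_inner_le_norm _ _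
        _ ≤ _ := by
          rw [mul_comm]
          exact mul_le_mul_of_nonneg_right (hbx ζ (by simp)).le hζn.le
    exact le_of_mul_le_mul_right h3 hζn
  have h4 : e (x (e η)) - c₀ • e η = (c - c₀) • e η - e ((b - x) (e η)) := by
    rw [sub_apply, map_sub, hce, sub_smul]
    abel
  rw [h4, zero_add]
  refine (norm_sub_le _ _).trans ?_
  rw [norm_smul]
  have h5 := (hen ((b - x) (e η))).trans (hbx (e η) (by simp)).le
  have h6 : ‖c - c₀‖ * ‖e η‖ ≤ γ / K * (‖e η‖ / ‖ζ‖) := by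
    calc ‖c - c₀‖ * ‖e η‖ = ‖c - c₀‖ * ‖ζ‖ * (‖e η‖ / ‖ζ‖) := by field_simp
      _ ≤ _ := mul_le_mul_of_nonneg_right h2 (by positivity)
  calc ‖c - c₀‖ * ‖e η‖ + ‖e ((b - x) (e η))‖ ≤ γ / K * (‖e η‖ / ‖ζ‖) + γ / K :=
        add_le_add h6 h5
    _ = γ / K * K := by rw [hK]; ring
    _ = γ := div_mul_cancel₀ _ hK0.ne'

/-- Sequential continuity of `τ` in the weak operator topology extends from the unit ball to
bounded sequences. -/
theorem VonNeumannAlgebra.tendsto_of_bounded {M : VonNeumannAlgebra H}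
    {τ : (H →L[ℂ] H) →ₗ[ℂ] ℂ}
    (hτ : ∀ (x : ℕ → H →L[ℂ] H) (y : H →L[ℂ] H),
      (∀ n, x n ∈ M) → (∀ n, ‖x n‖ ≤ 1) → y ∈ M →
      (∀ ξ η : H, Tendsto (fun n => ⟪ξ, x n η⟫_ℂ) atTop (𝓝 ⟪ξ, y η⟫_ℂ)) →
      Tendsto (fun n => τ (x n)) atTop (𝓝 (τ y)))
    {x : ℕ → H →L[ℂ] H} {y : H →L[ℂ] H} {K : ℝ} (hx : ∀ n, x n ∈ M) (hK : ∀ n, ‖x n‖ ≤ K)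
    (hy : y ∈ M)
    (h : ∀ ξ η : H, Tendsto (fun n => ⟪ξ, x n η⟫_ℂ) atTop (𝓝 ⟪ξ, y η⟫_ℂ)) :
    Tendsto (fun n => τ (x n)) atTop (𝓝 (τ y)) := by
  have hK0 : 0 ≤ K := (norm_nonneg _).trans (hK 0)
  have hK1 : (0 : ℝ) < K + 1 := by positivity
  have hKc : ((K + 1 : ℝ) : ℂ) ≠ 0 := Complex.ofReal_ne_zero.2 hK1.ne'
  have key := hτ (fun n => ((K + 1 : ℝ) : ℂ)⁻¹ • x n) (((K + 1 : ℝ) : ℂ)⁻¹ • y)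
    (fun n => SMulMemClass.smul_mem (s := M.toStarSubalgebra) _ (hx n)) (fun n => by
      rw [norm_smul, norm_inv, Complex.norm_of_nonneg hK1.le, inv_mul_le_iff₀ hK1]
      linarith [hK n])
    (SMulMemClass.smul_mem (s := M.toStarSubalgebra) _ hy) (fun ξ η => by
      simpa only [smul_apply, inner_smul_right] using (h ξ η).const_mul _)
  simpa only [map_smul, smul_eq_mul, mul_inv_cancel_left₀ hKc] using key.const_mul ((K + 1 : ℝ) : ℂ)

end Concrete

section Restriction

variable {H : Type*} [NormedAddCommGroup H] [InnerProductSpace ℂ H] [CompleteSpace H]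

instance (M : VonNeumannAlgebra H) : IsClosed (M.toStarSubalgebra : Set (H →L[ℂ] H)) :=
  M.isClosed

namespace VonNeumannAlgebra

variable (M : VonNeumannAlgebra H) (τ : (H →L[ℂ] H) →ₗ[ℂ] ℂ)

/-- Restriction of a linear functional to a von Neumann algebra. -/
noncomputable def restrict : M.toStarSubalgebra →ₗ[ℂ] ℂ :=
  τ ∘ₗ M.toStarSubalgebra.subtype.toAlgHom.toLinearMap

variable {M τ}

/-- Weak sequential continuity of `τ` on the unit ball of `M`. -/
def IsNormalOn (M : VonNeumannAlgebra H) (τ : (H →L[ℂ] H) →ₗ[ℂ] ℂ) : Prop :=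
  ∀ (x : ℕ → H →L[ℂ] H) (y : H →L[ℂ] H),
    (∀ n, x n ∈ M) → (∀ n, ‖x n‖ ≤ 1) → y ∈ M →
    (∀ ξ η : H, Tendsto (fun n => ⟪ξ, x n η⟫_ℂ) atTop (𝓝 ⟪ξ, y η⟫_ℂ)) →
    Tendsto (fun n => τ (x n)) atTop (𝓝 (τ y))

variable [TopologicalSpace.SeparableSpace H]

theorem isTwoNormComplete (hτ : IsFaithfulTracialState (M.restrict τ)) (hn : IsNormalOn M τ) :
    IsTwoNormComplete (M.restrict τ) := by
  intro x hx hcauchy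
  obtain ⟨y, φ, hφ, hy⟩ := exists_weak_limit_subseq (x := fun n => (x n : H →L[ℂ] H)) hx
  have hyM : y ∈ M := M.mem_of_weak_limit (fun n => (x (φ n)).2) hy
  let y' : M.toStarSubalgebra := ⟨y, hyM⟩
  refine ⟨y', ?_⟩
  have key : ∀ δ > 0, ∃ N, ∀ n ≥ N, twoNorm (M.restrict τ) (x n - y') ≤ δ := by
    intro δ hδ
    obtain ⟨N, hN⟩ := hcauchy δ hδ
    refine ⟨N, fun n hnN => ?_⟩
    set z := x n - y' with hz
    have hlim : Tendsto (fun k => M.restrict τ (star z * (x n - x (φ k)))) atTop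
        (𝓝 (M.restrict τ (star z * z))) := by
      refine tendsto_of_bounded hn (K := ‖star z‖ * 2) (fun k => (star z * (x n - x (φ k))).2)
        (fun k => ?_) (star z * z).2 fun ξ η => ?_
      · refine (norm_mul_le (star z) (x n - x (φ k))).trans
          (mul_le_mul_of_nonneg_left ?_ (norm_nonneg _))
        refine (norm_sub_le _ _).trans ?_
        linarith [hx n, hx (φ k)]
      · have h1 := (tendsto_const_nhds (x := ⟪(z : H →L[ℂ] H) ξ, (x n : H →L[ℂ] H) η⟫_ℂ)).sub
          (hy ((z : H →L[ℂ] H) ξ) η)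
        have h2 : ∀ w : H →L[ℂ] H, ⟪ξ, (star (z : H →L[ℂ] H) * ((x n : H →L[ℂ] H) - w)) η⟫_ℂ
            = ⟪(z : H →L[ℂ] H) ξ, (x n : H →L[ℂ] H) η⟫_ℂ - ⟪(z : H →L[ℂ] H) ξ, w η⟫_ℂ := by
          intro w
          rw [mul_apply_eq_comp, ContinuousLinearMap.star_eq_adjoint,
            ContinuousLinearMap.adjoint_inner_right, sub_apply, inner_sub_right]
        simp only [← h2] at h1
        exact h1
    have h1 : ‖M.restrict τ (star z * z)‖ ≤ twoNorm (M.restrict τ) z * δ := by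
      refine le_of_tendsto hlim.norm ?_
      filter_upwards [eventually_ge_atTop N] with k hk
      refine (hτ.norm_map_star_mul_le _ _).trans
        (mul_le_mul_of_nonneg_left (hN n hnN _ (hk.trans (hφ.id_le k))) (twoNorm_nonneg _))
    have h2 : twoNorm (M.restrict τ) z ^ 2 ≤ twoNorm (M.restrict τ) z * δ := by
      rw [hτ.twoNorm_sq]
      exact (Complex.re_le_norm _).trans h1
    nlinarith [twoNorm_nonneg (τ := M.restrict τ) z]
  rw [Metric.tendsto_atTop]
  intro δ hδ
  obtain ⟨N, hN⟩ := key (δ / 2) (by positivity)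
  refine ⟨N, fun n hnN => ?_⟩
  rw [Real.dist_0_eq_abs, abs_of_nonneg (twoNorm_nonneg _)]
  linarith [hN n hnN]

theorem exists_twoNorm_approx (hn : IsNormalOn M τ)
    {B : ℕ → StarSubalgebra ℂ (H →L[ℂ] H)} (hB : Monotone B)
    (hBM : ∀ n, (B n : Set (H →L[ℂ] H)) ⊆ M) [∀ n, FiniteDimensional ℂ (B n)]
    {p : M.toStarSubalgebra} (hp : IsStarProjection p)
    (h : ∀ s : Finset H, ∀ δ : ℝ, 0 < δ →
      ∃ n, ∃ a ∈ B n, ∀ ξ ∈ s, ‖(a - (p : H →L[ℂ] H)) ξ‖ < δ) {δ : ℝ} (hδ : 0 < δ) :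
    ∃ n, ∃ k : M.toStarSubalgebra, (k : H →L[ℂ] H) ∈ B n ∧ IsSelfAdjoint k ∧ ‖k‖ ≤ 1 ∧
      twoNorm (M.restrict τ) (k - p) ≤ δ := by
  classical
  have hp' : IsStarProjection (p : H →L[ℂ] H) :=
    ⟨congrArg Subtype.val hp.isIdempotentElem, congrArg Subtype.val hp.isSelfAdjoint⟩
  set d := TopologicalSpace.denseSeq H with hd
  have hdd : DenseRange d := TopologicalSpace.denseRange_denseSeq H
  choose m k hkB hks hkn hkd using fun j : ℕ => exists_contraction_approx hB hp' h
    ((Finset.range (j + 1)).image d) (δ := 1 / ((j : ℝ) + 1)) (by positivity)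
  let k' : ℕ → M.toStarSubalgebra := fun j => ⟨k j, hBM _ (hkB j)⟩
  have hbd : ∀ j, ‖k j - (p : H →L[ℂ] H)‖ ≤ 2 := fun j => by
    refine (norm_sub_le _ _).trans ?_
    linarith [hkn j, hp'.norm_le]
  have hstrong : ∀ ξ, Tendsto (fun j => (k j - (p : H →L[ℂ] H)) ξ) atTop (𝓝 0) := by
    refine tendsto_apply_zero_of_dense hbd hdd ?_
    rintro _ ⟨i, rfl⟩
    refine squeeze_zero_norm' ?_ tendsto_one_div_add_atTop_nhds_zero_nat
    filter_upwards [eventually_ge_atTop i] with j hj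
    exact (hkd j _ (Finset.mem_image_of_mem _ (Finset.mem_range.2 (by omega)))).le
  have hlim : Tendsto (fun j => M.restrict τ (star (k' j - p) * (k' j - p))) atTop
      (𝓝 (τ 0)) := by
    refine tendsto_of_bounded hn (K := 2 * 2) (fun j => (star (k' j - p) * (k' j - p)).2)
      (fun j => ?_) (zero_mem M.toStarSubalgebra) fun ξ η => ?_
    · refine (norm_mul_le (star (k' j - p)) (k' j - p)).trans ?_
      rw [norm_star]
      exact mul_le_mul (hbd j) (hbd j) (norm_nonneg _) zero_le_two
    · have h1 := (hstrong ξ).inner (𝕜 := ℂ) (hstrong η)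
      have h2 : ∀ w : H →L[ℂ] H, ⟪ξ, (star w * w) η⟫_ℂ = ⟪w ξ, w η⟫_ℂ := fun w => by
        rw [mul_apply_eq_comp, ContinuousLinearMap.star_eq_adjoint,
          ContinuousLinearMap.adjoint_inner_right]
      simp only [← h2, inner_zero_left] at h1
      simpa using h1
  have hlim' : Tendsto (fun j => twoNorm (M.restrict τ) (k' j - p)) atTop (𝓝 0) := by
    have h1 := ((Complex.continuous_re.tendsto _).comp hlim).sqrt
    rwa [map_zero, Complex.zero_re, Real.sqrt_zero] at h1
  obtain ⟨j, hj⟩ := (hlim'.eventually_le_const hδ).exists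
  exact ⟨m j, k' j, hkB j, Subtype.ext (hks j), hkn j, hj⟩

end VonNeumannAlgebra

theorem finiteDimensional_comap {A : Type*} [Ring A] [StarRing A] [Algebra ℂ A] [StarModule ℂ A]
    (S B : StarSubalgebra ℂ A) [FiniteDimensional ℂ B] :
    FiniteDimensional ℂ (B.comap S.subtype) := by
  let L : B.comap S.subtype →ₗ[ℂ] B :=
    { toFun := fun x => ⟨x.1.1, x.2⟩
      map_add' := fun _ _ => rfl
      map_smul' := fun _ _ => rfl }
  exact FiniteDimensional.of_injective L fun x y hxy =>
    Subtype.ext (Subtype.ext (congrArg (fun b : B => (b : A)) hxy))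

theorem finiteDimensional_map {A : Type*} [Ring A] [StarRing A] [Algebra ℂ A] [StarModule ℂ A]
    (S : StarSubalgebra ℂ A) (C : StarSubalgebra ℂ S) [FiniteDimensional ℂ C] :
    FiniteDimensional ℂ (C.map S.subtype) := by
  let L : C →ₗ[ℂ] C.map S.subtype :=
    { toFun := fun x => ⟨x.1.1, x.1, x.2, rfl⟩
      map_add' := fun _ _ => rfl
      map_smul' := fun _ _ => rfl }
  refine FiniteDimensional.of_surjective L ?_
  rintro ⟨_, x, hx, rfl⟩
  exact ⟨⟨x, hx⟩, rfl⟩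

end Restriction

/-- strengthening of Lemma 3.1 used in the proof of Proposition 4.1.
Let `M` be a hyperfinite von Neumann algebra on a separable complex Hilbert space with a
faithful normal tracial state `τ` (normality expressed via WOT-sequential continuity on
the unit ball, which suffices since `H` is separable), and suppose `M` is diffuse, i.e.
it has no minimal projections.  Let `D` be a finite-dimensional abelian unital
*-subalgebra of `M` and let `ε > 0`.  Then there is an increasing chain
`A 0 ⊆ A 1 ⊆ ⋯` of finite-dimensional unital *-subalgebras of `M`, each containing `D`,
whose union is dense in `M` in the strong operator topology, and such that every minimal
projection of every `A n` has trace less than `ε`. -/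
theorem stmt8 {H : Type*} [NormedAddCommGroup H] [InnerProductSpace ℂ H]
    [CompleteSpace H] [TopologicalSpace.SeparableSpace H]
    (M : VonNeumannAlgebra H)
    -- a faithful normal tracial state on `M`:
    (τ : (H →L[ℂ] H) →ₗ[ℂ] ℂ)
    (hτ_unital : τ 1 = 1)
    (hτ_tracial : ∀ x ∈ M, ∀ y ∈ M, τ (x * y) = τ (y * x))
    (hτ_pos : ∀ x ∈ M, 0 ≤ (τ (star x * x)).re ∧ (τ (star x * x)).im = 0)
    (hτ_faithful : ∀ x ∈ M, τ (star x * x) = 0 → x = 0)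
    (hτ_normal : ∀ (x : ℕ → H →L[ℂ] H) (y : H →L[ℂ] H),
      (∀ n, x n ∈ M) → (∀ n, ‖x n‖ ≤ 1) → y ∈ M →
      (∀ ξ η : H, Tendsto (fun n => ⟪ξ, x n η⟫_ℂ) atTop (𝓝 ⟪ξ, y η⟫_ℂ)) →
      Tendsto (fun n => τ (x n)) atTop (𝓝 (τ y)))
    -- `M` is hyperfinite:
    (hyperfinite : ∃ B : ℕ → StarSubalgebra ℂ (H →L[ℂ] H),
      Monotone B ∧ (∀ n, (B n : Set (H →L[ℂ] H)) ⊆ M) ∧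
      (∀ n, FiniteDimensional ℂ (B n)) ∧
      (∀ x ∈ M, ∀ s : Finset H, ∀ ε' : ℝ, 0 < ε' →
        ∃ n, ∃ a ∈ B n, ∀ ξ ∈ s, ‖(a - x) ξ‖ < ε'))
    -- `M` is diffuse: it contains no minimal projections
    (diffuse : ∀ p ∈ M, IsSelfAdjoint p → p * p = p → p ≠ 0 →
      ∃ x ∈ M, ∀ c : ℂ, p * x * p ≠ c • p)
    -- `D` is a finite-dimensional abelian unital *-subalgebra of `M`:
    (D : StarSubalgebra ℂ (H →L[ℂ] H))
    (hDM : (D : Set (H →L[ℂ] H)) ⊆ M)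
    (hDfin : FiniteDimensional ℂ D)
    (hDab : ∀ x ∈ D, ∀ y ∈ D, x * y = y * x)
    (ε : ℝ) (hε : 0 < ε) :
    ∃ A : ℕ → StarSubalgebra ℂ (H →L[ℂ] H),
      Monotone A ∧
      (∀ n, (A n : Set (H →L[ℂ] H)) ⊆ M) ∧
      (∀ n, FiniteDimensional ℂ (A n)) ∧
      (∀ n, D ≤ A n) ∧
      (∀ x ∈ M, ∀ s : Finset H, ∀ ε' : ℝ, 0 < ε' →
        ∃ n, ∃ a ∈ A n, ∀ ξ ∈ s, ‖(a - x) ξ‖ < ε') ∧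
      -- every minimal projection of every `A n` has trace less than `ε`:
      (∀ n, ∀ p ∈ A n, IsSelfAdjoint p → p * p = p → p ≠ 0 →
        (∀ x ∈ A n, ∃ c : ℂ, p * x * p = c • p) → (τ p).re < ε) := by
  obtain ⟨B, hB, hBM, hBfin, hBd⟩ := hyperfinite
  have hτ : IsFaithfulTracialState (M.restrict τ) :=
    { map_one := hτ_unital
      map_mul_comm := fun x y => hτ_tracial x x.2 y y.2
      nonneg := fun x => (hτ_pos x x.2).1
      im_eq_zero := fun x => (hτ_pos x x.2).2
      eq_zero := fun x hx => Subtype.ext (hτ_faithful x x.2 hx) }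
  have hproj : ∀ p : M.toStarSubalgebra, IsStarProjection p →
      IsStarProjection (p : H →L[ℂ] H) := fun p hp =>
    ⟨congrArg Subtype.val hp.isIdempotentElem, congrArg Subtype.val hp.isSelfAdjoint⟩
  have hDfin' : FiniteDimensional ℂ (D.comap M.toStarSubalgebra.subtype) :=
    finiteDimensional_comap _ _
  obtain ⟨C, hC, hCfin, hDC, hCmin, u, hu, huC⟩ := hτ.exists_chain
    (B := fun n => (B n).comap M.toStarSubalgebra.subtype) (fun n m hnm x hx => hB hnm hx)
    (fun n => finiteDimensional_comap _ _)
    (VonNeumannAlgebra.isTwoNormComplete hτ hτ_normal)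
    (fun p hp δ hδ => VonNeumannAlgebra.exists_twoNorm_approx hτ_normal hB hBM hp
      (hBd p p.2) hδ)
    (fun e he he0 => by
      by_contra! hcon
      obtain ⟨x, hx, hxe⟩ := diffuse e e.2 (hproj e he).isSelfAdjoint
        (hproj e he).isIdempotentElem fun h => he0 (Subtype.ext h)
      obtain ⟨c, hc⟩ := exists_compression_eq_smul (hproj e he) (hBd x hx) fun n b hb => by
        obtain ⟨c, hc⟩ := hcon n ⟨b, hBM n hb⟩ hb
        exact ⟨c, congrArg Subtype.val hc⟩
      exact hxe c hc)
    hDfin' (fun x hx y hy => Subtype.ext (hDab x hx y hy)) hε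
  refine ⟨fun n => (C n).map M.toStarSubalgebra.subtype, fun n m hnm => ?_, fun n => ?_,
    fun n => finiteDimensional_map _ _, fun n d hd => ⟨⟨d, hDM hd⟩, hDC n hd, rfl⟩,
    fun x hx s ε' hε' => ?_, fun n p hp hps hpp hp0 hpmin => ?_⟩
  · exact StarSubalgebra.map_mono (hC hnm)
  · rintro _ ⟨x, -, rfl⟩
    exact x.2
  · classical
    set v : H →L[ℂ] H := u.1
    have hvu : star v * v = 1 := congrArg Subtype.val (Unitary.star_mul_self_of_mem hu)
    have huv : v * star v = 1 := congrArg Subtype.val (Unitary.mul_star_self_of_mem hu)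
    have hvn : ∀ ξ, ‖star v ξ‖ ≤ ‖ξ‖ := fun ξ => by
      have h1 : ‖star v‖ ≤ 1 := by
        have h2 : ‖v‖ * ‖v‖ ≤ 1 := by
          rw [← CStarRing.norm_self_mul_star, huv]
          exact ContinuousLinearMap.norm_id_le
        rw [norm_star]
        nlinarith [norm_nonneg v]
      simpa using (star v).le_of_opNorm_le h1 ξ
    obtain ⟨n, b, hb, hbx⟩ := hBd (v * x * star v)
      (u * ⟨x, hx⟩ * star u).2 (s.image v) ε' hε'
    refine ⟨n, star v * b * v, ⟨_, huC n ⟨b, hBM n hb⟩ hb, rfl⟩, fun ξ hξ => ?_⟩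
    have h1 : star v * b * v - x = star v * (b - v * x * star v) * v := by
      calc star v * b * v - x = star v * b * v - (star v * v) * x * (star v * v) := by
            rw [hvu, one_mul, mul_one]
        _ = _ := by noncomm_ring
    rw [h1, mul_apply_eq_comp, mul_apply_eq_comp]
    exact (hvn _).trans_lt (hbx (v ξ) (Finset.mem_image_of_mem _ hξ))
  · obtain ⟨q, hq, rfl⟩ := hp
    refine hCmin n q ⟨hq, ⟨Subtype.ext hpp, Subtype.ext hps⟩, fun h => hp0 ?_, fun x hx => ?_⟩
    · rw [h, map_zero]
    · obtain ⟨c, hc⟩ := hpmin x ⟨x, hx, rfl⟩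
      exact ⟨c, Subtype.ext hc⟩
end
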